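/- arXiv:1105.2076 — 4 statements merged into one kernel-verified Lean document; each statement's English description precedes it below -/
import Mathlib

section
/- Let m ≥ 1 and n_1,…,n_m ≥ 1 be integers, set w := n_1+⋯+n_m, and let x_1,…,x_m ∈ (0,1) be real numbers. For i = 1,…,m+1 set a_i := x_1·x_2⋯x_{i−1} (so a_1 = 1 and a_{m+1} = x_1⋯x_m). For j = 1,…,w define f_j : ℝ → ℝ by f_j(t) = 1/(a_i − t) if j = n_1+⋯+n_{i−1}+1 for some i ∈ {1,…,m}, and f_j(t) = 1/t otherwise. Then the integrand ∏_{j=1}^{w} f_j(t_j) is integrable on the open simplex {(t_1,…,t_w) : 0 < t_1 < ⋯ < t_w < a_{m+1}} ⊂ ℝ^w and Li_{n_1,…,n_m}(x_1,…,x_m) = ∫_{0 < t_1 < ⋯ < t_w < a_{m+1}} ∏_{j=1}^{w} f_j(t_j) dt_1⋯dt_w. -/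
open MeasureTheory

/-!
By Tonelli's theorem the integral of a product over a simplex is an iterated integral, with respect
to any σ-finite measure on a linear order. For Lebesgue measure this evaluates the integral, and for
counting measure on the positive integers it evaluates the series. The two iterations are matched by
expanding the iterated integral up to a variable endpoint `t` in powers of `t / a_i`. Multiplying by
`1 / t` and integrating divides the coefficient of `(t / a_i) ^ k` by `k`. Multiplying by
`1 / (a_{i+1} - t)`, a geometric series, replaces coefficients by their partial sums and thus
introduces a new summation index larger than the previous ones; the change of scale
`t / a_i = x_i (t / a_{i+1})` contributes the factor `x_i ^ k`. Everything is nonnegative, so the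
identity holds in `[0, ∞]`, and convergence of the series decides integrability.
-/

open scoped ENNReal

section IteratedIntegral

variable {α : Type*} [MeasurableSpace α]

/-- The iterated integral `∫ g 0 (t 0) ⋯ g (w - 1) (t (w - 1))` over `t 0 < ⋯ < t (w - 1)` against
the measure `μ`. Both sides of the polylogarithm identity are instances: `μ` is Lebesgue measure on
an interval for the integral, and counting measure on the positive integers for the series. -/
noncomputable def iteratedLIntegral [Preorder α] (g : ℕ → α → ℝ≥0∞) : ℕ → Measure α → ℝ≥0∞
  | 0, _ => 1
  | w + 1, μ => ∫⁻ t, iteratedLIntegral g w (μ.restrict (Set.Iio t)) * g w t ∂μ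

variable [LinearOrder α] [TopologicalSpace α] [OrderClosedTopology α] [OpensMeasurableSpace α]

lemma iteratedLIntegral_succ_restrict (g : ℕ → α → ℝ≥0∞) (w : ℕ) (μ : Measure α) (s : Set α) :
    iteratedLIntegral g (w + 1) (μ.restrict s) =
      ∫⁻ t in s, iteratedLIntegral g w (μ.restrict (s ∩ Set.Iio t)) * g w t ∂μ := by
  simp only [iteratedLIntegral, Measure.restrict_restrict measurableSet_Iio, Set.inter_comm]

variable [SecondCountableTopology α]

lemma measurableSet_setOf_strictMono (w : ℕ) : MeasurableSet {t : Fin w → α | StrictMono t} := by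
  simp only [StrictMono, Set.ofPred_forall]
  exact .iInter fun i => .iInter fun j => .iInter fun _ =>
    measurableSet_lt (measurable_pi_apply i) (measurable_pi_apply j)

lemma measurableSet_setOf_strictMono_and_forall_mem (w : ℕ) {s : Set α} (hs : MeasurableSet s) :
    MeasurableSet {t : Fin w → α | StrictMono t ∧ ∀ j, t j ∈ s} := by
  simp only [Set.ofPred_and, Set.ofPred_forall]
  exact (measurableSet_setOf_strictMono w).inter (.iInter fun j => measurable_pi_apply j hs)

lemma pi_restrict_setOf_strictMono (μ : Measure α) [SigmaFinite μ] (w : ℕ) (s : Set α) :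
    (Measure.pi fun _ : Fin w => μ.restrict s).restrict {t | StrictMono t} =
      (Measure.pi fun _ : Fin w => μ).restrict {t | StrictMono t ∧ ∀ j, t j ∈ s} := by
  rw [← Measure.restrict_pi_pi, Measure.restrict_restrict (measurableSet_setOf_strictMono w)]
  congr 1
  ext t
  simp

lemma lintegral_strictMono_succ (μ : Measure α) [SigmaFinite μ] (w : ℕ)
    {F : (Fin (w + 1) → α) → ℝ≥0∞} (hF : Measurable F) :
    ∫⁻ t in {t | StrictMono t}, F t ∂Measure.pi (fun _ => μ) =
      ∫⁻ u, ∫⁻ s in {s | StrictMono s ∧ ∀ j, s j ∈ Set.Iio u}, F ((Fin.last w).insertNth u s)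
        ∂Measure.pi (fun _ => μ) ∂μ := by
  have hmp := (measurePreserving_piFinSuccAbove (fun _ : Fin (w + 1) => μ) (Fin.last w)).symm
  have hind := hF.indicator (measurableSet_setOf_strictMono (α := α) (w + 1))
  rw [← lintegral_indicator (measurableSet_setOf_strictMono _), ← hmp.lintegral_comp hind,
    lintegral_prod _ (by exact (hind.comp hmp.measurable).aemeasurable)]
  refine lintegral_congr fun u => ?_
  rw [← lintegral_indicator (measurableSet_setOf_strictMono_and_forall_mem w measurableSet_Iio)]
  refine lintegral_congr fun s => ?_
  have hmem : StrictMono ((Fin.last w).insertNth u s : Fin (w + 1) → α) ↔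
      StrictMono s ∧ ∀ j, s j ∈ Set.Iio u := by
    simp [Fin.strictMono_insertNth_iff, Fin.castSucc_lt_last, -Fin.insertNth_last']
  simp only [Set.indicator, MeasurableEquiv.piFinSuccAbove_symm_apply]
  exact if_congr hmem rfl rfl

lemma setLIntegral_strictMono_eq_iteratedLIntegral {g : ℕ → α → ℝ≥0∞} (hg : ∀ j, Measurable (g j))
    (w : ℕ) (μ : Measure α) [SigmaFinite μ] :
    ∫⁻ t in {t : Fin w → α | StrictMono t}, ∏ j : Fin w, g j (t j) ∂Measure.pi (fun _ => μ) =
      iteratedLIntegral g w μ := by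
  induction w generalizing μ with
  | zero => simp [iteratedLIntegral, Subsingleton.strictMono]
  | succ w ih =>
    have hprod (w : ℕ) : Measurable fun t : Fin w → α => ∏ j : Fin w, g j (t j) :=
      Finset.measurable_prod _ fun j _ => (hg j).comp (measurable_pi_apply j)
    rw [lintegral_strictMono_succ μ w (hprod _), iteratedLIntegral]
    refine lintegral_congr fun u => ?_
    rw [← ih, pi_restrict_setOf_strictMono, ← lintegral_mul_const _ (hprod w)]
    refine lintegral_congr fun s => ?_
    rw [Fin.prod_univ_succAbove _ (Fin.last w), mul_comm]
    simp

end IteratedIntegral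

lemma pi_count_eq_count {ι : Type*} [Fintype ι] {β : ι → Type*} [∀ i, MeasurableSpace (β i)]
    [∀ i, Countable (β i)] [∀ i, MeasurableSingletonClass (β i)] :
    Measure.pi (fun i => (Measure.count : Measure (β i))) = Measure.count :=
  Measure.ext_of_singleton fun b => by simp

lemma summable_norm_prod_apply {ι R : Type*} [Fintype ι] [NormedCommRing R] {β : ι → Type*}
    [∀ i, Countable (β i)] {f : ∀ i, β i → R} (hf : ∀ i, Summable fun b => ‖f i b‖) :
    Summable fun k : ∀ i, β i => ‖∏ i, f i (k i)‖ := by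
  let _ (i : ι) : MeasurableSpace (β i) := ⊤
  rw [← integrable_count_iff, ← pi_count_eq_count]
  exact Integrable.fintype_prod_dep fun i => integrable_count_iff.2 (hf i)

lemma summable_norm_pow_div_natCast_pow {𝕜 : Type*} [RCLike 𝕜] {x : 𝕜} (hx : ‖x‖ < 1) (n : ℕ) :
    Summable fun k : ℕ => ‖x ^ k / (k : 𝕜) ^ n‖ := by
  refine .of_nonneg_of_le (fun k => norm_nonneg _) (fun k => ?_)
    (summable_geometric_of_lt_one (norm_nonneg x) hx)
  rw [norm_div, norm_pow, norm_pow, RCLike.norm_natCast]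
  rcases k.eq_zero_or_pos with rfl | hk
  · rcases n.eq_zero_or_pos with rfl | hn
    · simp
    · simp [hn.ne']
  · exact div_le_self (by positivity) (one_le_pow₀ (by exact_mod_cast hk))

lemma summable_prod_pow_div_natCast_pow {ι 𝕜 : Type*} [Fintype ι] [RCLike 𝕜] {x : ι → 𝕜}
    (hx : ∀ i, ‖x i‖ < 1) (n : ι → ℕ) :
    Summable fun k : ι → ℕ => ∏ i, x i ^ k i / (k i : 𝕜) ^ n i :=
  (summable_norm_prod_apply fun i => summable_norm_pow_div_natCast_pow (hx i) (n i)).of_norm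

section LIntegralEqTsum

variable {β ι : Type*} [MeasurableSpace β] {μ : Measure β} {f : β → ℝ} {u : ι → ℝ}

lemma integrable_iff_summable_of_lintegral_eq_tsum (hfm : AEStronglyMeasurable f μ)
    (hf : 0 ≤ᵐ[μ] f) (hu : ∀ i, 0 ≤ u i)
    (h : ∫⁻ x, ENNReal.ofReal (f x) ∂μ = ∑' i, ENNReal.ofReal (u i)) :
    Integrable f μ ↔ Summable u := by
  rw [Integrable, and_iff_right hfm, hasFiniteIntegral_iff_ofReal hf, h]
  refine ⟨fun hlt => ?_, Summable.tsum_ofReal_lt_top⟩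
  simpa only [ENNReal.toReal_ofReal (hu _)] using ENNReal.summable_toReal hlt.ne

lemma tsum_eq_integral_of_lintegral_eq_tsum (hfm : AEStronglyMeasurable f μ)
    (hf : 0 ≤ᵐ[μ] f) (hu : ∀ i, 0 ≤ u i)
    (h : ∫⁻ x, ENNReal.ofReal (f x) ∂μ = ∑' i, ENNReal.ofReal (u i)) :
    ∑' i, u i = ∫ x, f x ∂μ := by
  rw [integral_eq_lintegral_of_nonneg_ae hf hfm, h,
    ENNReal.tsum_toReal_eq fun _ => ENNReal.ofReal_ne_top]
  simp only [ENNReal.toReal_ofReal (hu _)]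

end LIntegralEqTsum

lemma exists_forall_and_eq_comp_val {α : Type*} {m : ℕ} {p : α → Prop} {y : Fin m → α}
    (hp : ∃ b, p b) (hy : ∀ i, p (y i)) :
    ∃ y' : ℕ → α, (∀ i, p (y' i)) ∧ y = fun i : Fin m => y' i := by
  obtain ⟨b, hb⟩ := hp
  refine ⟨fun i => if h : i < m then y ⟨i, h⟩ else b, fun i => ?_, by simp⟩
  by_cases h : i < m
  · simpa [h] using hy _
  · simpa [h] using hb

@[to_additive]
lemma prod_filter_lt_eq_prod_range {M : Type*} [CommMonoid M] {m : ℕ} (y : ℕ → M) (i : Fin m) :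
    ∏ r ∈ Finset.univ.filter (fun r : Fin m => r < i), y r = ∏ r ∈ Finset.range i, y r := by
  rw [← Nat.Iio_eq_range, ← Fin.map_valEmbedding_Iio, Finset.prod_map, Finset.filter_gt_eq_Iio]
  rfl

lemma tsum_tsum_mul_add_succ (b c : ℕ → ℝ≥0∞) :
    ∑' s, ∑' l, b s * c (s + l + 1) = ∑' k, (∑ s ∈ Finset.range k, b s) * c k := by
  have hdiag (k : ℕ) :
      ∑' p : Finset.HasAntidiagonal.antidiagonal k, b p.1.1 * c (p.1.1 + p.1.2 + 1) =
        (∑ s ∈ Finset.range (k + 1), b s) * c (k + 1) := by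
    rw [Finset.tsum_subtype _ fun p : ℕ × ℕ => b p.1 * c (p.1 + p.2 + 1), Finset.sum_mul,
      ← Finset.Nat.sum_antidiagonal_eq_sum_range_succ fun s _ => b s * c (k + 1)]
    refine Finset.sum_congr rfl fun p hp => ?_
    rw [Finset.HasAntidiagonal.mem_antidiagonal.1 hp]
  calc ∑' s, ∑' l, b s * c (s + l + 1)
      = ∑' p : ℕ × ℕ, b p.1 * c (p.1 + p.2 + 1) := ENNReal.tsum_prod.symm
    _ = ∑' k, ∑' p : Finset.HasAntidiagonal.antidiagonal k, b p.1.1 * c (p.1.1 + p.1.2 + 1) := by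
      rw [← Finset.HasAntidiagonal.sigmaAntidiagonalEquivProd.tsum_eq, ENNReal.tsum_sigma']
      rfl
    _ = ∑' k, (∑ s ∈ Finset.range (k + 1), b s) * c (k + 1) := tsum_congr hdiag
    _ = ∑' k, (∑ s ∈ Finset.range k, b s) * c k := by
      rw [tsum_eq_zero_add' (f := fun k => (∑ s ∈ Finset.range k, b s) * c k)
          ENNReal.summable, Finset.sum_range_zero, zero_mul, zero_add]

lemma hasSum_div_pow_mul_inv {a t : ℝ} (ht : 0 ≤ t) (hta : t < a) :
    HasSum (fun l => (t / a) ^ l * a⁻¹) (a - t)⁻¹ := by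
  have ha : 0 < a := ht.trans_lt hta
  have hinv : (a - t)⁻¹ = (1 - t / a)⁻¹ * a⁻¹ := by
    rw [← mul_inv, sub_mul, one_mul, div_mul_cancel₀ t ha.ne']
  rw [hinv]
  exact (hasSum_geometric_of_lt_one (div_nonneg ht ha.le) ((div_lt_one ha).2 hta)).mul_right a⁻¹

lemma tsum_mul_ofReal_inv_sub {a t : ℝ} (ht : 0 ≤ t) (hta : t < a) (b : ℕ → ℝ≥0∞) :
    (∑' k, b k * ENNReal.ofReal ((t / a) ^ (k + 1))) * ENNReal.ofReal (a - t)⁻¹ =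
      ∑' k, (∑ s ∈ Finset.range k, b s) * ENNReal.ofReal ((t / a) ^ k * a⁻¹) := by
  have ha : 0 < a := ht.trans_lt hta
  have hgeom := hasSum_div_pow_mul_inv ht hta
  rw [← tsum_tsum_mul_add_succ, ← hgeom.tsum_eq,
    ENNReal.ofReal_tsum_of_nonneg (fun l => by positivity) hgeom.summable, ← ENNReal.tsum_mul_right]
  refine tsum_congr fun s => ?_
  rw [← ENNReal.tsum_mul_left]
  refine tsum_congr fun l => ?_
  rw [mul_assoc, ← ENNReal.ofReal_mul (by positivity)]
  ring_nf

lemma setLIntegral_Ioo_ofReal_div_pow_mul_inv {a T : ℝ} (ha : 0 < a) (hT : 0 ≤ T) (k : ℕ) :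
    ∫⁻ t in Set.Ioo 0 T, ENNReal.ofReal ((t / a) ^ k * a⁻¹) =
      ENNReal.ofReal ((T / a) ^ (k + 1) / (k + 1 : ℝ)) := by
  have hint : IntegrableOn (fun t : ℝ => (t / a) ^ k * a⁻¹) (Set.Ioo 0 T) :=
    (Continuous.integrableOn_Icc (by fun_prop)).mono_set Set.Ioo_subset_Icc_self
  rw [← ofReal_integral_eq_lintegral_ofReal hint, ← integral_Ioc_eq_integral_Ioo,
    ← intervalIntegral.integral_of_le hT]
  · simp only [div_pow, intervalIntegral.integral_mul_const, intervalIntegral.integral_div,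
      integral_pow]
    congr 1
    rw [zero_pow k.succ_ne_zero, sub_zero]
    field_simp
    ring
  · filter_upwards [ae_restrict_mem measurableSet_Ioo] with t ht
    have := ht.1
    simp only [Pi.zero_apply]
    positivity

lemma setLIntegral_Ioo_tsum_div_pow_mul_inv {a T : ℝ} (ha : 0 < a) (hT : 0 ≤ T)
    (c : ℕ → ℝ≥0∞) :
    ∫⁻ t in Set.Ioo 0 T, ∑' k, c k * ENNReal.ofReal ((t / a) ^ k * a⁻¹) =
      ∑' k, c k * ENNReal.ofReal ((T / a) ^ (k + 1) / (k + 1 : ℝ)) := by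
  rw [lintegral_tsum fun k => by fun_prop]
  refine tsum_congr fun k => ?_
  rw [lintegral_const_mul _ (by fun_prop), setLIntegral_Ioo_ofReal_div_pow_mul_inv ha hT]

section Polylog

/-- The `j`-th of the functions `f` in the iterated integral of the polylogarithm, in zero-based
indexing: `1 / (a i - t)` at the start `j = n 0 + ⋯ + n (i - 1)` of the `i`-th block, and `1 / t`
elsewhere. -/
noncomputable def polylogForm (n : ℕ → ℕ) (a : ℕ → ℝ) : ℕ → ℝ → ℝ :=
  Function.extend (fun i => ∑ r ∈ Finset.range i, n r) (fun i t => (a i - t)⁻¹) fun _ t => t⁻¹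

/-- The iterated integral of the first `w` polylogarithm forms over
`0 < t 0 < ⋯ < t (w - 1) < T`. -/
noncomputable def polylogIntegral (n : ℕ → ℕ) (a : ℕ → ℝ) (w : ℕ) (T : ℝ) : ℝ≥0∞ :=
  iteratedLIntegral (fun j t => ENNReal.ofReal (polylogForm n a j t)) w
    (volume.restrict (Set.Ioo 0 T))

/-- The factor `x i ^ k / k ^ n i` contributed by the `i`-th summation index `k` to a term of the
multiple polylogarithm series. -/
noncomputable def polylogFactor (n : ℕ → ℕ) (x : ℕ → ℝ) (i k : ℕ) : ℝ≥0∞ :=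
  ENNReal.ofReal (x i ^ k / (k : ℝ) ^ n i)

/-- The multiple polylogarithm series of depth `m` truncated to `0 < k 0 < ⋯ < k (m - 1) < K`. -/
noncomputable def truncatedPolylog (n : ℕ → ℕ) (x : ℕ → ℝ) (m K : ℕ) : ℝ≥0∞ :=
  iteratedLIntegral (polylogFactor n x) m (Measure.count.restrict (Set.Ioo 0 K))

variable {n : ℕ → ℕ} {a : ℕ → ℝ}

lemma strictMono_sum_range (hn : ∀ i, 1 ≤ n i) :
    StrictMono fun i => ∑ r ∈ Finset.range i, n r :=
  strictMono_nat_of_lt_succ fun i => by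
    rw [Finset.sum_range_succ]
    exact Nat.lt_add_of_pos_right (hn i)

lemma polylogForm_sum_range (hn : ∀ i, 1 ≤ n i) (i : ℕ) :
    polylogForm n a (∑ r ∈ Finset.range i, n r) = fun t => (a i - t)⁻¹ :=
  (strictMono_sum_range hn).injective.extend_apply _ _ i

lemma polylogForm_of_forall_ne {j : ℕ} (hj : ∀ i, j ≠ ∑ r ∈ Finset.range i, n r) :
    polylogForm n a j = fun t => t⁻¹ :=
  Function.extend_apply' _ _ _ fun ⟨i, hi⟩ => hj i hi.symm

lemma polylogForm_sum_range_add_succ (hn : ∀ i, 1 ≤ n i) {i q : ℕ} (hq : q + 1 < n i) :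
    polylogForm n a (∑ r ∈ Finset.range i, n r + (q + 1)) = fun t => t⁻¹ := by
  refine polylogForm_of_forall_ne fun r hr => ?_
  have hir : i < r := (strictMono_sum_range hn).lt_iff_lt.1 (by lia)
  have hri : r < i + 1 := (strictMono_sum_range hn).lt_iff_lt.1 (by
    simp only [Finset.sum_range_succ]; lia)
  lia

lemma measurable_polylogForm (hn : ∀ i, 1 ≤ n i) (j : ℕ) : Measurable (polylogForm n a j) := by
  by_cases hj : ∃ i, j = ∑ r ∈ Finset.range i, n r
  · obtain ⟨i, rfl⟩ := hj
    rw [polylogForm_sum_range hn]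
    fun_prop
  · rw [polylogForm_of_forall_ne (not_exists.1 hj)]
    fun_prop

lemma polylogForm_nonneg (hn : ∀ i, 1 ≤ n i) {m j : ℕ} (hj : j < ∑ r ∈ Finset.range m, n r)
    {T t : ℝ} (hT : ∀ i < m, T ≤ a i) (ht : t ∈ Set.Ioo 0 T) : 0 ≤ polylogForm n a j t := by
  by_cases h : ∃ i, j = ∑ r ∈ Finset.range i, n r
  · obtain ⟨i, rfl⟩ := h
    rw [polylogForm_sum_range hn]
    exact inv_nonneg.2 (sub_nonneg.2
      (ht.2.le.trans (hT i ((strictMono_sum_range hn).lt_iff_lt.1 hj))))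
  · rw [polylogForm_of_forall_ne (not_exists.1 h)]
    exact inv_nonneg.2 ht.1.le

lemma polylogIntegral_succ (w : ℕ) (T : ℝ) :
    polylogIntegral n a (w + 1) T =
      ∫⁻ t in Set.Ioo 0 T, polylogIntegral n a w t * ENNReal.ofReal (polylogForm n a w t) := by
  rw [polylogIntegral, iteratedLIntegral_succ_restrict]
  refine setLIntegral_congr_fun measurableSet_Ioo fun t ht => ?_
  simp only [polylogIntegral, Set.Ioo_inter_Iio, min_eq_right ht.2.le]

lemma truncatedPolylog_succ (x : ℕ → ℝ) (m K : ℕ) :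
    truncatedPolylog n x (m + 1) (K + 1) =
      ∑ k ∈ Finset.range K, truncatedPolylog n x m (k + 1) * polylogFactor n x m (k + 1) := by
  have hIoo : Finset.Ioo 0 (K + 1) = Finset.Ico (0 + 1) (K + 1) := by
    ext
    simp only [Finset.mem_Ioo, Finset.mem_Ico]
    lia
  rw [truncatedPolylog, iteratedLIntegral_succ_restrict, ← Finset.coe_Ioo, lintegral_finset, hIoo,
    Finset.range_eq_Ico, Finset.sum_Ico_add' (fun k =>
      truncatedPolylog n x m k * polylogFactor n x m k)]
  refine Finset.sum_congr rfl fun k hk => ?_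
  have hkK : k < K + 1 := (Finset.mem_Ico.1 hk).2
  simp [truncatedPolylog, ← hIoo, Set.Ioo_inter_Iio, min_eq_right hkK.le]

lemma iteratedLIntegral_polylogFactor_succ (x : ℕ → ℝ) (m : ℕ) :
    iteratedLIntegral (polylogFactor n x) (m + 1) (Measure.count.restrict (Set.Ioi 0)) =
      ∑' k, truncatedPolylog n x m (k + 1) * polylogFactor n x m (k + 1) := by
  rw [iteratedLIntegral_succ_restrict, ← lintegral_indicator measurableSet_Ioi, lintegral_count,
    tsum_eq_zero_add' ENNReal.summable]
  simp [Set.Ioi_inter_Iio, truncatedPolylog]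

lemma polylogIntegral_succ_of_polylogForm_eq_inv {c : ℕ → ℝ≥0∞} {w q : ℕ} {b T : ℝ}
    (hb : 0 < b) (hT : 0 ≤ T) (hform : polylogForm n a w = fun t => t⁻¹)
    (h : ∀ t ∈ Set.Ioo 0 T, polylogIntegral n a w t =
      ∑' k : ℕ, c k * ENNReal.ofReal ((t / b) ^ (k + 1) / (k + 1 : ℝ) ^ q)) :
    polylogIntegral n a (w + 1) T =
      ∑' k : ℕ, c k * ENNReal.ofReal ((T / b) ^ (k + 1) / (k + 1 : ℝ) ^ (q + 1)) := by
  have hintegrand : ∀ t ∈ Set.Ioo 0 T,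
      polylogIntegral n a w t * ENNReal.ofReal (polylogForm n a w t) =
        ∑' k : ℕ, c k * ENNReal.ofReal ((k + 1 : ℝ) ^ q)⁻¹ *
          ENNReal.ofReal ((t / b) ^ k * b⁻¹) := fun t ht => by
    have ht0 : 0 < t := ht.1
    rw [h t ht, hform, ← ENNReal.tsum_mul_right]
    refine tsum_congr fun k => ?_
    rw [mul_assoc, mul_assoc, ← ENNReal.ofReal_mul (by positivity),
      ← ENNReal.ofReal_mul (by positivity)]
    congr 2
    simp only [div_pow]
    field
  rw [polylogIntegral_succ, setLIntegral_congr_fun measurableSet_Ioo hintegrand,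
    setLIntegral_Ioo_tsum_div_pow_mul_inv hb hT]
  refine tsum_congr fun k => ?_
  rw [mul_assoc, ← ENNReal.ofReal_mul (by positivity)]
  congr 2
  field

lemma polylogIntegral_sum_range_add_succ (hn : ∀ i, 1 ≤ n i) {c : ℕ → ℝ≥0∞} {i q : ℕ}
    (hq : q < n i) {T : ℝ} (hT : 0 < T) (hTa : T ≤ a i)
    (h : ∀ t ∈ Set.Ioo 0 T, polylogIntegral n a (∑ r ∈ Finset.range i, n r) t *
      ENNReal.ofReal (a i - t)⁻¹ = ∑' k, c k * ENNReal.ofReal ((t / a i) ^ k * (a i)⁻¹)) :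
    polylogIntegral n a (∑ r ∈ Finset.range i, n r + (q + 1)) T =
      ∑' k : ℕ, c k * ENNReal.ofReal ((T / a i) ^ (k + 1) / (k + 1 : ℝ) ^ (q + 1)) := by
  have hai : 0 < a i := hT.trans_le hTa
  induction q generalizing T with
  | zero =>
    simp only [zero_add, pow_one]
    rw [polylogIntegral_succ, ← setLIntegral_Ioo_tsum_div_pow_mul_inv hai hT.le,
      polylogForm_sum_range hn]
    exact setLIntegral_congr_fun measurableSet_Ioo h
  | succ q ih =>
    refine polylogIntegral_succ_of_polylogForm_eq_inv hai hT.le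
      (polylogForm_sum_range_add_succ hn hq) fun t ht =>
        ih (Nat.lt_of_succ_lt hq) ht.1 (ht.2.le.trans hTa) fun s hs => ?_
    exact h s ⟨hs.1, hs.2.trans ht.2⟩

lemma polylogIntegral_sum_range_mul_ofReal_inv_sub (hn : ∀ i, 1 ≤ n i) {i : ℕ} {t : ℝ} (ht : 0 < t)
    (hta : ∀ j ≤ i, t < a j) :
    polylogIntegral n a (∑ r ∈ Finset.range i, n r) t * ENNReal.ofReal (a i - t)⁻¹ =
      ∑' k, truncatedPolylog n (fun i => a (i + 1) / a i) i (k + 1) *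
        ENNReal.ofReal ((t / a i) ^ k * (a i)⁻¹) := by
  induction i generalizing t with
  | zero =>
    have ha : 0 < a 0 := ht.trans (hta 0 le_rfl)
    have hgeom := hasSum_div_pow_mul_inv ht.le (hta 0 le_rfl)
    simp [polylogIntegral, truncatedPolylog, iteratedLIntegral, ← hgeom.tsum_eq,
      ENNReal.ofReal_tsum_of_nonneg (fun l => by positivity) hgeom.summable]
  | succ i ih =>
    have hai : 0 < a i := ht.trans (hta i i.le_succ)
    have hai' : 0 < a (i + 1) := ht.trans (hta (i + 1) le_rfl)
    obtain ⟨q, hq⟩ : ∃ q, n i = q + 1 := Nat.exists_eq_add_of_le' (hn i)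
    have hblock := polylogIntegral_sum_range_add_succ hn (q := q) (by lia) ht (hta i i.le_succ).le
      fun s hs => ih hs.1 fun j hj => hs.2.trans (hta j (hj.trans i.le_succ))
    rw [Finset.sum_range_succ, hq, hblock]
    simp only [truncatedPolylog_succ]
    rw [← tsum_mul_ofReal_inv_sub ht.le (hta (i + 1) le_rfl)]
    congr 1
    refine tsum_congr fun k => ?_
    rw [polylogFactor, hq, mul_assoc, ← ENNReal.ofReal_mul (by positivity)]
    congr 2
    simp only [div_pow, Nat.cast_succ]
    field

theorem polylogIntegral_sum_range_eq_iteratedLIntegral (hn : ∀ i, 1 ≤ n i) {m : ℕ}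
    (ham : 0 < a m) (ha : ∀ i < m, a m ≤ a i) :
    polylogIntegral n a (∑ r ∈ Finset.range m, n r) (a m) =
      iteratedLIntegral (polylogFactor n fun i => a (i + 1) / a i) m
        (Measure.count.restrict (Set.Ioi 0)) := by
  cases m with
  | zero => simp [polylogIntegral, iteratedLIntegral]
  | succ i =>
    obtain ⟨q, hq⟩ : ∃ q, n i = q + 1 := Nat.exists_eq_add_of_le' (hn i)
    have hblock := polylogIntegral_sum_range_add_succ hn (q := q) (by lia) ham (ha i i.lt_succ_self)
      fun t ht => polylogIntegral_sum_range_mul_ofReal_inv_sub hn ht.1 fun j hj =>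
        ht.2.trans_le (ha j (Nat.lt_succ_of_le hj))
    rw [Finset.sum_range_succ, hq, hblock, iteratedLIntegral_polylogFactor_succ]
    simp [polylogFactor, hq]

lemma setLIntegral_prod_polylogForm (hn : ∀ i, 1 ≤ n i) (w : ℕ) (T : ℝ) :
    ∫⁻ t in {t : Fin w → ℝ | StrictMono t ∧ ∀ j, t j ∈ Set.Ioo 0 T},
      ∏ j : Fin w, ENNReal.ofReal (polylogForm n a j (t j)) = polylogIntegral n a w T := by
  rw [polylogIntegral, volume_pi, ← pi_restrict_setOf_strictMono]
  exact setLIntegral_strictMono_eq_iteratedLIntegral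
    (fun j => (measurable_polylogForm hn j).ennreal_ofReal) w _

lemma tsum_prod_polylogFactor (x : ℕ → ℝ) (m : ℕ) :
    ∑' k : {k : Fin m → ℕ // StrictMono k ∧ ∀ i, 0 < k i},
      ∏ i : Fin m, polylogFactor n x i (k.1 i) =
      iteratedLIntegral (polylogFactor n x) m (Measure.count.restrict (Set.Ioi 0)) := by
  have hfactor (i : ℕ) : Measurable (polylogFactor n x i) := .of_discrete
  have hmeas := measurableSet_setOf_strictMono_and_forall_mem m (measurableSet_Ioi (a := (0 : ℕ)))
  rw [← setLIntegral_strictMono_eq_iteratedLIntegral hfactor, pi_restrict_setOf_strictMono,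
    pi_count_eq_count, ← lintegral_indicator hmeas, lintegral_count]
  exact tsum_subtype {k : Fin m → ℕ | StrictMono k ∧ ∀ i, 0 < k i}
    fun k => ∏ i : Fin m, polylogFactor n x i (k i)

theorem integrableOn_polylogForm_iff_summable_and_tsum_eq (hn : ∀ i, 1 ≤ n i) {x : ℕ → ℝ}
    (hx : ∀ i, 0 < x i) {m : ℕ}
    (hxm : ∀ i < m, ∏ r ∈ Finset.range m, x r ≤ ∏ r ∈ Finset.range i, x r) :
    let φ (t : Fin (∑ r ∈ Finset.range m, n r) → ℝ) : ℝ :=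
      ∏ j : Fin (∑ r ∈ Finset.range m, n r),
        polylogForm n (fun i => ∏ r ∈ Finset.range i, x r) j (t j)
    let S := {t : Fin (∑ r ∈ Finset.range m, n r) → ℝ |
      StrictMono t ∧ ∀ j, t j ∈ Set.Ioo 0 (∏ r ∈ Finset.range m, x r)}
    let u (k : {k : Fin m → ℕ // StrictMono k ∧ ∀ i, 0 < k i}) : ℝ :=
      ∏ i : Fin m, x i ^ k.1 i / (k.1 i : ℝ) ^ n i
    (IntegrableOn φ S ↔ Summable u) ∧ ∑' k, u k = ∫ t in S, φ t := by
  intro φ S u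
  have hS : MeasurableSet S := measurableSet_setOf_strictMono_and_forall_mem _ measurableSet_Ioo
  have hform : ∀ t ∈ S, ∀ j : Fin (∑ r ∈ Finset.range m, n r),
      0 ≤ polylogForm n (fun i => ∏ r ∈ Finset.range i, x r) j (t j) :=
    fun t ht j => polylogForm_nonneg hn j.2 hxm (ht.2 j)
  have hterm (i k : ℕ) : 0 ≤ x i ^ k / (k : ℝ) ^ n i :=
    div_nonneg (pow_nonneg (hx i).le k) (by positivity)
  have hratio (i : ℕ) : (∏ r ∈ Finset.range (i + 1), x r) / ∏ r ∈ Finset.range i, x r = x i := by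
    rw [Finset.prod_range_succ, mul_div_cancel_left₀ _ (Finset.prod_pos fun r _ => hx r).ne']
  have hlintegral : ∫⁻ t in S, ENNReal.ofReal (φ t) = ∑' k, ENNReal.ofReal (u k) := by
    rw [setLIntegral_congr_fun hS fun t ht => ENNReal.ofReal_prod_of_nonneg fun j _ => hform t ht j,
      setLIntegral_prod_polylogForm hn, polylogIntegral_sum_range_eq_iteratedLIntegral hn
        (Finset.prod_pos fun r _ => hx r) hxm]
    simp only [u, hratio, ENNReal.ofReal_prod_of_nonneg fun _ _ => hterm _ _]
    exact (tsum_prod_polylogFactor x m).symm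
  have hφ : AEStronglyMeasurable φ (volume.restrict S) :=
    Measurable.aestronglyMeasurable <| Finset.measurable_prod _ fun (j : Fin _) _ =>
      (measurable_polylogForm hn j).comp (measurable_pi_apply j)
  have hφ0 : 0 ≤ᵐ[volume.restrict S] φ := (ae_restrict_mem hS).mono fun t ht =>
    Finset.prod_nonneg fun j _ => hform t ht j
  have hu (k) : 0 ≤ u k := Finset.prod_nonneg fun i _ => hterm i (k.1 i)
  exact ⟨integrable_iff_summable_of_lintegral_eq_tsum hφ hφ0 hu hlintegral,
    tsum_eq_integral_of_lintegral_eq_tsum hφ hφ0 hu hlintegral⟩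

end Polylog

/-- Here the endpoint `A` may coincide with poles `a i`: taking all `x i = 1` gives the multiple
zeta values, where convergence depends on `n`. -/
theorem stmt0_general (m : ℕ) (n : Fin m → ℕ) (hn : ∀ i, 1 ≤ n i)
    (w : ℕ) (hw : w = ∑ i, n i)
    (x : Fin m → ℝ) (hx : ∀ i, 0 < x i)
    (a : Fin m → ℝ)
    (ha : ∀ i : Fin m, a i = ∏ r ∈ Finset.univ.filter (fun r : Fin m => r < i), x r)
    (A : ℝ) (hA : A = ∏ i, x i) (hAa : ∀ i, A ≤ a i)
    (f : Fin w → ℝ → ℝ)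
    (hf1 : ∀ j : Fin w, ∀ i : Fin m,
      (j : ℕ) = ∑ r ∈ Finset.univ.filter (fun r : Fin m => r < i), n r →
        f j = fun t => (a i - t)⁻¹)
    (hf2 : ∀ j : Fin w,
      (∀ i : Fin m, (j : ℕ) ≠ ∑ r ∈ Finset.univ.filter (fun r : Fin m => r < i), n r) →
        f j = fun t => t⁻¹)
    (S : Set (Fin w → ℝ))
    (hS : S = {t : Fin w → ℝ | StrictMono t ∧ ∀ j, t j ∈ Set.Ioo 0 A}) :
    (IntegrableOn (fun t : Fin w → ℝ => ∏ j, f j (t j)) S volume ↔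
      Summable fun k : {k : Fin m → ℕ // StrictMono k ∧ ∀ i, 0 < k i} =>
        ∏ i, x i ^ (k.1 i) / ((k.1 i : ℝ) ^ (n i))) ∧
    (∑' k : {k : Fin m → ℕ // StrictMono k ∧ ∀ i, 0 < k i},
        ∏ i, x i ^ (k.1 i) / ((k.1 i : ℝ) ^ (n i))) =
      ∫ t in S, ∏ j, f j (t j) := by
  obtain ⟨n, hn', rfl⟩ := exists_forall_and_eq_comp_val ⟨1, le_rfl⟩ hn
  obtain ⟨x, hx', rfl⟩ := exists_forall_and_eq_comp_val ⟨1, one_pos⟩ hx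
  simp only [prod_filter_lt_eq_prod_range, sum_filter_lt_eq_sum_range] at ha hf1 hf2
  rw [Fin.sum_univ_eq_sum_range] at hw
  rw [Fin.prod_univ_eq_prod_range] at hA
  subst hw hA hS
  have hf : f = fun j : Fin _ => polylogForm n (fun i => ∏ r ∈ Finset.range i, x r) j := by
    funext j
    by_cases hj : ∃ i, (j : ℕ) = ∑ r ∈ Finset.range i, n r
    · obtain ⟨i, hi⟩ := hj
      have him : i < m := (strictMono_sum_range hn').lt_iff_lt.1 (hi ▸ j.2)
      rw [hf1 j ⟨i, him⟩ hi, ha, hi, polylogForm_sum_range hn']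
    · have hne := not_exists.1 hj
      rw [hf2 j fun i => hne i, polylogForm_of_forall_ne hne]
  subst hf
  exact integrableOn_polylogForm_iff_summable_and_tsum_eq hn' hx' fun i hi =>
    (hAa ⟨i, hi⟩).trans_eq (ha _)

/-- Iterated-integral representation of the multiple polylogarithm
`Li_{n_1,…,n_m}(x_1,…,x_m)` for real `x_i ∈ (0,1)`:
the integrand `∏_j f_j(t_j)` is integrable on the open simplex
`{0 < t_1 < ⋯ < t_w < x_1⋯x_m}` and the integral equals the series. -/
theorem stmt0 (m : ℕ) (hm : 1 ≤ m) (n : Fin m → ℕ) (hn : ∀ i, 1 ≤ n i)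
    (w : ℕ) (hw : w = ∑ i, n i)
    (x : Fin m → ℝ) (hx : ∀ i, x i ∈ Set.Ioo (0 : ℝ) 1)
    (a : Fin m → ℝ)
    (ha : ∀ i : Fin m, a i = ∏ r ∈ Finset.univ.filter (fun r : Fin m => r < i), x r)
    (A : ℝ) (hA : A = ∏ i, x i)
    (f : Fin w → ℝ → ℝ)
    (hf1 : ∀ j : Fin w, ∀ i : Fin m,
      (j : ℕ) = ∑ r ∈ Finset.univ.filter (fun r : Fin m => r < i), n r →
        f j = fun t => (a i - t)⁻¹)
    (hf2 : ∀ j : Fin w,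
      (∀ i : Fin m, (j : ℕ) ≠ ∑ r ∈ Finset.univ.filter (fun r : Fin m => r < i), n r) →
        f j = fun t => t⁻¹)
    (S : Set (Fin w → ℝ))
    (hS : S = {t : Fin w → ℝ | StrictMono t ∧ ∀ j, t j ∈ Set.Ioo 0 A}) :
    IntegrableOn (fun t : Fin w → ℝ => ∏ j, f j (t j)) S volume ∧
    (∑' k : {k : Fin m → ℕ // StrictMono k ∧ ∀ i, 0 < k i},
        ∏ i, x i ^ (k.1 i) / ((k.1 i : ℝ) ^ (n i))) =
      ∫ t in S, ∏ j, f j (t j) := by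
  have hAa (i : Fin m) : A ≤ a i := by
    rw [hA, ha]
    exact Finset.prod_le_prod_of_subset_of_le_one (Finset.filter_subset _ _)
      (fun r _ => (hx r).1.le) fun r _ _ => (hx r).2.le
  obtain ⟨hint, htsum⟩ :=
    stmt0_general m n hn w hw x (fun i => (hx i).1) a ha A hA hAa f hf1 hf2 S hS
  have hxnorm (i : Fin m) : ‖x i‖ < 1 := abs_lt.2 ⟨neg_one_lt_zero.trans (hx i).1, (hx i).2⟩
  exact ⟨hint.2 ((summable_prod_pow_div_natCast_pow hxnorm n).subtype _), htsum⟩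
end

section
/- Let n ≥ 2 and 1 ≤ k ≤ n−1 be integers and let a_1,…,a_n > 1 be real numbers. Then in the formal power series ring ℝ[[t_1,…,t_n]] one has I*(a_1:⋯:a_k:1 | t_1,…,t_k) · I*(a_{k+1}:⋯:a_n:1 | t_{k+1},…,t_n) = Σ_{σ ∈ Σ_{k,n−k}} I*(a_{σ(1)}:⋯:a_{σ(n)}:1 | t_{σ(1)},…,t_{σ(n)}), where for a permutation σ the term I*(a_{σ(1)}:⋯:a_{σ(n)}:1 | t_{σ(1)},…,t_{σ(n)}) means the series Σ_{n_1,…,n_n ≥ 1} I_{n_1,…,n_n}(a_{σ(1)}:⋯:a_{σ(n)}:1) · u_1^{n_1−1}⋯u_n^{n_n−1} with u_j := t_{σ(1)}+⋯+t_{σ(j)}. -/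
open MeasureTheory

/-- The set of `(k, n−k)`-shuffles: permutations `σ` of `{0,…,n−1}` such that
`σ⁻¹` is increasing on the first `k` letters and on the last `n−k` letters. -/
def shuffles (n k : ℕ) : Finset (Equiv.Perm (Fin n)) :=
  Finset.univ.filter fun σ =>
    (∀ i j : Fin n, (i : ℕ) < (j : ℕ) → (j : ℕ) < k → σ⁻¹ i < σ⁻¹ j) ∧
    (∀ i j : Fin n, (i : ℕ) < (j : ℕ) → k ≤ (i : ℕ) → σ⁻¹ i < σ⁻¹ j)

/-- The iterated integral `I_{n_1,…,n_p}(b_1:⋯:b_p:1)`: the Lebesgue integral over the open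
simplex `{0<t_1<⋯<t_w<1}` (`w = n_1+⋯+n_p`) of `∏_j f_j(t_j)`, where `f_j(t) = 1/(b_i−t)`
if `j` is the first slot of the `i`-th block and `f_j(t) = 1/t` otherwise. -/
noncomputable def iterInt {p : ℕ} (b : Fin p → ℝ) (n : Fin p → ℕ) : ℝ :=
  ∫ t in {t : Fin (∑ i, n i) → ℝ | StrictMono t ∧ ∀ j, t j ∈ Set.Ioo (0 : ℝ) 1},
    ∏ j : Fin (∑ i, n i), (if h : ∃ i : Fin p,
            (j : ℕ) = ∑ r ∈ Finset.univ.filter (fun r : Fin p => r < i), n r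
          then (b h.choose - t j)⁻¹ else (t j)⁻¹)

/-- The generating series `I*`, as a formal power series in the variables `t_1,…,t_N`:
`Σ_{n_1,…,n_p ≥ 1} I_{n_1,…,n_p}(b_1:⋯:b_p:1) · u_1^{n_1−1}⋯u_p^{n_p−1}`, where
`u_j = t_{idx 1} + ⋯ + t_{idx j}`.  Its coefficient at a monomial `d` is the (finitely
supported, hence summable) sum over all exponent tuples `ν` (`n_j = ν_j + 1`). -/
noncomputable def Istar (N p : ℕ) (idx : Fin p → Fin N) (b : Fin p → ℝ) :
    MvPowerSeries (Fin N) ℝ :=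
  fun d => ∑' ν : Fin p → ℕ, iterInt b (fun i => ν i + 1) *
    MvPolynomial.coeff d
      (∏ j : Fin p,
        (∑ i ∈ Finset.univ.filter (fun i : Fin p => i ≤ j),
          MvPolynomial.X (idx i) : MvPolynomial (Fin N) ℝ) ^ (ν j))

/-!
Fubini removes the variables carrying `dt / t`: between the starting points `s_j < s_{j+1}` of two
consecutive blocks (with `s_{p+1} = 1`), `ν_j` of them contribute
`log (s_{j+1} / s_j) ^ ν_j / ν_j!`. Summing over `ν` gives `∏_j (s_{j+1} / s_j) ^ u_j` with
`u_j = t_1 + ⋯ + t_j`, which Abel summation turns into `∏_i s_i ^ (-t_i)`. Hence `I*` is the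
integral of `∏_i s_i ^ (-t_i) / (b_i - s_i)` over `{0 < s_1 < ⋯ < s_p < 1}`. This integrand is
invariant under simultaneous permutation of `s`, `b` and `t` and multiplicative under
concatenation, and a product of two such simplices is, up to a null set, the disjoint union of the
simplices indexed by the shuffles.
-/

section Fubini

open Set

lemma setLIntegral_prod_fiberwise {α β : Type*} [MeasurableSpace α] [MeasurableSpace β]
    {μ : Measure α} {ν : Measure β} [SFinite ν] {A : Set α} {B : α → Set β}
    (hA : MeasurableSet A) (hAB : MeasurableSet {q : α × β | q.1 ∈ A ∧ q.2 ∈ B q.1})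
    {f : α × β → ENNReal} (hf : Measurable f) :
    ∫⁻ q in {q : α × β | q.1 ∈ A ∧ q.2 ∈ B q.1}, f q ∂μ.prod ν =
      ∫⁻ a in A, ∫⁻ b in B a, f (a, b) ∂ν ∂μ := by
  classical
  rw [← lintegral_indicator hAB, lintegral_prod _ (hf.indicator hAB).aemeasurable,
    ← lintegral_indicator hA]
  refine lintegral_congr fun a => ?_
  by_cases ha : a ∈ A
  · have hB : MeasurableSet (B a) := by simpa [ha] using measurable_prodMk_left (x := a) hAB
    rw [indicator_of_mem ha, ← lintegral_indicator hB]
    simp [indicator_apply, ha]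
  · simp [ha]

lemma lintegral_Ioo_lintegral_Ioo_swap {α : Type*} [LinearOrder α] [TopologicalSpace α]
    [OrderClosedTopology α] [SecondCountableTopology α] [MeasurableSpace α]
    [OpensMeasurableSpace α] {μ : Measure α} [SFinite μ] (a x : α) {f : α → α → ENNReal}
    (hf : Measurable (Function.uncurry f)) :
    ∫⁻ t in Ioo a x, ∫⁻ s in Ioo a t, f t s ∂μ ∂μ =
      ∫⁻ s in Ioo a x, ∫⁻ t in Ioo s x, f t s ∂μ ∂μ := by
  have hlower : MeasurableSet {q : α × α | q.1 ∈ Ioo a x ∧ q.2 ∈ Ioo a q.1} := by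
    simp only [mem_Ioo]
    measurability
  have hupper : MeasurableSet {q : α × α | q.1 ∈ Ioo a x ∧ q.2 ∈ Ioo q.1 x} := by
    simp only [mem_Ioo]
    measurability
  have hswap : Prod.swap ⁻¹' {q : α × α | q.1 ∈ Ioo a x ∧ q.2 ∈ Ioo a q.1} =
      {q : α × α | q.1 ∈ Ioo a x ∧ q.2 ∈ Ioo q.1 x} := by
    ext ⟨s, t⟩
    exact ⟨fun ⟨⟨_, htx⟩, has, hst⟩ => ⟨⟨has, hst.trans htx⟩, hst, htx⟩,
      fun ⟨⟨has, _⟩, hst, htx⟩ => ⟨⟨has.trans hst, htx⟩, has, hst⟩⟩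
  calc ∫⁻ t in Ioo a x, ∫⁻ s in Ioo a t, f t s ∂μ ∂μ
      = ∫⁻ q in {q : α × α | q.1 ∈ Ioo a x ∧ q.2 ∈ Ioo a q.1}, f q.1 q.2 ∂μ.prod μ :=
        (setLIntegral_prod_fiberwise measurableSet_Ioo hlower hf).symm
    _ = ∫⁻ q in {q : α × α | q.1 ∈ Ioo a x ∧ q.2 ∈ Ioo q.1 x}, f q.2 q.1 ∂μ.prod μ := by
        rw [← hswap]
        exact (Measure.measurePreserving_swap.setLIntegral_comp_preimage hlower hf).symm
    _ = ∫⁻ s in Ioo a x, ∫⁻ t in Ioo s x, f t s ∂μ ∂μ :=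
        setLIntegral_prod_fiberwise (B := fun s => Ioo s x) (f := fun q => f q.2 q.1)
          measurableSet_Ioo hupper (hf.comp measurable_swap)

end Fubini

section Simplex

lemma strictMono_snoc_iff {α : Type*} [Preorder α] {n : ℕ} (t : Fin n → α) (s : α) :
    StrictMono (Fin.snoc t s : Fin (n + 1) → α) ↔ StrictMono t ∧ ∀ j, t j < s := by
  simp [StrictMono, Fin.forall_fin_succ', forall_and, Fin.castSucc_lt_last, (Fin.le_last _).not_gt]

lemma measurable_snoc_apply {α : Type*} [MeasurableSpace α] {n : ℕ} (x : α) (i : Fin (n + 1)) :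
    Measurable fun t : Fin n → α => (Fin.snoc t x : Fin (n + 1) → α) i := by
  cases i using Fin.lastCases <;> simp [measurable_pi_apply]

/-- The open simplex `{0 < t_1 < ⋯ < t_n < x}`, the domain of the iterated integrals from `0`
to `x`. -/
def openSimplex (n : ℕ) (x : ℝ) : Set (Fin n → ℝ) :=
  {t | StrictMono t ∧ ∀ j, t j ∈ Set.Ioo (0 : ℝ) x}

lemma measurableSet_openSimplex (n : ℕ) (x : ℝ) : MeasurableSet (openSimplex n x) := by
  simp only [openSimplex, StrictMono, Set.mem_Ioo]
  measurability

lemma snoc_mem_openSimplex_iff {n : ℕ} {t : Fin n → ℝ} {s x : ℝ} :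
    (Fin.snoc t s : Fin (n + 1) → ℝ) ∈ openSimplex (n + 1) x ↔
      s ∈ Set.Ioo 0 x ∧ t ∈ openSimplex n s := by
  simp only [openSimplex, Set.mem_ofPred_eq, strictMono_snoc_iff, Fin.forall_fin_succ',
    Fin.snoc_castSucc, Fin.snoc_last, Set.mem_Ioo]
  constructor
  · rintro ⟨⟨ht, hts⟩, h0t, hs⟩
    exact ⟨hs, ht, fun j => ⟨(h0t j).1, hts j⟩⟩
  · rintro ⟨hs, ht, hts⟩
    exact ⟨⟨ht, fun j => (hts j).2⟩, fun j => ⟨(hts j).1, (hts j).2.trans hs.2⟩, hs⟩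

lemma lt_snoc_succ_of_mem_openSimplex {n : ℕ} {x : ℝ} {t : Fin n → ℝ} (ht : t ∈ openSimplex n x)
    (i : Fin n) : t i < (Fin.snoc t x : Fin (n + 1) → ℝ) i.succ := by
  have hmono : StrictMono (Fin.snoc t x : Fin (n + 1) → ℝ) :=
    (strictMono_snoc_iff t x).2 ⟨ht.1, fun j => (ht.2 j).2⟩
  simpa using hmono (Fin.castSucc_lt_succ (i := i))

lemma snoc_le_of_mem_openSimplex {n : ℕ} {x : ℝ} {t : Fin n → ℝ} (ht : t ∈ openSimplex n x)
    (i : Fin (n + 1)) : (Fin.snoc t x : Fin (n + 1) → ℝ) i ≤ x := by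
  cases i using Fin.lastCases with
  | last => simp
  | cast i => simpa using (ht.2 i).2.le

lemma lintegral_openSimplex_zero (x : ℝ) (F : (Fin 0 → ℝ) → ENNReal) :
    ∫⁻ t in openSimplex 0 x, F t = F default := by
  have h : openSimplex 0 x = Set.univ := by simp [openSimplex, Subsingleton.strictMono]
  rw [h, Measure.restrict_univ, lintegral_unique, volume_pi, Measure.pi_of_empty]
  simpa using congrArg F (Subsingleton.elim _ _)

lemma lintegral_openSimplex_succ {n : ℕ} (x : ℝ) {F : (Fin (n + 1) → ℝ) → ENNReal}
    (hF : Measurable F) :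
    ∫⁻ t in openSimplex (n + 1) x, F t =
      ∫⁻ s in Set.Ioo 0 x, ∫⁻ t in openSimplex n s, F (Fin.snoc t s) := by
  let e := (MeasurableEquiv.piFinSuccAbove (fun _ : Fin (n + 1) => ℝ) (Fin.last n)).symm
  have he : MeasurePreserving e :=
    (volume_preserving_piFinSuccAbove (fun _ : Fin (n + 1) => ℝ) (Fin.last n)).symm
  have he_apply (q : ℝ × (Fin n → ℝ)) : e q = Fin.snoc q.2 q.1 := by
    simp [e, MeasurableEquiv.piFinSuccAbove_symm_apply, Fin.insertNthEquiv, Fin.insertNth_last']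
  have hpre : e ⁻¹' openSimplex (n + 1) x =
      {q : ℝ × (Fin n → ℝ) | q.1 ∈ Set.Ioo 0 x ∧ q.2 ∈ openSimplex n q.1} := by
    ext q
    rw [Set.mem_preimage, he_apply, snoc_mem_openSimplex_iff, Set.mem_ofPred_eq]
  have hmeas := hpre ▸ e.measurable (measurableSet_openSimplex (n + 1) x)
  rw [← he.setLIntegral_comp_preimage (measurableSet_openSimplex _ _) hF, hpre,
    Measure.volume_eq_prod, setLIntegral_prod_fiberwise (f := fun q => F (e q)) measurableSet_Ioo
      hmeas (hF.comp e.measurable)]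
  simp only [he_apply]

end Simplex

section LogKernel

open Set Real

/-- The density of `m` successive integrations of `dt / t` between `s` and `x`, that is
`∫_{s < t_1 < ⋯ < t_m < x} dt_1 ⋯ dt_m / (t_1 ⋯ t_m) = log (x / s) ^ m / m!`. -/
noncomputable def logKernel (m : ℕ) (s x : ℝ) : ℝ := (log x - log s) ^ m / m.factorial

lemma logKernel_zero (s x : ℝ) : logKernel 0 s x = 1 := by simp [logKernel]

lemma logKernel_succ_self (m : ℕ) (s : ℝ) : logKernel (m + 1) s s = 0 := by simp [logKernel]

lemma logKernel_nonneg (m : ℕ) {s x : ℝ} (hs : 0 < s) (hsx : s ≤ x) : 0 ≤ logKernel m s x :=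
  div_nonneg (pow_nonneg (sub_nonneg.2 (log_le_log hs hsx)) _) (Nat.cast_nonneg _)

lemma logKernel_le_logKernel (m : ℕ) {s t x : ℝ} (hs : 0 < s) (hst : s ≤ t) (htx : t ≤ x) :
    logKernel m s t ≤ logKernel m s x := by
  have h0 : 0 ≤ log t - log s := sub_nonneg.2 (log_le_log hs hst)
  have h1 : log t ≤ log x := log_le_log (hs.trans_le hst) htx
  unfold logKernel
  gcongr

@[fun_prop]
lemma measurable_logKernel (m : ℕ) : Measurable fun q : ℝ × ℝ => logKernel m q.1 q.2 := by
  unfold logKernel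
  fun_prop

lemma hasDerivAt_logKernel_succ (m : ℕ) (s : ℝ) {x : ℝ} (hx : x ≠ 0) :
    HasDerivAt (logKernel (m + 1) s) (x⁻¹ * logKernel m s x) x := by
  have h := (((hasDerivAt_log hx).sub_const (log s)).pow (m + 1)).div_const
    ((m + 1).factorial : ℝ)
  refine h.congr_deriv ?_
  have hm : (m : ℝ) + 1 ≠ 0 := by positivity
  have hfac : (m.factorial : ℝ) ≠ 0 := by positivity
  rw [logKernel, Nat.factorial_succ]
  push_cast
  field_simp

lemma continuousOn_inv_mul_logKernel (m : ℕ) {s : ℝ} (hs : 0 < s) (x : ℝ) :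
    ContinuousOn (fun t => t⁻¹ * logKernel m s t) (Icc s x) := by
  intro t ht
  have ht0 : t ≠ 0 := (hs.trans_le ht.1).ne'
  unfold logKernel
  exact ContinuousAt.continuousWithinAt (by fun_prop (disch := assumption))

lemma integral_inv_mul_logKernel (m : ℕ) {s x : ℝ} (hs : 0 < s) (hsx : s ≤ x) :
    ∫ t in s..x, t⁻¹ * logKernel m s t = logKernel (m + 1) s x := by
  rw [intervalIntegral.integral_eq_sub_of_hasDerivAt (f := logKernel (m + 1) s),
    logKernel_succ_self, sub_zero]
  · intro t ht
    rw [uIcc_of_le hsx] at ht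
    exact hasDerivAt_logKernel_succ m s (hs.trans_le ht.1).ne'
  · exact (uIcc_of_le hsx ▸ continuousOn_inv_mul_logKernel m hs x).intervalIntegrable

lemma lintegral_inv_mul_logKernel (m : ℕ) {s x : ℝ} (hs : 0 < s) (hsx : s ≤ x) :
    ∫⁻ t in Ioo s x, ENNReal.ofReal t⁻¹ * ENNReal.ofReal (logKernel m s t) =
      ENNReal.ofReal (logKernel (m + 1) s x) := by
  rw [← integral_inv_mul_logKernel m hs hsx, intervalIntegral.integral_of_le hsx,
    integral_Ioc_eq_integral_Ioo, ofReal_integral_eq_lintegral_ofReal]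
  · exact setLIntegral_congr_fun measurableSet_Ioo fun t ht =>
      (ENNReal.ofReal_mul (inv_nonneg.2 (hs.trans ht.1).le)).symm
  · exact (continuousOn_inv_mul_logKernel m hs x).integrableOn_Icc.mono_set Ioo_subset_Icc_self
  · exact (ae_restrict_mem measurableSet_Ioo).mono fun t ht =>
      mul_nonneg (inv_nonneg.2 (hs.trans ht.1).le) (logKernel_nonneg m hs ht.1.le)

lemma lintegral_logKernel_succ_mul (m : ℕ) (x : ℝ) {h : ℝ → ENNReal} (hh : Measurable h) :
    ∫⁻ s in Ioo 0 x, ENNReal.ofReal (logKernel (m + 1) s x) * h s =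
      ∫⁻ t in Ioo 0 x, ENNReal.ofReal t⁻¹ *
        ∫⁻ s in Ioo 0 t, ENNReal.ofReal (logKernel m s t) * h s := by
  calc ∫⁻ s in Ioo 0 x, ENNReal.ofReal (logKernel (m + 1) s x) * h s
      = ∫⁻ s in Ioo 0 x, ∫⁻ t in Ioo s x,
          ENNReal.ofReal t⁻¹ * ENNReal.ofReal (logKernel m s t) * h s := by
        refine setLIntegral_congr_fun measurableSet_Ioo fun s hs => ?_
        rw [lintegral_mul_const _ (by fun_prop), lintegral_inv_mul_logKernel m hs.1 hs.2.le]
    _ = ∫⁻ t in Ioo 0 x, ∫⁻ s in Ioo 0 t,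
          ENNReal.ofReal t⁻¹ * ENNReal.ofReal (logKernel m s t) * h s :=
        (lintegral_Ioo_lintegral_Ioo_swap 0 x (by unfold Function.uncurry; fun_prop)).symm
    _ = ∫⁻ t in Ioo 0 x, ENNReal.ofReal t⁻¹ *
          ∫⁻ s in Ioo 0 t, ENNReal.ofReal (logKernel m s t) * h s := by
        simp only [mul_assoc, lintegral_const_mul' _ _ ENNReal.ofReal_ne_top]

lemma lintegral_logKernel (m : ℕ) (x : ℝ) :
    ∫⁻ s in Ioo 0 x, ENNReal.ofReal (logKernel m s x) = ENNReal.ofReal x := by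
  induction m generalizing x with
  | zero => simp [logKernel_zero]
  | succ m ih =>
    have hrec := lintegral_logKernel_succ_mul m x (measurable_const (a := 1))
    simp only [mul_one, ih] at hrec
    rw [hrec, setLIntegral_congr_fun measurableSet_Ioo (g := 1)]
    · simp
    · intro t ht
      dsimp only
      rw [← ENNReal.ofReal_mul (inv_nonneg.2 ht.1.le), inv_mul_cancel₀ ht.1.ne']
      simp

lemma integrableOn_logKernel (m : ℕ) (x : ℝ) :
    IntegrableOn (fun s => logKernel m s x) (Ioo 0 x) := by
  refine ⟨Measurable.aestronglyMeasurable (by fun_prop), ?_⟩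
  have hnonneg : ∀ᵐ s ∂volume.restrict (Ioo 0 x), 0 ≤ logKernel m s x :=
    (ae_restrict_mem measurableSet_Ioo).mono fun s hs => logKernel_nonneg m hs.1 hs.2.le
  rw [hasFiniteIntegral_iff_ofReal hnonneg, lintegral_logKernel]
  exact ENNReal.ofReal_lt_top

end LogKernel

section IteratedIntegral

open Set

/-- The iterated integral from `0` to `x` of the `n` one-forms `G 0 t dt, …, G (n - 1) t dt`, the
last of them outermost. Values in `ENNReal` avoid all integrability conditions. -/
noncomputable def iterLIntegral (G : ℕ → ℝ → ENNReal) : ℕ → ℝ → ENNReal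
  | 0, _ => 1
  | n + 1, x => ∫⁻ t in Ioo 0 x, G n t * iterLIntegral G n t

lemma monotone_iterLIntegral (G : ℕ → ℝ → ENNReal) (n : ℕ) : Monotone (iterLIntegral G n) := by
  cases n with
  | zero => exact monotone_const
  | succ n => exact fun x y hxy => lintegral_mono_set (Ioo_subset_Ioo_right hxy)

lemma iterLIntegral_congr {G G' : ℕ → ℝ → ENNReal} (n : ℕ) (h : ∀ j < n, G j = G' j) :
    iterLIntegral G n = iterLIntegral G' n := by
  induction n with
  | zero => rfl
  | succ n ih =>
    funext x
    rw [iterLIntegral, iterLIntegral, h n n.lt_succ_self,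
      ih fun j hj => h j (hj.trans n.lt_succ_self)]

lemma lintegral_openSimplex_prod {G : ℕ → ℝ → ENNReal} (hG : ∀ j, Measurable (G j)) (n : ℕ)
    (x : ℝ) : ∫⁻ t in openSimplex n x, ∏ j : Fin n, G j (t j) = iterLIntegral G n x := by
  have hmeas (m : ℕ) : Measurable fun t : Fin m → ℝ => ∏ j : Fin m, G j (t j) := by fun_prop
  induction n generalizing x with
  | zero => rw [lintegral_openSimplex_zero, iterLIntegral, Fin.prod_univ_zero]
  | succ n ih =>
    rw [lintegral_openSimplex_succ x (hmeas _), iterLIntegral]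
    simp only [Fin.prod_univ_castSucc, Fin.snoc_castSucc, Fin.snoc_last, Fin.val_castSucc,
      Fin.val_last, lintegral_mul_const _ (hmeas _), ih, mul_comm (iterLIntegral G n _)]

lemma iterLIntegral_add_one_add {G : ℕ → ℝ → ENNReal} {w m : ℕ} (hw : Measurable (G w))
    (hm : ∀ i < m, G (w + 1 + i) = fun t => ENNReal.ofReal t⁻¹) (x : ℝ) :
    iterLIntegral G (w + 1 + m) x =
      ∫⁻ s in Ioo 0 x, ENNReal.ofReal (logKernel m s x) * (G w s * iterLIntegral G w s) := by
  induction m generalizing x with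
  | zero => simp [iterLIntegral, logKernel_zero]
  | succ m ih =>
    have hmeas : Measurable fun s => G w s * iterLIntegral G w s :=
      hw.mul (monotone_iterLIntegral G w).measurable
    rw [lintegral_logKernel_succ_mul m x hmeas, ← add_assoc, iterLIntegral, hm m m.lt_succ_self]
    simp_rw [ih fun i hi => hm i (hi.trans m.lt_succ_self)]

end IteratedIntegral

section Letter

open Finset

/-- The position at which block `i` starts when blocks of sizes `n 0, n 1, …` are concatenated. -/
def blockStart {p : ℕ} (n : Fin p → ℕ) (i : Fin p) : ℕ := ∑ r with r < i, n r

/-- The function `f_j` under the integral sign in `iterInt b n`, with `j` counted from `0`. -/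
noncomputable def letter {p : ℕ} (b : Fin p → ℝ) (n : Fin p → ℕ) (j : ℕ) (t : ℝ) : ℝ :=
  if h : ∃ i, j = blockStart n i then (b h.choose - t)⁻¹ else t⁻¹

lemma strictMono_blockStart {p : ℕ} {n : Fin p → ℕ} (hn : ∀ i, 0 < n i) :
    StrictMono (blockStart n) := by
  intro i i' hii'
  refine sum_lt_sum_of_subset (i := i) (fun r hr => ?_) (by simpa) (by simp) (hn i)
    fun _ _ _ => Nat.zero_le _
  simp only [mem_filter, mem_univ, true_and] at hr ⊢
  exact hr.trans hii'

lemma blockStart_castSucc {p : ℕ} (n : Fin (p + 1) → ℕ) (i : Fin p) :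
    blockStart n i.castSucc = blockStart (fun r => n r.castSucc) i := by
  simp [blockStart, sum_filter, Fin.sum_univ_castSucc, (Fin.le_last i.castSucc).not_gt]

lemma blockStart_last {p : ℕ} (n : Fin (p + 1) → ℕ) :
    blockStart n (Fin.last p) = ∑ r : Fin p, n r.castSucc := by
  simp [blockStart, sum_filter, Fin.sum_univ_castSucc, Fin.castSucc_lt_last]

lemma letter_blockStart {p : ℕ} (b : Fin p → ℝ) {n : Fin p → ℕ} (hn : ∀ i, 0 < n i) (i : Fin p)
    (t : ℝ) : letter b n (blockStart n i) t = (b i - t)⁻¹ := by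
  have h : ∃ i', blockStart n i = blockStart n i' := ⟨i, rfl⟩
  rw [letter, dif_pos h, ← (strictMono_blockStart hn).injective h.choose_spec]

lemma letter_of_not_exists {p : ℕ} (b : Fin p → ℝ) {n : Fin p → ℕ} {j : ℕ}
    (h : ¬∃ i, j = blockStart n i) (t : ℝ) : letter b n j t = t⁻¹ :=
  dif_neg h

@[fun_prop]
lemma measurable_letter {p : ℕ} (b : Fin p → ℝ) (n : Fin p → ℕ) (j : ℕ) :
    Measurable (letter b n j) := by
  unfold letter
  split_ifs <;> fun_prop

lemma letter_nonneg {p : ℕ} {b : Fin p → ℝ} {x : ℝ} (hb : ∀ i, x ≤ b i) (n : Fin p → ℕ) (j : ℕ)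
    {t : ℝ} (ht : t ∈ Set.Ioo 0 x) : 0 ≤ letter b n j t := by
  unfold letter
  split_ifs with h
  · exact inv_nonneg.2 (sub_nonneg.2 (ht.2.le.trans (hb _)))
  · exact inv_nonneg.2 ht.1.le

lemma letter_castSucc {p : ℕ} (b : Fin (p + 1) → ℝ) {n : Fin (p + 1) → ℕ} (hn : ∀ i, 0 < n i)
    {j : ℕ} (hj : j < ∑ r : Fin p, n r.castSucc) :
    letter b n j = letter (fun i => b i.castSucc) (fun i => n i.castSucc) j := by
  funext t
  by_cases h : ∃ i, j = blockStart (fun r => n r.castSucc) i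
  · obtain ⟨i, rfl⟩ := h
    rw [letter_blockStart _ fun i => hn _, ← blockStart_castSucc, letter_blockStart b hn]
  · rw [letter_of_not_exists _ h, letter_of_not_exists]
    rintro ⟨i, hi⟩
    cases i using Fin.lastCases with
    | last => exact hj.ne (hi.trans (blockStart_last n))
    | cast i => exact h ⟨i, hi.trans (blockStart_castSucc n i)⟩

lemma letter_last_block {p : ℕ} (b : Fin (p + 1) → ℝ) {n : Fin (p + 1) → ℕ} (hn : ∀ i, 0 < n i)
    (i : ℕ) : letter b n (∑ r : Fin p, n r.castSucc + 1 + i) = fun t => t⁻¹ := by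
  funext t
  refine letter_of_not_exists b ?_ t
  rintro ⟨q, hq⟩
  have hle : blockStart n q ≤ blockStart n (Fin.last p) :=
    (strictMono_blockStart hn).monotone (Fin.le_last q)
  rw [blockStart_last] at hle
  lia

end Letter

section BlockFormula

open Set

variable {p : ℕ}

/-- The factor contributed by block `i` to the integrand of `I_{ν_1 + 1, …, ν_p + 1}(b : x)` once
the `ν i` variables carrying `dt / t` are integrated out; the upper limit `x` serves as
`s_{p + 1}`. -/
noncomputable def blockFactor (b : Fin p → ℝ) (ν : Fin p → ℕ) (x : ℝ) (s : Fin p → ℝ)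
    (i : Fin p) : ℝ :=
  (b i - s i)⁻¹ * logKernel (ν i) (s i) ((Fin.snoc s x : Fin (p + 1) → ℝ) i.succ)

@[fun_prop]
lemma measurable_blockFactor (b : Fin p → ℝ) (ν : Fin p → ℕ) (x : ℝ) (i : Fin p) :
    Measurable fun s => blockFactor b ν x s i := by
  have := measurable_snoc_apply x i.succ
  unfold blockFactor
  fun_prop

lemma blockFactor_snoc_castSucc (b : Fin (p + 1) → ℝ) (ν : Fin (p + 1) → ℕ) (x : ℝ)
    (t : Fin p → ℝ) (s : ℝ) (i : Fin p) :
    blockFactor b ν x (Fin.snoc t s) i.castSucc =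
      blockFactor (fun i => b i.castSucc) (fun i => ν i.castSucc) s t i := by
  simp only [blockFactor, Fin.snoc_castSucc, Fin.succ_castSucc]

lemma blockFactor_snoc_last (b : Fin (p + 1) → ℝ) (ν : Fin (p + 1) → ℕ) (x : ℝ)
    (t : Fin p → ℝ) (s : ℝ) :
    blockFactor b ν x (Fin.snoc t s) (Fin.last p) =
      (b (Fin.last p) - s)⁻¹ * logKernel (ν (Fin.last p)) s x := by
  simp only [blockFactor, Fin.snoc_last, Fin.succ_last]

lemma blockFactor_nonneg {b : Fin p → ℝ} {x : ℝ} (hb : ∀ i, x ≤ b i) (ν : Fin p → ℕ)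
    {s : Fin p → ℝ} (hs : s ∈ openSimplex p x) (i : Fin p) : 0 ≤ blockFactor b ν x s i :=
  mul_nonneg (inv_nonneg.2 (sub_nonneg.2 ((hs.2 i).2.le.trans (hb i))))
    (logKernel_nonneg _ (hs.2 i).1 (lt_snoc_succ_of_mem_openSimplex hs i).le)

lemma lintegral_prod_blockFactor (b : Fin p → ℝ) (ν : Fin p → ℕ) (x : ℝ) :
    ∫⁻ s in openSimplex p x, ∏ i, ENNReal.ofReal (blockFactor b ν x s i) =
      iterLIntegral (fun j t => ENNReal.ofReal (letter b (fun i => ν i + 1) j t))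
        (∑ i, (ν i + 1)) x := by
  induction p generalizing x with
  | zero => rw [lintegral_openSimplex_zero, Fin.prod_univ_zero, Fin.sum_univ_zero, iterLIntegral]
  | succ p ih =>
    have hpos (i) : 0 < ν i + 1 := (ν i).succ_pos
    set n := fun i => ν i + 1
    set w := ∑ i : Fin p, n i.castSucc with hw
    have hweight : ∑ i, n i = w + 1 + ν (Fin.last p) := by
      rw [Fin.sum_univ_castSucc, ← hw, add_assoc, add_comm 1]
    have hlast (s : ℝ) : letter b n w s = (b (Fin.last p) - s)⁻¹ := by
      rw [hw, ← blockStart_last, letter_blockStart b hpos]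
    have hinit : iterLIntegral (fun j t => ENNReal.ofReal (letter b n j t)) w =
        iterLIntegral (fun j t => ENNReal.ofReal
          (letter (fun i => b i.castSucc) (fun i => n i.castSucc) j t)) w :=
      iterLIntegral_congr _ fun j hj => by rw [letter_castSucc b hpos hj]
    rw [lintegral_openSimplex_succ x (by fun_prop), hweight,
      iterLIntegral_add_one_add (by fun_prop) fun i _ => by rw [letter_last_block b hpos]]
    refine setLIntegral_congr_fun measurableSet_Ioo fun s hs => ?_
    simp only [Fin.prod_univ_castSucc, blockFactor_snoc_castSucc, blockFactor_snoc_last]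
    rw [lintegral_mul_const _ (by fun_prop), ih, hlast, hinit,
      ENNReal.ofReal_mul' (logKernel_nonneg _ hs.1 hs.2.le)]
    ring

lemma integral_prod_letter_eq_integral_prod_blockFactor {b : Fin p → ℝ} {x : ℝ}
    (hb : ∀ i, x ≤ b i) (ν : Fin p → ℕ) :
    ∫ t in openSimplex (∑ i, (ν i + 1)) x,
        ∏ j : Fin (∑ i, (ν i + 1)), letter b (fun i => ν i + 1) j (t j) =
      ∫ s in openSimplex p x, ∏ i, blockFactor b ν x s i := by
  have hletter (t : Fin (∑ i, (ν i + 1)) → ℝ) (ht : t ∈ openSimplex _ x)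
      (j : Fin (∑ i, (ν i + 1))) : 0 ≤ letter b (fun i => ν i + 1) j (t j) :=
    letter_nonneg hb _ _ (ht.2 j)
  rw [integral_eq_lintegral_of_nonneg_ae, integral_eq_lintegral_of_nonneg_ae]
  · congr 1
    calc _ = ∫⁻ t in openSimplex (∑ i, (ν i + 1)) x,
          ∏ j : Fin (∑ i, (ν i + 1)), ENNReal.ofReal (letter b (fun i => ν i + 1) j (t j)) :=
        setLIntegral_congr_fun (measurableSet_openSimplex _ _) fun t ht =>
          ENNReal.ofReal_prod_of_nonneg fun j _ => hletter t ht j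
      _ = iterLIntegral (fun j t => ENNReal.ofReal (letter b (fun i => ν i + 1) j t))
          (∑ i, (ν i + 1)) x :=
          lintegral_openSimplex_prod
            (fun j => (measurable_letter b _ j).ennreal_ofReal) _ _
      _ = ∫⁻ s in openSimplex p x, ∏ i, ENNReal.ofReal (blockFactor b ν x s i) :=
        (lintegral_prod_blockFactor b ν x).symm
      _ = ∫⁻ s in openSimplex p x, ENNReal.ofReal (∏ i, blockFactor b ν x s i) :=
        setLIntegral_congr_fun (measurableSet_openSimplex _ _) fun s hs =>
          (ENNReal.ofReal_prod_of_nonneg fun i _ => blockFactor_nonneg hb ν hs i).symm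
  · exact (ae_restrict_mem (measurableSet_openSimplex _ _)).mono fun s hs =>
      Finset.prod_nonneg fun i _ => blockFactor_nonneg hb ν hs i
  · exact Measurable.aestronglyMeasurable (by fun_prop)
  · exact (ae_restrict_mem (measurableSet_openSimplex _ _)).mono fun t ht =>
      Finset.prod_nonneg fun j _ => hletter t ht j
  · exact Measurable.aestronglyMeasurable (by fun_prop)

lemma iterInt_eq_integral_prod_blockFactor {b : Fin p → ℝ} (hb : ∀ i, 1 ≤ b i) (ν : Fin p → ℕ) :
    iterInt b (fun i => ν i + 1) = ∫ s in openSimplex p 1, ∏ i, blockFactor b ν 1 s i :=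
  integral_prod_letter_eq_integral_prod_blockFactor hb ν

lemma blockFactor_le {b : Fin p → ℝ} {x : ℝ} (hb : ∀ i, x < b i) (ν : Fin p → ℕ) {s : Fin p → ℝ}
    (hs : s ∈ openSimplex p x) (i : Fin p) :
    blockFactor b ν x s i ≤ (b i - x)⁻¹ * logKernel (ν i) (s i) x := by
  have hlt := lt_snoc_succ_of_mem_openSimplex hs i
  have hs0 : 0 < s i := (hs.2 i).1
  refine mul_le_mul (inv_anti₀ (sub_pos.2 (hb i)) (sub_le_sub_left (hs.2 i).2.le _))
    (logKernel_le_logKernel _ hs0 hlt.le (snoc_le_of_mem_openSimplex hs _))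
    (logKernel_nonneg _ hs0 hlt.le) (inv_nonneg.2 (sub_nonneg.2 (hb i).le))

lemma integrableOn_prod_blockFactor {b : Fin p → ℝ} {x : ℝ} (hb : ∀ i, x < b i)
    (ν : Fin p → ℕ) : IntegrableOn (fun s => ∏ i, blockFactor b ν x s i) (openSimplex p x) := by
  have hbound : Integrable fun s : Fin p → ℝ =>
      ∏ i, (Ioo 0 x).indicator (fun t => (b i - x)⁻¹ * logKernel (ν i) t x) (s i) :=
    Integrable.fintype_prod fun i =>
      (integrable_indicator_iff measurableSet_Ioo).2 ((integrableOn_logKernel (ν i) x).const_mul _)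
  refine hbound.integrableOn.mono' (Measurable.aestronglyMeasurable (by fun_prop)) ?_
  refine (ae_restrict_mem (measurableSet_openSimplex p x)).mono fun s hs => ?_
  have hnonneg := blockFactor_nonneg (fun i => (hb i).le) ν hs
  rw [Real.norm_of_nonneg (Finset.prod_nonneg fun i _ => hnonneg i)]
  refine Finset.prod_le_prod (fun i _ => hnonneg i) fun i _ => ?_
  rw [indicator_of_mem (hs.2 i)]
  exact blockFactor_le hb ν hs i

end BlockFormula

section ExpLinear

open Finset

variable {σ R K : Type*} [CommSemiring R] [Field K]

lemma coeff_pow_eq_zero_of_degree_ne {A : MvPolynomial σ R} (hA : A.IsHomogeneous 1) {m : ℕ}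
    {d : σ →₀ ℕ} (hd : d.degree ≠ m) : (A ^ m).coeff d = 0 :=
  MvPolynomial.IsHomogeneous.coeff_eq_zero (by simpa using hA.pow m) hd

lemma coeff_prod_pow_eq_zero_of_degree_ne {κ : Type*} [Fintype κ] {A : κ → MvPolynomial σ R}
    (hA : ∀ j, (A j).IsHomogeneous 1) {ν : κ → ℕ} {d : σ →₀ ℕ} (hd : d.degree ≠ ∑ j, ν j) :
    (∏ j, A j ^ ν j).coeff d = 0 := by
  have hprod : (∏ j, A j ^ ν j).IsHomogeneous (∑ j, ν j) :=
    .prod _ _ ν fun j _ => by simpa using (hA j).pow (ν j)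
  exact hprod.coeff_eq_zero hd

lemma isHomogeneous_sum_C_mul_X {κ : Type*} [Fintype κ] (c : κ → R) (idx : κ → σ) :
    (∑ i, MvPolynomial.C (c i) * MvPolynomial.X (idx i)).IsHomogeneous 1 :=
  .sum _ _ 1 fun _ _ => MvPolynomial.isHomogeneous_C_mul_X _ _

/-- The exponential series of a linear form `A`, that is of a homogeneous polynomial of degree `1`.
Its coefficient at `d` then comes from the term `A ^ m / m!` with `m = d.degree` alone; for other
polynomials this is not the exponential. -/
noncomputable def expLinear (A : MvPolynomial σ K) : MvPowerSeries σ K :=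
  fun d => (A ^ d.degree).coeff d / d.degree.factorial

lemma coeff_expLinear (A : MvPolynomial σ K) (d : σ →₀ ℕ) :
    MvPowerSeries.coeff d (expLinear A) = (A ^ d.degree).coeff d / d.degree.factorial :=
  rfl

lemma expLinear_add [CharZero K] {A B : MvPolynomial σ K} (hA : A.IsHomogeneous 1)
    (hB : B.IsHomogeneous 1) : expLinear (A + B) = expLinear A * expLinear B := by
  classical
  ext d
  simp only [MvPowerSeries.coeff_mul, coeff_expLinear, (Commute.all A B).add_pow',
    MvPolynomial.coeff_sum, MvPolynomial.coeff_smul, MvPolynomial.coeff_mul, smul_sum, sum_div]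
  rw [sum_comm]
  refine sum_congr rfl fun e he => ?_
  have hdeg : e.1.degree + e.2.degree = d.degree := by
    rw [← mem_antidiagonal.1 he, map_add]
  rw [sum_eq_single_of_mem (e.1.degree, e.2.degree) (mem_antidiagonal.2 hdeg)]
  · have hfac : ((e.1.degree + e.2.degree).factorial : K) ≠ 0 :=
      Nat.cast_ne_zero.2 (Nat.factorial_ne_zero _)
    rw [← hdeg, nsmul_eq_mul, Nat.cast_add_choose]
    field_simp
  · rintro ⟨i, j⟩ - hne
    rcases ne_or_eq e.1.degree i with hi | rfl
    · simp [coeff_pow_eq_zero_of_degree_ne hA hi]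
    · have hj : e.2.degree ≠ j := fun h => hne (by rw [h])
      simp [coeff_pow_eq_zero_of_degree_ne hB hj]

lemma coeff_expLinear_sum [CharZero K] {κ : Type*} [Fintype κ] [DecidableEq κ] (c : κ → K)
    (u : κ → MvPolynomial σ K) (d : σ →₀ ℕ) :
    MvPowerSeries.coeff d (expLinear (∑ i, MvPolynomial.C (c i) * u i)) =
      ∑ ν ∈ piAntidiag univ d.degree,
        (∏ i, c i ^ ν i / (ν i).factorial) * (∏ i, u i ^ ν i).coeff d := by
  rw [coeff_expLinear, sum_pow_eq_sum_piAntidiag, MvPolynomial.coeff_sum, sum_div]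
  refine sum_congr rfl fun ν hν => ?_
  have hmultinomial : (∏ i, ((ν i).factorial : K)) * Nat.multinomial univ ν =
      d.degree.factorial := by
    rw [← (mem_piAntidiag.1 hν).1]
    exact_mod_cast Nat.multinomial_spec univ ν
  have hfac : (d.degree.factorial : K) ≠ 0 := Nat.cast_ne_zero.2 (Nat.factorial_ne_zero _)
  have hprod : ∏ i, ((ν i).factorial : K) ≠ 0 := left_ne_zero_of_mul (hmultinomial ▸ hfac)
  simp_rw [mul_pow, prod_mul_distrib, ← map_pow, ← map_prod]
  rw [← map_natCast (MvPolynomial.C (σ := σ) (R := K)), MvPolynomial.coeff_C_mul,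
    MvPolynomial.coeff_C_mul, prod_div_distrib, div_eq_iff hfac, ← hmultinomial]
  field_simp

end ExpLinear

section StarSeries

open Finset

variable {τ : Type*} {N p k l : ℕ}

lemma sum_filter_le_succ_sub_castSucc {M : Type*} [AddCommGroup M] (v : Fin (p + 1) → M)
    (i : Fin p) :
    ∑ j with i ≤ j, (v j.succ - v j.castSucc) = v (Fin.last p) - v i.castSucc := by
  induction p with
  | zero => exact i.elim0
  | succ p ih =>
    rw [sum_filter, Fin.sum_univ_castSucc]
    cases i using Fin.lastCases with
    | last => simp [Fin.last_le_iff, (Fin.castSucc_lt_last _).ne]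
    | cast i =>
      have h := ih (fun j => v j.castSucc) i
      rw [sum_filter] at h
      simp only [Fin.castSucc_le_castSucc_iff, Fin.le_last, if_true, Fin.succ_castSucc, h,
        Fin.succ_last]
      abel

/-- The integrand `∏_i s_i ^ (-t_{idx i}) / (b_i - s_i)` of the generating series `I*`, as a power
series in the variables `t`. -/
noncomputable def starSeries {κ : Type*} [Fintype κ] (idx : κ → τ) (b s : κ → ℝ) :
    MvPowerSeries τ ℝ :=
  (∏ i, (b i - s i)⁻¹) •
    expLinear (∑ i, MvPolynomial.C (-Real.log (s i)) * MvPolynomial.X (idx i))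

lemma starSeries_comp_equiv {κ κ' : Type*} [Fintype κ] [Fintype κ'] (e : κ' ≃ κ) (idx : κ → τ)
    (b s : κ → ℝ) : starSeries (idx ∘ e) (b ∘ e) (s ∘ e) = starSeries idx b s := by
  simp only [starSeries, Function.comp_apply]
  rw [e.prod_comp fun i => (b i - s i)⁻¹,
    e.sum_comp fun i => MvPolynomial.C (-Real.log (s i)) * MvPolynomial.X (idx i)]

lemma starSeries_fin_add (idx : Fin (k + l) → τ) (b s : Fin (k + l) → ℝ) :
    starSeries idx b s =
      starSeries (idx ∘ Fin.castAdd l) (b ∘ Fin.castAdd l) (s ∘ Fin.castAdd l) *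
        starSeries (idx ∘ Fin.natAdd k) (b ∘ Fin.natAdd k) (s ∘ Fin.natAdd k) := by
  simp only [starSeries, Function.comp_apply]
  rw [Fin.prod_univ_add, Fin.sum_univ_add, expLinear_add (isHomogeneous_sum_C_mul_X _ _)
    (isHomogeneous_sum_C_mul_X _ _), smul_mul_smul_comm]

lemma sum_C_neg_log_mul_X (idx : Fin p → τ) (s : Fin p → ℝ) :
    ∑ i, MvPolynomial.C (-Real.log (s i)) * MvPolynomial.X (idx i) =
      ∑ j : Fin p, MvPolynomial.C
          (Real.log ((Fin.snoc s 1 : Fin (p + 1) → ℝ) j.succ) - Real.log (s j)) *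
        ∑ i with i ≤ j, (MvPolynomial.X (idx i) : MvPolynomial τ ℝ) := by
  have htelescope (i : Fin p) : ∑ j with i ≤ j,
      (Real.log ((Fin.snoc s 1 : Fin (p + 1) → ℝ) j.succ) - Real.log (s j)) =
        -Real.log (s i) := by
    simpa using sum_filter_le_succ_sub_castSucc
      (fun j => Real.log ((Fin.snoc s 1 : Fin (p + 1) → ℝ) j)) i
  simp_rw [mul_sum, sum_filter, ← htelescope, map_sum, sum_mul, sum_filter]
  rw [sum_comm]

lemma coeff_starSeries (idx : Fin p → τ) (b s : Fin p → ℝ) (d : τ →₀ ℕ) :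
    MvPowerSeries.coeff d (starSeries idx b s) = ∑ ν ∈ piAntidiag univ d.degree,
      (∏ i, blockFactor b ν 1 s i) *
        (∏ j, (∑ i with i ≤ j, MvPolynomial.X (idx i) : MvPolynomial τ ℝ) ^ ν j).coeff d := by
  rw [starSeries, map_smul, sum_C_neg_log_mul_X, coeff_expLinear_sum, smul_eq_mul, mul_sum]
  simp only [blockFactor, logKernel, prod_mul_distrib, mul_assoc]

lemma integrableOn_coeff_starSeries (idx : Fin p → τ) {b : Fin p → ℝ}
    (hb : ∀ i, 1 < b i) (d : τ →₀ ℕ) :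
    IntegrableOn (fun s => MvPowerSeries.coeff d (starSeries idx b s)) (openSimplex p 1) := by
  simp only [coeff_starSeries]
  exact integrable_finsetSum _ fun ν _ => (integrableOn_prod_blockFactor hb ν).mul_const _

lemma coeff_Istar (idx : Fin p → Fin N) {b : Fin p → ℝ} (hb : ∀ i, 1 < b i)
    (d : Fin N →₀ ℕ) :
    MvPowerSeries.coeff d (Istar N p idx b) =
      ∫ s in openSimplex p 1, MvPowerSeries.coeff d (starSeries idx b s) := by
  have hsupp (ν : Fin p → ℕ) (hν : ν ∉ piAntidiag univ d.degree) :
      (∏ j, (∑ i with i ≤ j, MvPolynomial.X (idx i) : MvPolynomial (Fin N) ℝ) ^ ν j).coeff d =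
        0 := by
    refine coeff_prod_pow_eq_zero_of_degree_ne (fun j => ?_) fun h => hν ?_
    · exact .sum _ _ 1 fun i _ => MvPolynomial.isHomogeneous_X ℝ (idx i)
    · exact mem_piAntidiag.2 ⟨h.symm, fun i _ => mem_univ i⟩
  simp only [coeff_starSeries]
  rw [integral_finsetSum _ fun ν _ => (integrableOn_prod_blockFactor hb ν).mul_const _]
  simp only [integral_mul_const, ← iterInt_eq_integral_prod_blockFactor fun i => (hb i).le]
  exact tsum_eq_sum fun ν hν => by rw [hsupp ν hν, mul_zero]

variable {b : Fin k → ℝ} {b' : Fin l → ℝ}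

lemma integrableOn_coeff_starSeries_mul_coeff_starSeries (idx : Fin k → τ)
    (idx' : Fin l → τ) (hb : ∀ i, 1 < b i) (hb' : ∀ i, 1 < b' i) (d e : τ →₀ ℕ) :
    IntegrableOn (fun z : (Fin k → ℝ) × (Fin l → ℝ) =>
      MvPowerSeries.coeff d (starSeries idx b z.1) * MvPowerSeries.coeff e (starSeries idx' b' z.2))
      (openSimplex k 1 ×ˢ openSimplex l 1) := by
  rw [IntegrableOn, Measure.volume_eq_prod, ← Measure.prod_restrict]
  exact (integrableOn_coeff_starSeries idx hb d).mul_prod (integrableOn_coeff_starSeries idx' hb' e)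

lemma integrableOn_coeff_starSeries_mul (idx : Fin k → τ) (idx' : Fin l → τ)
    (hb : ∀ i, 1 < b i) (hb' : ∀ i, 1 < b' i) (d : τ →₀ ℕ) :
    IntegrableOn (fun z : (Fin k → ℝ) × (Fin l → ℝ) =>
      MvPowerSeries.coeff d (starSeries idx b z.1 * starSeries idx' b' z.2))
      (openSimplex k 1 ×ˢ openSimplex l 1) := by
  classical
  simp only [MvPowerSeries.coeff_mul]
  exact integrable_finsetSum _ fun e _ =>
    integrableOn_coeff_starSeries_mul_coeff_starSeries idx idx' hb hb' e.1 e.2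

lemma coeff_Istar_mul_Istar (idx : Fin k → Fin N) (idx' : Fin l → Fin N)
    (hb : ∀ i, 1 < b i) (hb' : ∀ i, 1 < b' i) (d : Fin N →₀ ℕ) :
    MvPowerSeries.coeff d (Istar N k idx b * Istar N l idx' b') =
      ∫ z in openSimplex k 1 ×ˢ openSimplex l 1,
        MvPowerSeries.coeff d (starSeries idx b z.1 * starSeries idx' b' z.2) := by
  classical
  simp only [MvPowerSeries.coeff_mul, coeff_Istar _ hb, coeff_Istar _ hb']
  rw [integral_finsetSum]
  · exact sum_congr rfl fun e _ => (setIntegral_prod_mul _ _ _ _).symm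
  · exact fun e _ => integrableOn_coeff_starSeries_mul_coeff_starSeries idx idx' hb hb' e.1 e.2

end StarSeries

section Shuffle

open Set

lemma ae_injective {ι : Type*} [Fintype ι] : ∀ᵐ r : ι → ℝ, Function.Injective r := by
  classical
  have hne (i j : ι) (hij : i ≠ j) : ∀ᵐ r : ι → ℝ, r i ≠ r j := by
    let H := LinearMap.eqLocus (LinearMap.proj (R := ℝ) (φ := fun _ : ι => ℝ) i) (LinearMap.proj j)
    have hH : H ≠ ⊤ := fun htop => by
      have hmem : Pi.single i (1 : ℝ) ∈ H := htop ▸ Submodule.mem_top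
      simp [H, hij.symm] at hmem
    have hcompl : {r : ι → ℝ | ¬r i ≠ r j} = H := by
      ext r
      simp [H]
    rw [ae_iff, hcompl]
    exact Measure.addHaar_submodule volume H hH
  have hall : ∀ᵐ r : ι → ℝ, ∀ i j, i ≠ j → r i ≠ r j := by simpa only [ae_all_iff] using hne
  exact hall.mono fun r hr i j => not_imp_not.1 (hr i j)

variable {k l n : ℕ} {x : ℝ}

/-- Splitting a vector into its first `k` and its last `l` entries. -/
def splitEquiv (k l : ℕ) : (Fin (k + l) → ℝ) ≃ᵐ (Fin k → ℝ) × (Fin l → ℝ) :=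
  (MeasurableEquiv.arrowCongr' finSumFinEquiv.symm (MeasurableEquiv.refl ℝ)).trans
    (MeasurableEquiv.sumPiEquivProdPi fun _ => ℝ)

lemma splitEquiv_apply (r : Fin (k + l) → ℝ) :
    splitEquiv k l r = (r ∘ Fin.castAdd l, r ∘ Fin.natAdd k) := rfl

lemma measurePreserving_splitEquiv (k l : ℕ) : MeasurePreserving (splitEquiv k l) :=
  (volume_preserving_arrowCongr' finSumFinEquiv.symm (MeasurableEquiv.refl ℝ)
    (MeasurePreserving.id _)).trans (volume_measurePreserving_sumPiEquivProdPi fun _ => ℝ)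

lemma mem_shuffles_iff_strictMono {σ : Equiv.Perm (Fin (k + l))} :
    σ ∈ shuffles (k + l) k ↔
      StrictMono (σ.symm ∘ Fin.castAdd l) ∧ StrictMono (σ.symm ∘ Fin.natAdd k) := by
  have hnot (i : Fin k) (j : Fin l) : ¬Fin.natAdd k j < Fin.castAdd l i := by
    rw [Fin.lt_def, Fin.val_natAdd, Fin.val_castAdd]
    lia
  simp [shuffles, StrictMono, Fin.forall_fin_add, hnot, (Fin.strictMono_castAdd l).lt_iff_lt]

lemma mem_shuffles_iff_split_mem_prod {σ : Equiv.Perm (Fin (k + l))} {r : Fin (k + l) → ℝ}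
    (hr : r ∘ σ ∈ openSimplex (k + l) x) :
    σ ∈ shuffles (k + l) k ↔ splitEquiv k l r ∈ openSimplex k x ×ˢ openSimplex l x := by
  have hIoo (j) : r j ∈ Ioo 0 x := by simpa using hr.2 (σ.symm j)
  have hlt (i j) : σ.symm i < σ.symm j ↔ r i < r j := by
    simpa using (hr.1.lt_iff_lt (a := σ.symm i) (b := σ.symm j)).symm
  simp [mem_shuffles_iff_strictMono, splitEquiv_apply, openSimplex, StrictMono, hlt,
    fun j => (hIoo j).1, fun j => (hIoo j).2]

lemma comp_sort_mem_openSimplex {r : Fin n → ℝ} (hr : Function.Injective r)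
    (hIoo : ∀ j, r j ∈ Ioo 0 x) : r ∘ Tuple.sort r ∈ openSimplex n x :=
  ⟨(Tuple.monotone_sort r).strictMono_of_injective (hr.comp (Tuple.sort r).injective),
    fun _ => hIoo _⟩

lemma split_preimage_ae_eq_biUnion_shuffles (k l : ℕ) (x : ℝ) :
    splitEquiv k l ⁻¹' (openSimplex k x ×ˢ openSimplex l x) =ᵐ[volume]
      ⋃ σ ∈ shuffles (k + l) k, {r | r ∘ σ ∈ openSimplex (k + l) x} := by
  refine Filter.eventuallyEq_set.2 (ae_injective.mono fun r hr => ?_)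
  simp only [mem_preimage, mem_iUnion, exists_prop, mem_ofPred_eq]
  refine ⟨fun hsplit => ?_, fun ⟨σ, hσ, hrσ⟩ => (mem_shuffles_iff_split_mem_prod hrσ).1 hσ⟩
  have hsort : r ∘ Tuple.sort r ∈ openSimplex (k + l) x :=
    comp_sort_mem_openSimplex hr fun j => Fin.addCases hsplit.1.2 hsplit.2.2 j
  exact ⟨Tuple.sort r, (mem_shuffles_iff_split_mem_prod hsort).2 hsplit, hsort⟩

lemma disjoint_setOf_comp_mem_openSimplex {σ τ : Equiv.Perm (Fin n)} (hστ : σ ≠ τ) :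
    Disjoint {r | r ∘ σ ∈ openSimplex n x} {r | r ∘ τ ∈ openSimplex n x} := by
  refine Set.disjoint_left.2 fun r hσ hτ => hστ ?_
  have hinj : Function.Injective r := σ.injective_comp r |>.1 hσ.1.injective
  exact Equiv.ext fun i => hinj (congrFun (Tuple.unique_monotone hσ.1.monotone hτ.1.monotone) i)

lemma setIntegral_comp_perm {E : Type*} [NormedAddCommGroup E] [NormedSpace ℝ E]
    (σ : Equiv.Perm (Fin n)) (S : Set (Fin n → ℝ)) (F : (Fin n → ℝ) → E) :
    ∫ r in {r | r ∘ σ ∈ S}, F r = ∫ s in S, F (s ∘ σ.symm) := by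
  let e := MeasurableEquiv.arrowCongr' σ.symm (MeasurableEquiv.refl ℝ)
  have he : MeasurePreserving e := volume_preserving_arrowCongr' _ _ (MeasurePreserving.id _)
  have hinv (r : Fin n → ℝ) : e r ∘ σ.symm = r := funext fun i => congrArg r (σ.apply_symm_apply i)
  have hpre : e ⁻¹' S = {r | r ∘ σ ∈ S} := rfl
  simpa only [hinv, hpre] using
    he.setIntegral_preimage_emb e.measurableEmbedding (fun s => F (s ∘ σ.symm)) S

theorem setIntegral_prod_openSimplex_eq_sum_shuffles {E : Type*} [NormedAddCommGroup E]
    [NormedSpace ℝ E] {F : (Fin (k + l) → ℝ) → E}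
    (hF : IntegrableOn F (splitEquiv k l ⁻¹' (openSimplex k x ×ˢ openSimplex l x))) :
    ∫ r in splitEquiv k l ⁻¹' (openSimplex k x ×ˢ openSimplex l x), F r =
      ∑ σ ∈ shuffles (k + l) k, ∫ s in openSimplex (k + l) x, F (s ∘ σ.symm) := by
  have hunion := split_preimage_ae_eq_biUnion_shuffles k l x
  rw [setIntegral_congr_set hunion, integral_biUnion_finset]
  · exact Finset.sum_congr rfl fun σ _ => setIntegral_comp_perm σ _ F
  · intro σ _
    exact (measurable_pi_lambda _ fun i => measurable_pi_apply (σ i))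
      (measurableSet_openSimplex _ _)
  · exact fun σ _ τ _ hστ => disjoint_setOf_comp_mem_openSimplex hστ
  · intro σ hσ
    exact (hF.congr_set_ae hunion.symm).mono_set
      (subset_iUnion₂_of_subset σ hσ subset_rfl)

end Shuffle

/-- The shuffle product formula for the generating series `I*`:
`I*(a_1:⋯:a_k:1|t_1,…,t_k) · I*(a_{k+1}:⋯:a_n:1|t_{k+1},…,t_n)
  = Σ_{σ ∈ Σ_{k,l}} I*(a_{σ(1)}:⋯:a_{σ(n)}:1|t_{σ(1)},…,t_{σ(n)})`, `n = k + l`. -/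
theorem stmt1 (k l : ℕ) (hk : 1 ≤ k) (hl : 1 ≤ l)
    (a : Fin (k + l) → ℝ) (ha : ∀ i, 1 < a i) :
    Istar (k + l) k (Fin.castAdd l) (fun i => a (Fin.castAdd l i)) *
      Istar (k + l) l (Fin.natAdd k) (fun i => a (Fin.natAdd k i)) =
    ∑ σ ∈ shuffles (k + l) k,
      Istar (k + l) (k + l) (fun i => σ i) (fun i => a (σ i)) := by
  ext d
  have hconcat (r : Fin (k + l) → ℝ) :
      starSeries (Fin.castAdd l) (fun i => a (Fin.castAdd l i)) (splitEquiv k l r).1 *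
        starSeries (Fin.natAdd k) (fun i => a (Fin.natAdd k i)) (splitEquiv k l r).2 =
      starSeries id a r := (starSeries_fin_add id a r).symm
  have hperm (σ : Equiv.Perm (Fin (k + l))) (s : Fin (k + l) → ℝ) :
      starSeries (fun i => σ i) (fun i => a (σ i)) s = starSeries id a (s ∘ σ.symm) := by
    simpa [Function.comp_def] using starSeries_comp_equiv σ id a (s ∘ σ.symm)
  have hemb := (splitEquiv k l).measurableEmbedding
  have hint := ((measurePreserving_splitEquiv k l).integrableOn_comp_preimage hemb).2
    (integrableOn_coeff_starSeries_mul (Fin.castAdd l) (Fin.natAdd k)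
      (fun i => ha (Fin.castAdd l i)) (fun i => ha (Fin.natAdd k i)) d)
  rw [coeff_Istar_mul_Istar _ _ (fun _ => ha _) (fun _ => ha _),
    ← (measurePreserving_splitEquiv k l).setIntegral_preimage_emb hemb, map_sum]
  simp only [Function.comp_def, hconcat] at hint ⊢
  simp only [setIntegral_prod_openSimplex_eq_sum_shuffles hint, coeff_Istar _ fun _ => ha _, hperm]
end

section
/- Let m ≥ 2 and let (v_1,…,v_m) be a basis of ℤ^m; set v_0 := −(v_1+⋯+v_m). Writing x ≡ y for x − y ∈ R (the double shuffle subgroup), the following dihedral symmetry relations hold in ℤ[P]/R: (i) cyclic symmetry: [v_1,…,v_m] ≡ [v_2,…,v_m,v_0]; (ii) reversal: [v_1,…,v_m] ≡ (−1)^{m+1}[v_{m−1},v_{m−2},…,v_1,v_0]; (iii) inversion: [v_1,…,v_m] ≡ [−v_1,…,−v_m]. -/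
/-- A tuple of lattice vectors is a basis iff it generates `ℤ^m` as a `ℤ`-module. -/
def IsLatBasis {m : ℕ} (v : Fin m → (Fin m → ℤ)) : Prop :=
  Submodule.span ℤ (Set.range v) = ⊤

/-- `(v_1,…,v_m) ↦ (v_2−v_1, v_3−v_2, …, v_m−v_{m−1}, −v_m)`, so that
`[v_1:⋯:v_m] = [diffs v]`. -/
def diffs {m : ℕ} (v : Fin m → (Fin m → ℤ)) : Fin m → (Fin m → ℤ) :=
  fun i => if h : (i : ℕ) + 1 < m then v ⟨(i : ℕ) + 1, h⟩ - v i else - v i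

/-- The generators of the double shuffle subgroup `R ⊆ ℤ[P]`:
`Σ_{σ∈Σ_{k,m−k}} [v_{σ(1)},…,v_{σ(m)}]` and `Σ_{σ∈Σ_{k,m−k}} [v_{σ(1)}:⋯:v_{σ(m)}]`
for bases `v` and `1 ≤ k ≤ m−1`. -/
def shuffleRelators (m : ℕ) : Set (FreeAbelianGroup (Fin m → (Fin m → ℤ))) :=
  {x | ∃ (v : Fin m → (Fin m → ℤ)) (k : ℕ), IsLatBasis v ∧ 1 ≤ k ∧ k ≤ m - 1 ∧
    (x = ∑ σ ∈ shuffles m k, FreeAbelianGroup.of (fun i => v (σ i)) ∨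
     x = ∑ σ ∈ shuffles m k, FreeAbelianGroup.of (diffs (fun i => v (σ i))))}

/-- The double shuffle subgroup `R`. -/
def doubleShuffleSubgroup (m : ℕ) : AddSubgroup (FreeAbelianGroup (Fin m → (Fin m → ℤ))) :=
  AddSubgroup.closure (shuffleRelators m)

/-!
Write `v_i = y_i − y_{i−1}`. Bases `v` become vertex sequences `y_0, …, y_m` of unimodular
simplices, and `v_1, …, v_m, v_0` are the successive edges of the closed polygon through these
points. The first double shuffle relation shuffles the edges, the second one shuffles
`y_0, …, y_{m−1}` and keeps `y_m` in place.

A function `f` of permutations whose shuffle sums all vanish satisfies `f(1) = (−1)^(m−1) f(w)`, `w`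
being the order reversal. Indeed, let `S_p` be the sum of `f` over the permutations whose inverse
decreases up to `p` and increases afterwards. Each shuffle sum is of the form `S_p + S_{p+1}`, while
`S_0 = f(1)` and `S_{m−1} = f(w)`.

This gives one reversal for each of the two relations, and their composition yields
`(y_0, …, y_m) ≡ −(y_1, …, y_m, y_0)`. For `k = 1` the second relation says that the sum over all
insertions of a point `b` into a sequence `z`, except at its end, vanishes; rotating by the previous
congruence, so does the sum over all insertions except at the front. The difference of the two sums
is the cyclic symmetry `(b, z) ≡ (z, b)`. Together with the twisted rotation it gives `y ≡ −y`, and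
then the reversal of the second kind becomes the reversal relation of the theorem.
-/

section Antipode

open Set
open Equiv (Perm)

variable {n : ℕ}

theorem mem_shuffles_succ {k : Fin n} {σ : Perm (Fin (n + 1))} :
    σ ∈ shuffles (n + 1) (k + 1) ↔
      StrictMonoOn ⇑σ⁻¹ (Iic k.castSucc) ∧ StrictMonoOn ⇑σ⁻¹ (Ici k.succ) := by
  simp only [shuffles, Finset.mem_filter, Finset.mem_univ, true_and]
  constructor
  · exact fun ⟨hlow, hhigh⟩ =>
      ⟨fun i _ j hj hij => hlow i j hij (Nat.lt_succ_of_le hj), fun i hi j _ => (hhigh i j · hi)⟩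
  · exact fun ⟨hlow, hhigh⟩ =>
      ⟨fun i j hij hj => hlow (Nat.le_of_lt_succ (hij.trans hj)) (Nat.le_of_lt_succ hj) hij,
        fun i j hij hi => hhigh hi (hi.trans hij.le) hij⟩

/-- The involution of `{0,…,n}` reversing the initial segment `{0,…,p}` and fixing the other
letters. Composition with it turns shuffles into valley permutations. -/
def prefixRev (p : Fin (n + 1)) : Perm (Fin (n + 1)) :=
  Function.Involutive.toPerm (fun i => if i ≤ p then p - i else i) fun i => by
    by_cases h : i ≤ p <;> simp [h, Fin.sub_le_iff]

theorem prefixRev_of_le {p i : Fin (n + 1)} (h : i ≤ p) : prefixRev p i = p - i :=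
  if_pos h

theorem prefixRev_of_lt {p i : Fin (n + 1)} (h : p < i) : prefixRev p i = i :=
  if_neg h.not_ge

theorem prefixRev_mul_self (p : Fin (n + 1)) : prefixRev p * prefixRev p = 1 :=
  Equiv.ext (prefixRev p).left_inv

theorem prefixRev_inv (p : Fin (n + 1)) : (prefixRev p)⁻¹ = prefixRev p :=
  inv_eq_of_mul_eq_one_left (prefixRev_mul_self p)

theorem mapsTo_prefixRev_Iic (p : Fin (n + 1)) : MapsTo (prefixRev p) (Iic p) (Iic p) :=
  fun i (hi : i ≤ p) => by
    rw [prefixRev_of_le hi]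
    exact Fin.sub_le_iff.mpr hi

theorem strictAntiOn_prefixRev (p : Fin (n + 1)) : StrictAntiOn (prefixRev p) (Iic p) :=
  fun i (hi : i ≤ p) j (hj : j ≤ p) hij => by
    rw [prefixRev_of_le hi, prefixRev_of_le hj, Fin.lt_def, Fin.sub_val_of_le hi,
      Fin.sub_val_of_le hj]
    lia

theorem strictMonoOn_comp_prefixRev {α : Type*} [Preorder α] {f : Fin (n + 1) → α}
    {p : Fin (n + 1)} : StrictMonoOn (f ∘ prefixRev p) (Iic p) ↔ StrictAntiOn f (Iic p) := by
  refine ⟨fun h => ?_, fun h => h.comp (strictAntiOn_prefixRev p) (mapsTo_prefixRev_Iic p)⟩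
  have hinv : f = (f ∘ prefixRev p) ∘ prefixRev p :=
    funext fun i => congrArg f (DFunLike.congr_fun (prefixRev_mul_self p) i).symm
  rw [hinv]
  exact h.comp_strictAntiOn (strictAntiOn_prefixRev p) (mapsTo_prefixRev_Iic p)

theorem prefixRev_mul_mem_shuffles {k : Fin n} {τ : Perm (Fin (n + 1))} :
    prefixRev k.castSucc * τ ∈ shuffles (n + 1) (k + 1) ↔
      StrictAntiOn ⇑τ⁻¹ (Iic k.castSucc) ∧ StrictMonoOn ⇑τ⁻¹ (Ici k.succ) := by
  have hhigh : EqOn (⇑τ⁻¹ ∘ prefixRev k.castSucc) ⇑τ⁻¹ (Ici k.succ) := fun i hi =>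
    congrArg ⇑τ⁻¹ (prefixRev_of_lt (k.castSucc_lt_succ.trans_le hi))
  rw [mem_shuffles_succ, mul_inv_rev, prefixRev_inv, Perm.coe_mul, strictMonoOn_comp_prefixRev,
    hhigh.congr_strictMonoOn]

open scoped Classical in
/-- The permutations `τ` for which `τ⁻¹` decreases up to the letter `p` and increases from there
on. They interpolate between the identity (`p = 0`) and the order reversal (`p = n`). -/
noncomputable def valleyPerms (p : Fin (n + 1)) : Finset (Perm (Fin (n + 1))) :=
  Finset.univ.filter fun τ => StrictAntiOn ⇑τ⁻¹ (Iic p) ∧ StrictMonoOn ⇑τ⁻¹ (Ici p)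

theorem strictMonoOn_Ici_castSucc {α : Type*} [Preorder α] {f : Fin (n + 1) → α} {k : Fin n} :
    StrictMonoOn f (Ici k.castSucc) ↔ f k.castSucc < f k.succ ∧ StrictMonoOn f (Ici k.succ) := by
  have hins : Ici k.castSucc = insert k.castSucc (Ici k.succ) := by
    ext i
    simp only [mem_Ici, mem_insert_iff, Fin.le_def, Fin.ext_iff, Fin.val_castSucc, Fin.val_succ]
    lia
  refine ⟨fun h => ⟨h self_mem_Ici k.castSucc_le_succ k.castSucc_lt_succ,
    h.mono (Ici_subset_Ici.mpr k.castSucc_le_succ)⟩, fun ⟨hk, h⟩ => ?_⟩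
  rw [hins, strictMonoOn_insert_iff_of_forall_ge fun i (hi : i ∈ Ici k.succ) =>
    k.castSucc_le_succ.trans hi]
  exact ⟨fun i hi _ => hk.trans_le (h.monotoneOn self_mem_Ici hi hi), h⟩

theorem strictAntiOn_Iic_succ {α : Type*} [Preorder α] {f : Fin (n + 1) → α} {k : Fin n} :
    StrictAntiOn f (Iic k.succ) ↔ f k.succ < f k.castSucc ∧ StrictAntiOn f (Iic k.castSucc) := by
  have hins : Iic k.succ = insert k.succ (Iic k.castSucc) := by
    ext i
    simp only [mem_Iic, mem_insert_iff, Fin.le_def, Fin.ext_iff, Fin.val_castSucc, Fin.val_succ]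
    lia
  refine ⟨fun h => ⟨h k.castSucc_le_succ self_mem_Iic k.castSucc_lt_succ,
    h.mono (Iic_subset_Iic.mpr k.castSucc_le_succ)⟩, fun ⟨hk, h⟩ => ?_⟩
  rw [hins, strictAntiOn_insert_iff_of_forall_le fun i (hi : i ∈ Iic k.castSucc) =>
    le_trans hi k.castSucc_le_succ]
  exact ⟨fun i hi _ => hk.trans_le (h.antitoneOn hi self_mem_Iic hi), h⟩

theorem valleyPerms_succ (k : Fin n) :
    valleyPerms k.succ = Finset.univ.filter fun τ =>
      prefixRev k.castSucc * τ ∈ shuffles (n + 1) (k + 1) ∧ τ⁻¹ k.succ < τ⁻¹ k.castSucc := by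
  ext τ
  simp only [valleyPerms, Finset.mem_filter_univ, strictAntiOn_Iic_succ, prefixRev_mul_mem_shuffles]
  tauto

theorem valleyPerms_castSucc (k : Fin n) :
    valleyPerms k.castSucc = Finset.univ.filter fun τ =>
      prefixRev k.castSucc * τ ∈ shuffles (n + 1) (k + 1) ∧ ¬τ⁻¹ k.succ < τ⁻¹ k.castSucc := by
  ext τ
  have hne : τ⁻¹ k.castSucc ≠ τ⁻¹ k.succ := τ⁻¹.injective.ne k.castSucc_lt_succ.ne
  simp only [valleyPerms, Finset.mem_filter_univ, strictMonoOn_Ici_castSucc,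
    prefixRev_mul_mem_shuffles, not_lt, hne.le_iff_lt]
  tauto

theorem sum_valleyPerms_succ_add_castSucc {A : Type*} [AddCommMonoid A]
    (f : Perm (Fin (n + 1)) → A) (k : Fin n) :
    ∑ τ ∈ valleyPerms k.succ, f τ + ∑ τ ∈ valleyPerms k.castSucc, f τ =
      ∑ σ ∈ shuffles (n + 1) (k + 1), f (prefixRev k.castSucc * σ) := by
  rw [valleyPerms_succ, valleyPerms_castSucc, ← Finset.filter_filter, ← Finset.filter_filter,
    Finset.sum_filter_add_sum_filter_not]
  refine Finset.sum_equiv (Equiv.mulLeft (prefixRev k.castSucc)) (by simp) fun τ _ => ?_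
  rw [Equiv.coe_mulLeft, ← mul_assoc, prefixRev_mul_self, one_mul]

theorem perm_eq_one_of_strictMono {α : Type*} [LinearOrder α] [WellFoundedLT α] {σ : Perm α}
    (hσ : StrictMono σ) : σ = 1 :=
  DFunLike.coe_injective <| (hσ.range_inj strictMono_id).mp <| by simp

theorem valleyPerms_zero : valleyPerms (0 : Fin (n + 1)) = {1} := by
  refine Finset.eq_singleton_iff_unique_mem.mpr ⟨?_, fun τ hτ => ?_⟩
  · exact (Finset.mem_filter_univ _).mpr
      ⟨(show Iic (0 : Fin (n + 1)) = {0} from Iic_bot) ▸ strictAntiOn_singleton _,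
        strictMono_id.strictMonoOn _⟩
  · have hmono : StrictMono ⇑τ⁻¹ := fun i j =>
      ((Finset.mem_filter_univ _).mp hτ).2 (Fin.zero_le i) (Fin.zero_le j)
    exact inv_eq_one.mp (perm_eq_one_of_strictMono hmono)

theorem valleyPerms_last : valleyPerms (Fin.last n) = {Fin.revPerm} := by
  refine Finset.eq_singleton_iff_unique_mem.mpr ⟨?_, fun τ hτ => ?_⟩
  · exact (Finset.mem_filter_univ _).mpr
      ⟨Fin.rev_strictAnti.strictAntiOn _,
        (show Ici (Fin.last n) = {Fin.last n} from Ici_top) ▸ strictMonoOn_singleton _⟩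
  · have hanti : StrictAnti ⇑τ⁻¹ := fun i j =>
      ((Finset.mem_filter_univ _).mp hτ).1 (Fin.le_last i) (Fin.le_last j)
    have hone : Fin.revPerm * τ⁻¹ = 1 := perm_eq_one_of_strictMono (Fin.rev_strictAnti.comp hanti)
    exact (mul_inv_eq_one.mp hone).symm

theorem apply_one_eq_smul_apply_revPerm {A : Type*} [AddCommGroup A] {f : Perm (Fin (n + 1)) → A}
    (hf : ∀ (ρ : Perm (Fin (n + 1))) (k : Fin n),
      ∑ σ ∈ shuffles (n + 1) (k + 1), f (ρ * σ) = 0) :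
    f 1 = (-1 : ℤ) ^ n • f Fin.revPerm := by
  have hvalley (p : Fin (n + 1)) : f 1 = (-1 : ℤ) ^ (p : ℕ) • ∑ τ ∈ valleyPerms p, f τ := by
    induction p using Fin.induction with
    | zero => simp [valleyPerms_zero]
    | succ k ih =>
      have hsum := sum_valleyPerms_succ_add_castSucc f k
      rw [hf, add_comm] at hsum
      rw [ih, eq_neg_of_add_eq_zero_left hsum, Fin.val_castSucc, Fin.val_succ, pow_succ,
        mul_neg_one, neg_smul, smul_neg]
  simpa [valleyPerms_last] using hvalley (Fin.last n)

end Antipode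

section Insertion

open Set

variable {n : ℕ}

theorem shuffles_one : shuffles (n + 1) 1 = Finset.univ.image Fin.cycleRange := by
  ext σ
  simp only [shuffles, Finset.mem_filter_univ, Finset.mem_image, Finset.mem_univ, true_and]
  constructor
  · rintro ⟨-, hσ⟩
    have hmono : StrictMono (⇑σ⁻¹ ∘ Fin.succ) := fun i j hij =>
      hσ _ _ (Fin.succ_lt_succ_iff.mpr hij) (by simp)
    have htail : ⇑σ⁻¹ ∘ Fin.succ = (σ⁻¹ 0).succAbove :=
      (hmono.range_inj (Fin.strictMono_succAbove _)).mp <| by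
        rw [range_comp, Fin.range_succ, image_compl_eq σ⁻¹.bijective, image_singleton,
          Fin.range_succAbove]
    refine ⟨σ⁻¹ 0, inv_injective (Equiv.ext (Fin.cases ?_ fun i => ?_))⟩
    · exact Fin.cycleRange_symm_zero _
    · exact (Fin.cycleRange_symm_succ _ i).trans (congrFun htail i).symm
  · rintro ⟨p, rfl⟩
    refine ⟨by lia, fun i j hij hi => ?_⟩
    obtain ⟨i, rfl⟩ := Fin.exists_succ_eq.mpr (show i ≠ 0 by rintro rfl; simp at hi)
    obtain ⟨j, rfl⟩ := Fin.exists_succ_eq.mpr (show j ≠ 0 by rintro rfl; simp at hij)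
    change (Fin.cycleRange p).symm _ < (Fin.cycleRange p).symm _
    rw [Fin.cycleRange_symm_succ, Fin.cycleRange_symm_succ]
    exact Fin.strictMono_succAbove _ (Fin.succ_lt_succ_iff.mp hij)

theorem sum_shuffles_one {A α : Type*} [AddCommMonoid A] (f : (Fin (n + 1) → α) → A) (b : α)
    (u : Fin n → α) :
    ∑ σ ∈ shuffles (n + 1) 1, f ((Fin.cons b u : Fin (n + 1) → α) ∘ σ) =
      ∑ p : Fin (n + 1), f (p.insertNth b u) := by
  have hinj : Function.Injective (Fin.cycleRange (n := n + 1)) := fun p q hpq => by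
    rw [← Fin.cycleRange_symm_zero p, ← Fin.cycleRange_symm_zero q, hpq]
  simp only [shuffles_one, Finset.sum_image hinj.injOn, Fin.cons_comp_cycleRange]

theorem insertNth_succ_cons {α : Type*} (p : Fin (n + 1)) (b c : α) (u : Fin n → α) :
    (p.succ.insertNth b (Fin.cons c u : Fin (n + 1) → α) : Fin (n + 2) → α) =
      Fin.cons c (p.insertNth b u : Fin (n + 1) → α) := by
  refine Fin.insertNth_eq_iff.mpr ⟨by simp, funext (Fin.cases ?_ fun i => ?_)⟩ <;>
    simp [Fin.removeNth]

theorem insertNth_castSucc_snoc {α : Type*} (p : Fin (n + 1)) (b c : α) (u : Fin n → α) :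
    (p.castSucc.insertNth b (Fin.snoc u c : Fin (n + 1) → α) : Fin (n + 2) → α) =
      Fin.snoc (p.insertNth b u : Fin (n + 1) → α) c := by
  refine Fin.insertNth_eq_iff.mpr ⟨by simp, funext (Fin.lastCases ?_ fun i => ?_)⟩ <;>
    simp [Fin.removeNth]

theorem neg_insertNth {M : Type*} [Neg M] (p : Fin (n + 1)) (b : M) (z : Fin n → M) :
    -(p.insertNth b z : Fin (n + 1) → M) = p.insertNth (-b) (-z) :=
  Fin.eq_insertNth_iff.mpr ⟨by simp, funext fun i => by simp [Fin.removeNth]⟩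

theorem neg_snoc {M : Type*} [Neg M] (w : Fin n → M) (a : M) :
    -(Fin.snoc w a : Fin (n + 1) → M) = Fin.snoc (-w) (-a) :=
  Fin.comp_snoc Neg.neg w a

theorem snoc_tail_eq_dite {α : Type*} (v : Fin (n + 1) → α) (a : α) :
    (Fin.snoc (Fin.tail v) a : Fin (n + 1) → α) =
      fun i : Fin (n + 1) => if h : (i : ℕ) + 1 < n + 1 then v ⟨i + 1, h⟩ else a := by
  refine funext (Fin.lastCases (by simp) fun i => ?_)
  have hlt : (i.castSucc : ℕ) + 1 < n + 1 := Nat.succ_lt_succ i.is_lt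
  rw [Fin.snoc_castSucc, dif_pos hlt]
  rfl

theorem snoc_init_comp_rev_eq_dite {α : Type*} (v : Fin (n + 1) → α) (a : α) :
    (Fin.snoc (Fin.init v ∘ Fin.rev) a : Fin (n + 1) → α) =
      fun i : Fin (n + 1) => if h : (i : ℕ) + 1 < n + 1 then v ⟨n + 1 - 2 - i, by lia⟩ else a := by
  refine funext (Fin.lastCases (by simp) fun i => ?_)
  have hlt : (i.castSucc : ℕ) + 1 < n + 1 := Nat.succ_lt_succ i.is_lt
  rw [Fin.snoc_castSucc, dif_pos hlt]
  exact congrArg v (Fin.ext (by simp only [Fin.val_castSucc, Fin.val_rev]; lia))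

end Insertion

section EdgeVectors

open Set

variable {M : Type*} [AddCommGroup M] {m : ℕ}

/-- The edge vectors `(y_1−y_0, …, y_m−y_{m−1})` of the path through the points `y_0, …, y_m`; the
closing edge `y_0−y_m` is left out. They translate between points and bases. -/
def edgeVectors (y : Fin (m + 1) → M) : Fin m → M :=
  fun i => y i.succ - y i.castSucc

theorem edgeVectors_partialSum (v : Fin m → M) : edgeVectors (Fin.partialSum v) = v :=
  funext fun i => (neg_add_eq_sub _ _).symm.trans (Fin.partialSum_right_neg v i)

theorem edgeVectors_neg (y : Fin (m + 1) → M) : edgeVectors (-y) = -edgeVectors y :=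
  funext fun _ => neg_sub_neg _ _ |>.trans (neg_sub _ _).symm

theorem edgeVectors_neg_comp_rev (y : Fin (m + 1) → M) :
    edgeVectors (-(y ∘ Fin.rev)) = edgeVectors y ∘ Fin.rev := by
  ext i
  simp [edgeVectors, Fin.rev_succ, Fin.rev_castSucc, neg_add_eq_sub]

theorem sum_edgeVectors (y : Fin (m + 1) → M) :
    ∑ i, edgeVectors y i = y (Fin.last m) - y 0 := by
  have hsum := (Fin.sum_univ_succ y).symm.trans (Fin.sum_univ_castSucc y)
  rw [eq_sub_iff_add_eq, ← add_left_inj (∑ i : Fin m, y i.castSucc)]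
  simp only [edgeVectors, Finset.sum_sub_distrib]
  rw [add_right_comm, sub_add_cancel, add_comm, hsum, add_comm]

theorem edgeVectors_snoc_tail (y : Fin (m + 2) → M) :
    edgeVectors (Fin.snoc (Fin.tail y) (y 0)) =
      Fin.snoc (Fin.tail (edgeVectors y)) (-∑ i, edgeVectors y i) := by
  refine funext (Fin.lastCases ?_ fun i => ?_)
  · rw [sum_edgeVectors, neg_sub, Fin.snoc_last]
    simp [edgeVectors, Fin.tail]
  · simp [edgeVectors, Fin.tail, Fin.succ_castSucc, -Fin.castSucc_succ]

theorem edgeVectors_neg_snoc_init_comp_rev (y : Fin (m + 2) → M) :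
    edgeVectors (-(Fin.snoc (Fin.init y ∘ Fin.rev) (y (Fin.last _)) : Fin (m + 2) → M)) =
      Fin.snoc (Fin.init (edgeVectors y) ∘ Fin.rev) (-∑ i, edgeVectors y i) := by
  refine funext (Fin.lastCases ?_ fun i => ?_)
  · rw [sum_edgeVectors, neg_sub, Fin.snoc_last]
    simp [edgeVectors, Fin.init, neg_add_eq_sub]
  · simp [edgeVectors, Fin.init, Fin.rev_succ, Fin.rev_castSucc, Fin.succ_castSucc,
      neg_add_eq_sub, -Fin.castSucc_succ]

theorem span_range_edgeVectors (y : Fin (m + 1) → M) :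
    Submodule.span ℤ (range (edgeVectors y)) = vectorSpan ℤ (range y) := by
  refine le_antisymm (Submodule.span_le.mpr (range_subset_iff.mpr fun i =>
    vsub_mem_vectorSpan ℤ (mem_range_self _) (mem_range_self _))) ?_
  rw [vectorSpan_range_eq_span_range_vsub_right ℤ y 0, Submodule.span_le, range_subset_iff]
  intro i
  induction i using Fin.induction with
  | zero => simp
  | succ i ih =>
    have hedge : edgeVectors y i ∈ Submodule.span ℤ (range (edgeVectors y)) :=
      Submodule.subset_span (mem_range_self i)
    simpa [edgeVectors] using add_mem hedge ih

end EdgeVectors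

section UnimodularSimplex

open Set
open Equiv (Perm)

variable {m : ℕ}

/-- The points `y_0, …, y_m` are the vertices of a unimodular simplex of `ℤ^m`, which means that
their edge vectors form a basis. -/
def IsUnimodularSimplex (y : Fin (m + 1) → (Fin m → ℤ)) : Prop :=
  vectorSpan ℤ (range y) = ⊤

theorem isLatBasis_edgeVectors_iff {y : Fin (m + 1) → (Fin m → ℤ)} :
    IsLatBasis (edgeVectors y) ↔ IsUnimodularSimplex y := by
  rw [IsLatBasis, span_range_edgeVectors, IsUnimodularSimplex]

theorem IsUnimodularSimplex.of_range_eq {y z : Fin (m + 1) → (Fin m → ℤ)}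
    (hy : IsUnimodularSimplex y) (h : range z = range y) : IsUnimodularSimplex z := by
  rwa [IsUnimodularSimplex, h]

theorem isUnimodularSimplex_insertNth {p : Fin (m + 1)} {b : Fin m → ℤ} {z : Fin m → (Fin m → ℤ)} :
    IsUnimodularSimplex (p.insertNth b z) ↔ IsUnimodularSimplex (Fin.cons b z) := by
  have hrange : range (p.insertNth b z : Fin (m + 1) → (Fin m → ℤ)) =
      range (Fin.cons b z : Fin (m + 1) → (Fin m → ℤ)) :=
    (Fin.range_insertNth p b z).trans (Fin.range_cons b z).symm
  rw [IsUnimodularSimplex, IsUnimodularSimplex, hrange]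

theorem isUnimodularSimplex_snoc {b : Fin m → ℤ} {z : Fin m → (Fin m → ℤ)} :
    IsUnimodularSimplex (Fin.snoc z b) ↔ IsUnimodularSimplex (Fin.cons b z) := by
  rw [← Fin.insertNth_last', isUnimodularSimplex_insertNth]

theorem IsLatBasis.comp_perm {v : Fin m → (Fin m → ℤ)} (hv : IsLatBasis v)
    (σ : Perm (Fin m)) : IsLatBasis (v ∘ σ) := by
  rwa [IsLatBasis, EquivLike.range_comp]

theorem IsUnimodularSimplex.neg {y : Fin (m + 1) → (Fin m → ℤ)} (hy : IsUnimodularSimplex y) :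
    IsUnimodularSimplex (-y) := by
  rw [← isLatBasis_edgeVectors_iff] at hy ⊢
  have hrange : range (-edgeVectors y) = -range (edgeVectors y) :=
    (range_comp Neg.neg _).trans image_neg_eq_neg
  rwa [edgeVectors_neg, IsLatBasis, hrange, Submodule.span_neg]

theorem IsUnimodularSimplex.isLatBasis_sub_const {w : Fin m → (Fin m → ℤ)} {a : Fin m → ℤ}
    (h : IsUnimodularSimplex (Fin.snoc w a)) : IsLatBasis fun i => w i - a := by
  rw [IsUnimodularSimplex, Fin.range_snoc,
    vectorSpan_eq_span_vsub_set_right ℤ (mem_insert a (range w)), image_insert_eq] at h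
  simpa [IsLatBasis, ← range_comp, Function.comp_def] using h

theorem diffs_sub_const (w : Fin m → (Fin m → ℤ)) (a : Fin m → ℤ) :
    diffs (fun i => w i - a) = edgeVectors (Fin.snoc w a) := by
  cases m with
  | zero => exact Subsingleton.elim _ _
  | succ m =>
    refine funext (Fin.lastCases ?_ fun i => ?_)
    · simp [diffs, edgeVectors]
    · simp only [diffs, edgeVectors, Fin.val_castSucc, Fin.succ_castSucc, Fin.snoc_castSucc,
        dif_pos (Nat.succ_lt_succ i.is_lt)]
      exact sub_sub_sub_cancel_right _ _ _

end UnimodularSimplex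

section ShuffleClass

open Set

variable {m n : ℕ}

/-- The class of `[v_1,…,v_m]` modulo the double shuffle subgroup. It is defined for all tuples, but
the relations involve bases only. -/
def shuffleClass (v : Fin m → (Fin m → ℤ)) :
    FreeAbelianGroup (Fin m → (Fin m → ℤ)) ⧸ doubleShuffleSubgroup m :=
  QuotientAddGroup.mk (FreeAbelianGroup.of v)

theorem sum_shuffleClass_comp {v : Fin m → (Fin m → ℤ)} (hv : IsLatBasis v) {k : ℕ} (h₁ : 1 ≤ k)
    (h₂ : k ≤ m - 1) : ∑ σ ∈ shuffles m k, shuffleClass (v ∘ σ) = 0 := by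
  simp only [shuffleClass, ← QuotientAddGroup.mk_sum]
  exact (QuotientAddGroup.eq_zero_iff _).mpr
    (AddSubgroup.subset_closure ⟨v, k, hv, h₁, h₂, Or.inl rfl⟩)

/-- The class of the edge vectors of the path through `y_0, …, y_m`. In terms of it the first
double shuffle relation permutes edges, and the second one permutes `y_0, …, y_{m-1}`. -/
def simplexClass (y : Fin (m + 1) → (Fin m → ℤ)) :
    FreeAbelianGroup (Fin m → (Fin m → ℤ)) ⧸ doubleShuffleSubgroup m :=
  shuffleClass (edgeVectors y)

theorem sum_simplexClass_snoc_comp {w : Fin m → (Fin m → ℤ)} {a : Fin m → ℤ}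
    (h : IsUnimodularSimplex (Fin.snoc w a)) {k : ℕ} (h₁ : 1 ≤ k) (h₂ : k ≤ m - 1) :
    ∑ σ ∈ shuffles m k, simplexClass (Fin.snoc (w ∘ σ) a) = 0 := by
  simp only [simplexClass, shuffleClass, ← diffs_sub_const, ← QuotientAddGroup.mk_sum]
  exact (QuotientAddGroup.eq_zero_iff _).mpr
    (AddSubgroup.subset_closure ⟨_, k, h.isLatBasis_sub_const, h₁, h₂, Or.inr rfl⟩)

theorem shuffleClass_eq_smul_comp_rev {v : Fin (n + 1) → (Fin (n + 1) → ℤ)} (hv : IsLatBasis v) :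
    shuffleClass v = (-1 : ℤ) ^ n • shuffleClass (v ∘ Fin.rev) :=
  apply_one_eq_smul_apply_revPerm (f := fun σ => shuffleClass (v ∘ σ)) fun ρ _ =>
    sum_shuffleClass_comp (hv.comp_perm ρ) (by lia) (by lia)

theorem simplexClass_eq_smul_neg_comp_rev {y : Fin (n + 2) → (Fin (n + 1) → ℤ)}
    (hy : IsUnimodularSimplex y) :
    simplexClass y = (-1 : ℤ) ^ n • simplexClass (-(y ∘ Fin.rev)) := by
  rw [simplexClass, simplexClass, edgeVectors_neg_comp_rev]
  exact shuffleClass_eq_smul_comp_rev (isLatBasis_edgeVectors_iff.mpr hy)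

theorem simplexClass_snoc_eq_smul_comp_rev {w : Fin (n + 1) → (Fin (n + 1) → ℤ)}
    {a : Fin (n + 1) → ℤ} (h : IsUnimodularSimplex (Fin.snoc w a)) :
    simplexClass (Fin.snoc w a) = (-1 : ℤ) ^ n • simplexClass (Fin.snoc (w ∘ Fin.rev) a) :=
  apply_one_eq_smul_apply_revPerm (f := fun σ => simplexClass (Fin.snoc (w ∘ σ) a)) fun ρ _ =>
    sum_simplexClass_snoc_comp (w := w ∘ ρ)
      (h.of_range_eq (by simp only [Fin.range_snoc, EquivLike.range_comp])) (by lia) (by lia)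

theorem simplexClass_cons_eq_neg_snoc {w : Fin (n + 1) → (Fin (n + 1) → ℤ)} {a : Fin (n + 1) → ℤ}
    (h : IsUnimodularSimplex (Fin.cons a w)) :
    simplexClass (Fin.cons a w) = simplexClass (-(Fin.snoc w a : Fin (n + 2) → _)) := by
  have hneg : IsUnimodularSimplex (Fin.snoc (-w) (-a)) :=
    neg_snoc w a ▸ (isUnimodularSimplex_snoc.mpr h).neg
  rw [simplexClass_eq_smul_neg_comp_rev h, Fin.cons_comp_rev, neg_snoc, neg_snoc,
    simplexClass_snoc_eq_smul_comp_rev hneg]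
  rfl

theorem sum_simplexClass_insertNth_castSucc {z : Fin (n + 2) → (Fin (n + 2) → ℤ)}
    {b : Fin (n + 2) → ℤ} (h : IsUnimodularSimplex (Fin.cons b z)) :
    ∑ p : Fin (n + 2), simplexClass (p.castSucc.insertNth b z) = 0 := by
  obtain ⟨u, c, rfl⟩ : ∃ u c, z = Fin.snoc u c := ⟨_, _, (Fin.snoc_init_self z).symm⟩
  simp only [insertNth_castSucc_snoc]
  rw [← sum_shuffles_one fun w => simplexClass (Fin.snoc w c)]
  rw [Fin.cons_snoc_eq_snoc_cons] at h
  exact sum_simplexClass_snoc_comp h le_rfl (by lia)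

theorem sum_simplexClass_insertNth_succ {z : Fin (n + 2) → (Fin (n + 2) → ℤ)}
    {b : Fin (n + 2) → ℤ} (h : IsUnimodularSimplex (Fin.cons b z)) :
    ∑ p : Fin (n + 2), simplexClass (p.succ.insertNth b z) = 0 := by
  obtain ⟨c, u, rfl⟩ : ∃ c u, z = Fin.cons c u := ⟨_, _, (Fin.cons_self_tail z).symm⟩
  have hrotate (p : Fin (n + 2)) : simplexClass (p.succ.insertNth b (Fin.cons c u)) =
      simplexClass (p.castSucc.insertNth (-b) (-(Fin.snoc u c : Fin (n + 2) → _))) := by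
    have hp : IsUnimodularSimplex (Fin.cons c (p.insertNth b u)) := by
      rwa [← insertNth_succ_cons, isUnimodularSimplex_insertNth]
    rw [insertNth_succ_cons, simplexClass_cons_eq_neg_snoc hp, ← insertNth_castSucc_snoc,
      neg_insertNth]
  simp only [hrotate]
  refine sum_simplexClass_insertNth_castSucc ?_
  rw [← Fin.insertNth_zero', ← neg_insertNth]
  exact IsUnimodularSimplex.neg <| h.of_range_eq <| by
    rw [Fin.insertNth_zero', Fin.range_cons, Fin.range_cons, Fin.range_snoc, Fin.range_cons]

theorem simplexClass_cons_eq_snoc {z : Fin (n + 2) → (Fin (n + 2) → ℤ)} {b : Fin (n + 2) → ℤ}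
    (h : IsUnimodularSimplex (Fin.cons b z)) :
    simplexClass (Fin.cons b z) = simplexClass (Fin.snoc z b) := by
  have hsum := (Fin.sum_univ_succ fun p => simplexClass (p.insertNth b z)).symm.trans
    (Fin.sum_univ_castSucc _)
  rwa [sum_simplexClass_insertNth_succ h, sum_simplexClass_insertNth_castSucc h, add_zero,
    zero_add, Fin.insertNth_zero', Fin.insertNth_last'] at hsum

theorem simplexClass_neg {y : Fin (n + 3) → (Fin (n + 2) → ℤ)} (hy : IsUnimodularSimplex y) :
    simplexClass (-y) = simplexClass y := by
  obtain ⟨z, b, rfl⟩ : ∃ z b, y = Fin.snoc z b := ⟨_, _, (Fin.snoc_init_self y).symm⟩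
  have hcons : IsUnimodularSimplex (Fin.cons b z) := isUnimodularSimplex_snoc.mp hy
  rw [← simplexClass_cons_eq_neg_snoc hcons, simplexClass_cons_eq_snoc hcons]

theorem shuffleClass_eq_snoc_tail {v : Fin (n + 2) → (Fin (n + 2) → ℤ)} (hv : IsLatBasis v) :
    shuffleClass v = shuffleClass (Fin.snoc (Fin.tail v) (-∑ i, v i)) := by
  obtain ⟨y, rfl⟩ : ∃ y, edgeVectors y = v := ⟨_, edgeVectors_partialSum v⟩
  have hy : IsUnimodularSimplex (Fin.cons (y 0) (Fin.tail y)) := by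
    rwa [Fin.cons_self_tail, ← isLatBasis_edgeVectors_iff]
  have hcyc := simplexClass_cons_eq_snoc hy
  rwa [Fin.cons_self_tail, simplexClass, simplexClass, edgeVectors_snoc_tail] at hcyc

theorem shuffleClass_eq_smul_snoc_init_comp_rev {v : Fin (n + 2) → (Fin (n + 2) → ℤ)}
    (hv : IsLatBasis v) :
    shuffleClass v =
      (-1 : ℤ) ^ (n + 1) • shuffleClass (Fin.snoc (Fin.init v ∘ Fin.rev) (-∑ i, v i)) := by
  obtain ⟨y, rfl⟩ : ∃ y, edgeVectors y = v := ⟨_, edgeVectors_partialSum v⟩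
  have hy : IsUnimodularSimplex y := isLatBasis_edgeVectors_iff.mp hv
  have hrev := simplexClass_snoc_eq_smul_comp_rev (w := Fin.init y) (a := y (Fin.last _))
    (by rwa [Fin.snoc_init_self])
  have hrange : range (Fin.snoc (Fin.init y ∘ Fin.rev) (y (Fin.last _)) : Fin (n + 3) → _) =
      range y := by
    rw [Fin.range_snoc, Fin.rev_surjective.range_comp, ← Fin.range_snoc, Fin.snoc_init_self]
  rwa [Fin.snoc_init_self, ← simplexClass_neg (hy.of_range_eq hrange), simplexClass, simplexClass,
    edgeVectors_neg_snoc_init_comp_rev] at hrev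

theorem shuffleClass_neg {v : Fin (n + 2) → (Fin (n + 2) → ℤ)} (hv : IsLatBasis v) :
    shuffleClass (-v) = shuffleClass v := by
  obtain ⟨y, rfl⟩ : ∃ y, edgeVectors y = v := ⟨_, edgeVectors_partialSum v⟩
  rw [← edgeVectors_neg]
  exact simplexClass_neg (isLatBasis_edgeVectors_iff.mp hv)

end ShuffleClass

/-- Dihedral symmetry relations modulo the double shuffle relations:
(i) cyclic symmetry `[v_1,…,v_m] ≡ [v_2,…,v_m,v_0]`;
(ii) reversal `[v_1,…,v_m] ≡ (−1)^{m+1}[v_{m−1},…,v_1,v_0]`;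
(iii) inversion `[v_1,…,v_m] ≡ [−v_1,…,−v_m]`, where `v_0 = −(v_1+⋯+v_m)`. -/
theorem stmt2 (m : ℕ) (hm : 2 ≤ m) (v : Fin m → (Fin m → ℤ)) (hv : IsLatBasis v)
    (v₀ : Fin m → ℤ) (hv₀ : v₀ = - ∑ i, v i)
    (cyc : Fin m → (Fin m → ℤ))
    (hcyc : cyc = fun i : Fin m => if h : (i : ℕ) + 1 < m then v ⟨(i : ℕ) + 1, h⟩ else v₀)
    (rev : Fin m → (Fin m → ℤ))
    (hrev : rev = fun i : Fin m => if h : (i : ℕ) + 1 < m then v ⟨m - 2 - (i : ℕ), by omega⟩ else v₀) :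
    FreeAbelianGroup.of v - FreeAbelianGroup.of cyc ∈ doubleShuffleSubgroup m ∧
    FreeAbelianGroup.of v - ((-1 : ℤ) ^ (m + 1)) • FreeAbelianGroup.of rev ∈
      doubleShuffleSubgroup m ∧
    FreeAbelianGroup.of v - FreeAbelianGroup.of (fun i => - v i) ∈
      doubleShuffleSubgroup m := by
  obtain ⟨n, rfl⟩ : ∃ n, m = n + 2 := ⟨m - 2, by lia⟩
  replace hcyc : cyc = Fin.snoc (Fin.tail v) v₀ := hcyc.trans (snoc_tail_eq_dite v v₀).symm
  replace hrev : rev = Fin.snoc (Fin.init v ∘ Fin.rev) v₀ :=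
    hrev.trans (snoc_init_comp_rev_eq_dite v v₀).symm
  have hsign : (-1 : ℤ) ^ (n + 2 + 1) = (-1) ^ (n + 1) := by ring
  subst hcyc hrev hv₀
  rw [hsign]
  exact ⟨QuotientAddGroup.eq_iff_sub_mem.mp (shuffleClass_eq_snoc_tail hv),
    QuotientAddGroup.eq_iff_sub_mem.mp (shuffleClass_eq_smul_snoc_init_comp_rev hv),
    QuotientAddGroup.eq_iff_sub_mem.mp (shuffleClass_neg hv).symm⟩
end

section
/- Let w ≥ 2 be an integer. (a) If w is odd then V_{w,2} = S_{w,2}; in particular every multiple zeta value ζ(a,b) with a+b = w, b ≥ 2, is a ℚ-linear combination of monomials of weight < w, monomials of depth ≤ 1, and products of two monomials of positive weight with total weight ≤ w and total depth ≤ 2. (b) If w is even then dim_ℚ (V_{w,2}/S_{w,2}) ≤ ⌊(w−2)/6⌋. -/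
/-- The multiple zeta value `ζ(n_1,…,n_p) = Σ_{0<k_1<⋯<k_p} 1/(k_1^{n_1}⋯k_p^{n_p})`. -/
noncomputable def mzv (p : ℕ) (n : Fin p → ℕ) : ℝ :=
  ∑' k : {k : Fin p → ℕ // StrictMono k ∧ ∀ i, 0 < k i},
    ∏ i, (((k.1 i : ℝ)) ^ (n i))⁻¹

/-- An index (composition) `(n_1,…,n_{p+1})` for a multiple zeta value. -/
abbrev MZIndex : Type := (p : ℕ) × (Fin (p + 1) → ℕ)

/-- Admissibility: all `n_i ≥ 1` and the last entry is `≥ 2`. -/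
def MZIndex.Admissible (z : MZIndex) : Prop :=
  (∀ i, 1 ≤ z.2 i) ∧ 2 ≤ z.2 (Fin.last z.1)

/-- The weight `n_1 + ⋯ + n_{p+1}` of an index. -/
def MZIndex.weight (z : MZIndex) : ℕ := ∑ i, z.2 i

/-- The depth `p + 1` of an index. -/
def MZIndex.depth (z : MZIndex) : ℕ := z.1 + 1

/-- `x` is a monomial of weight `w'` and depth `m'`: `x = π^{2a}·ζ(s⁽¹⁾)⋯ζ(s⁽ᵏ⁾)` with
admissible indices `s⁽ⁱ⁾`, `w' = 2a + Σ weights`, `m' = Σ depths`. -/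
def IsMonomial (x : ℝ) (w' m' : ℕ) : Prop :=
  ∃ (a : ℕ) (zs : List MZIndex), (∀ z ∈ zs, z.Admissible) ∧
    x = Real.pi ^ (2 * a) * (zs.map fun z => mzv (z.1 + 1) z.2).prod ∧
    w' = 2 * a + (zs.map MZIndex.weight).sum ∧
    m' = (zs.map MZIndex.depth).sum

/-- `V_{w,m}`: the ℚ-span of all monomials of weight `≤ w` and depth `≤ m`. -/
noncomputable def Vspan (w m : ℕ) : Submodule ℚ ℝ :=
  Submodule.span ℚ {x | ∃ w' m', w' ≤ w ∧ m' ≤ m ∧ IsMonomial x w' m'}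

/-- `S_{w,m} = V_{w−1,m} + V_{w,m−1} + Σ V_{w₁,m₁}·V_{w₂,m₂}` (sum over `w₁,w₂ ≥ 1`,
`w₁+w₂ ≤ w`, `m₁+m₂ ≤ m`). -/
noncomputable def Sspan (w m : ℕ) : Submodule ℚ ℝ :=
  Vspan (w - 1) m ⊔ Vspan w (m - 1) ⊔
    ⨆ (w₁ : ℕ) (w₂ : ℕ) (m₁ : ℕ) (m₂ : ℕ) (_ : 1 ≤ w₁) (_ : 1 ≤ w₂)
      (_ : w₁ + w₂ ≤ w) (_ : m₁ + m₂ ≤ m),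
      Submodule.span ℚ {x | ∃ y ∈ Vspan w₁ m₁, ∃ z ∈ Vspan w₂ m₂, x = y * z}

/-!
Let `k = w - 2`. Modulo `S_{w,2}`, the classes `z i` of `ζ(k - i + 1, i + 1)` satisfy
`z i + z (k - i) = 0`, by multiplying out `ζ(a) ζ(b)`, and a shuffle relation, by expanding
`1 / (x ^ a * y ^ b)` in partial fractions. For the divergent products `ζ(1) ζ(k + 1)` Euler's
formula `∑ ζ(a, b) = ζ(w)`, summed over `a + b = w` with `b ≥ 2`, takes the place of the shuffle
relation.

Apply a linear functional to the classes. The two relations say that the generating polynomial of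
the values, viewed as a binary form of degree `k`, is alternating under the anharmonic group, which
permutes `0`, `1` and `∞`. If `k` is odd, the form vanishes because the cube of the rotation
`x ↦ 1 - 1/x` acts on it by `-1`. If `k` is even, a nonzero form has odd order of vanishing `n` at
`0`, the same order at `1` and `∞`, and further zeros at `-1`, `2` and `1/2`, so `3 * n + 3 ≤ k`.
Hence its coefficients of `X ^ (2 * j + 1)` with `j < k / 6` determine it, and dually the
corresponding classes span the quotient.
-/

open Finset Polynomial Filter Topology

section Polynomial

variable {K : Type*} [Field K]

lemma eval_reflect_eq_pow_mul_eval_inv {P : K[X]} {k : ℕ} (hP : P.natDegree ≤ k) {x : K}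
    (hx : x ≠ 0) : (P.reflect k).eval x = x ^ k * P.eval x⁻¹ := by
  let _ := invertibleOfNonzero (inv_ne_zero hx)
  have h := eval₂_reflect_mul_pow (RingHom.id K) x⁻¹ k P hP
  rw [invOf_eq_inv, inv_inv, inv_pow] at h
  change (P.reflect k).eval x * (x ^ k)⁻¹ = P.eval x⁻¹ at h
  rw [← h]
  field_simp

lemma polynomial_eq_of_eval_eq_of_notMem [Infinite K] {P Q : K[X]} {s : Set K} (hs : s.Finite)
    (h : ∀ x ∉ s, P.eval x = Q.eval x) : P = Q :=
  eq_of_infinite_eval_eq P Q (hs.infinite_compl.mono h)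

lemma sum_rootMultiplicity_le_natDegree (P : K[X]) (s : Finset K) :
    ∑ a ∈ s, P.rootMultiplicity a ≤ P.natDegree := by
  classical
  calc ∑ a ∈ s, P.rootMultiplicity a = ∑ a ∈ s, (P.roots.filter (· ∈ s)).count a :=
        sum_congr rfl fun a ha => by rw [Multiset.count_filter_of_pos ha, count_roots]
    _ = (P.roots.filter (· ∈ s)).card :=
        Multiset.sum_count_eq_card fun a ha => Multiset.of_mem_filter ha
    _ ≤ P.roots.card := Multiset.card_le_card (Multiset.filter_le _ _)
    _ ≤ P.natDegree := card_roots' P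

/-- `P = f(X, 1)` for a binary form `f` of degree `k` that changes sign under `x ↦ 1/x` and
`x ↦ 1 - x`, that is, on which the anharmonic group permuting `0, 1, ∞` acts by signs. -/
structure IsAnharmonicAlternating (k : ℕ) (P : K[X]) : Prop where
  natDegree_le : P.natDegree ≤ k
  reflect_eq_neg : P.reflect k = -P
  comp_one_sub_X : P.comp (1 - X) = -P

namespace IsAnharmonicAlternating

variable {k : ℕ} {P : K[X]}

lemma eval_one_sub (hP : IsAnharmonicAlternating k P) (x : K) :
    P.eval (1 - x) = -P.eval x := by
  simpa using congrArg (eval x) hP.comp_one_sub_X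

lemma pow_mul_eval_inv (hP : IsAnharmonicAlternating k P) {x : K} (hx : x ≠ 0) :
    x ^ k * P.eval x⁻¹ = -P.eval x := by
  rw [← eval_reflect_eq_pow_mul_eval_inv hP.natDegree_le hx, hP.reflect_eq_neg, eval_neg]

lemma coeff_sub (hP : IsAnharmonicAlternating k P) {i : ℕ} (hi : i ≤ k) :
    P.coeff (k - i) = -P.coeff i := by
  rw [← revAt_le hi, ← coeff_reflect, hP.reflect_eq_neg, coeff_neg]

lemma eval_one_sub_inv (hP : IsAnharmonicAlternating k P) {x : K} (hx : x ≠ 0) :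
    x ^ k * P.eval (1 - x⁻¹) = P.eval x := by
  rw [hP.eval_one_sub, mul_neg, hP.pow_mul_eval_inv hx, neg_neg]

/- The rotation `x ↦ 1 - 1/x` has order three, but its cube acts on forms of degree `k` as
`(x, y) ↦ (-x, -y)`. -/
theorem eq_zero_of_odd [CharZero K] (hP : IsAnharmonicAlternating k P) (hk : Odd k) : P = 0 := by
  refine polynomial_eq_of_eval_eq_of_notMem (Set.toFinite {0, 1}) fun x hx => ?_
  obtain ⟨hx0, hx1⟩ : x ≠ 0 ∧ x ≠ 1 := by simpa using hx
  have hx1' : 1 - x ≠ 0 := sub_ne_zero.2 hx1.symm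
  set y := 1 - x⁻¹
  set z := (1 - x)⁻¹ with hz
  have hy0 : y ≠ 0 := sub_ne_zero.2 fun h => hx1 (inv_eq_one.1 h.symm)
  have hyz : 1 - y⁻¹ = z := by grind
  have hzx : 1 - z⁻¹ = x := by rw [hz, inv_inv, sub_sub_cancel]
  have hxyz : x * (y * z) = -1 := by grind
  have h₁ : x ^ k * P.eval y = P.eval x := hP.eval_one_sub_inv hx0
  have h₂ : y ^ k * P.eval z = P.eval y := hyz ▸ hP.eval_one_sub_inv hy0
  have h₃ : z ^ k * P.eval x = P.eval z := by
    have h := hP.eval_one_sub_inv (inv_ne_zero hx1')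
    rwa [← hz, hzx] at h
  have hneg : P.eval x = -P.eval x :=
    calc P.eval x = x ^ k * (y ^ k * (z ^ k * P.eval x)) := by rw [h₃, h₂, h₁]
      _ = (x * (y * z)) ^ k * P.eval x := by simp only [mul_pow, mul_assoc]
      _ = -P.eval x := by rw [hxyz, hk.neg_one_pow, neg_one_mul]
  rw [eval_zero]
  exact self_eq_neg.1 hneg

lemma natDegree_add_natTrailingDegree (hP : IsAnharmonicAlternating k P) (hP0 : P ≠ 0) :
    P.natDegree + P.natTrailingDegree = k := by
  have hle : P.natTrailingDegree ≤ k := (natTrailingDegree_le_natDegree P).trans hP.natDegree_le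
  suffices P.natDegree = k - P.natTrailingDegree by omega
  refine natDegree_eq_of_le_of_coeff_ne_zero (natDegree_le_iff_coeff_eq_zero.2 fun i hi => ?_) ?_
  · rcases le_or_gt i k with hik | hik
    · rw [← neg_eq_zero, ← hP.coeff_sub hik]
      exact coeff_eq_zero_of_lt_natTrailingDegree (by omega)
    · exact coeff_eq_zero_of_natDegree_lt (hP.natDegree_le.trans_lt hik)
  · rw [hP.coeff_sub hle]
    exact neg_ne_zero.2 (trailingCoeff_nonzero_iff_nonzero.2 hP0)

lemma odd_natDegree [CharZero K] (hP : IsAnharmonicAlternating k P) (hP0 : P ≠ 0) :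
    Odd P.natDegree := by
  have hdeg : (1 - X : K[X]).natDegree = 1 := by
    rw [← C_1, ← natDegree_neg, neg_sub, natDegree_X_sub_C]
  have hlead : (1 - X : K[X]).leadingCoeff = -1 := by
    rw [leadingCoeff, hdeg]; simp [coeff_one]
  have h := leadingCoeff_comp (p := P) (hdeg.trans_ne one_ne_zero)
  rw [hP.comp_one_sub_X, hlead, leadingCoeff_neg, ← mul_neg_one] at h
  exact (neg_one_pow_eq_neg_one_iff_odd (by norm_num)).1
    (mul_left_cancel₀ (leadingCoeff_ne_zero.2 hP0) h).symm

lemma rootMultiplicity_one (hP : IsAnharmonicAlternating k P) :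
    P.rootMultiplicity 1 = P.natTrailingDegree := by
  have h := rootMultiplicity_comp_C_mul_X_add_C P (-1) 1 1 isUnit_one.neg
  have hcomp : P.comp (C (-1) * X + C 1) = -P := by
    rw [← hP.comp_one_sub_X, C_neg, C_1, neg_one_mul, neg_add_eq_sub]
  classical
  rwa [hcomp, ← count_roots, roots_neg, count_roots, neg_one_mul, neg_add_cancel,
    rootMultiplicity_eq_natTrailingDegree'] at h

variable [CharZero K]

lemma isRoot_half (hP : IsAnharmonicAlternating k P) : P.IsRoot (1 / 2) := by
  have h := hP.eval_one_sub (1 / 2)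
  norm_num at h
  exact self_eq_neg.1 h

lemma isRoot_neg_one (hP : IsAnharmonicAlternating k P) (hk : Even k) : P.IsRoot (-1) := by
  have h := hP.pow_mul_eval_inv (x := -1) (by norm_num)
  rw [hk.neg_one_pow, one_mul, inv_neg_one] at h
  exact self_eq_neg.1 h

lemma isRoot_two (hP : IsAnharmonicAlternating k P) (hk : Even k) : P.IsRoot 2 := by
  have h := hP.eval_one_sub (-1)
  rwa [(hP.isRoot_neg_one hk).eq_zero, neg_zero, sub_neg_eq_add, one_add_one_eq_two] at h

/- On the projective line `P` vanishes to the same order at `0`, `1` and `∞`, and it also vanishes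
at the other three points fixed by a reflection, `-1`, `2` and `1/2`. -/
lemma three_mul_natTrailingDegree_add_three_le (hP : IsAnharmonicAlternating k P) (hk : Even k)
    (hP0 : P ≠ 0) : 3 * P.natTrailingDegree + 3 ≤ k := by
  classical
  have hsum := sum_rootMultiplicity_le_natDegree P {0, 1, -1, 2, 1 / 2}
  rw [sum_insert (by norm_num), sum_insert (by norm_num), sum_insert (by norm_num),
    sum_insert (by norm_num), sum_singleton, rootMultiplicity_eq_natTrailingDegree',
    hP.rootMultiplicity_one] at hsum
  have hneg_one := (rootMultiplicity_pos hP0).2 (hP.isRoot_neg_one hk)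
  have htwo := (rootMultiplicity_pos hP0).2 (hP.isRoot_two hk)
  have hhalf := (rootMultiplicity_pos hP0).2 hP.isRoot_half
  have hdeg := hP.natDegree_add_natTrailingDegree hP0
  omega

theorem eq_zero_of_even (hP : IsAnharmonicAlternating k P) (hk : Even k)
    (hcoeff : ∀ j < k / 6, P.coeff (2 * j + 1) = 0) : P = 0 := by
  by_contra hP0
  have hbound := hP.three_mul_natTrailingDegree_add_three_le hk hP0
  have hdeg := hP.natDegree_add_natTrailingDegree hP0
  obtain ⟨j, hj⟩ : Odd P.natTrailingDegree := by
    have := hP.odd_natDegree hP0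
    grind
  refine trailingCoeff_nonzero_iff_nonzero.2 hP0 ?_
  rw [trailingCoeff, hj]
  exact hcoeff j (by omega)

end IsAnharmonicAlternating

end Polynomial

section DoubleShuffle

/-- The double shuffle equations in depth two modulo products and lower depth, for a sequence
`z` in which `z i` stands for the class of `ζ(k - i + 1, i + 1)`. -/
structure IsDoubleShuffle {M : Type*} [AddCommGroup M] (k : ℕ) (z : ℕ → M) : Prop where
  stuffle : ∀ i j, i + j = k → z i + z j = 0
  shuffle : ∀ a b, a + b = k →
    ∑ p ∈ antidiagonal k, (p.1.choose a + p.1.choose b) • z p.1 = 0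

/-- The generating polynomial `∑ i ≤ k, c i * X ^ i`. -/
noncomputable def generatingPolynomial {R : Type*} [Semiring R] (k : ℕ) (c : ℕ → R) : R[X] :=
  ∑ i ∈ range (k + 1), monomial i (c i)

section Semiring

variable {R : Type*} [Semiring R] {k : ℕ}

lemma natDegree_generatingPolynomial_le (k : ℕ) (c : ℕ → R) :
    (generatingPolynomial k c).natDegree ≤ k :=
  natDegree_sum_le_of_forall_le _ _ fun _ hi =>
    (natDegree_monomial_le _).trans (Nat.lt_succ_iff.1 (mem_range.1 hi))

lemma coeff_generatingPolynomial (c : ℕ → R) {i : ℕ} (hi : i ≤ k) :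
    (generatingPolynomial k c).coeff i = c i := by
  simp only [generatingPolynomial, finsetSum_coeff, coeff_monomial, sum_ite_eq', mem_range]
  exact if_pos (Nat.lt_succ_of_le hi)

lemma eq_zero_of_generatingPolynomial_eq_zero {c : ℕ → R} (h : generatingPolynomial k c = 0)
    {i : ℕ} (hi : i ≤ k) : c i = 0 := by
  rw [← coeff_generatingPolynomial c hi, h, coeff_zero]

lemma coeff_taylor_one_generatingPolynomial (k : ℕ) (c : ℕ → R) (a : ℕ) :
    (taylor 1 (generatingPolynomial k c)).coeff a = ∑ i ∈ range (k + 1), i.choose a • c i := by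
  rw [taylor_coeff]
  simp only [generatingPolynomial, map_sum, hasseDeriv_monomial, eval_finsetSum,
    eval_monomial, one_pow, mul_one, nsmul_eq_mul]

end Semiring

lemma reflect_eq_neg_iff {R : Type*} [Ring R] {k : ℕ} {P : R[X]} (hP : P.natDegree ≤ k) :
    P.reflect k = -P ↔ ∀ i j, i + j = k → P.coeff i + P.coeff j = 0 := by
  refine ⟨fun h i j hij => ?_, fun h => ?_⟩
  · have := congrArg (coeff · i) h
    rw [coeff_reflect, revAt_le (by omega), coeff_neg, show k - i = j by omega] at this
    rw [this, add_neg_cancel]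
  · ext i
    rw [coeff_reflect, coeff_neg, eq_neg_iff_add_eq_zero]
    rcases le_or_gt i k with hi | hi
    · rw [revAt_le hi]
      exact h _ _ (by omega)
    · rw [revAt_eq_self_of_lt hi, coeff_eq_zero_of_natDegree_lt (hP.trans_lt hi), add_zero]

lemma comp_one_sub_X_eq_neg {K : Type*} [Field K] [Infinite K] {k : ℕ} {P : K[X]}
    (hdeg : P.natDegree ≤ k) (hP : P.reflect k = -P)
    (htaylor : (taylor 1 P).reflect k = -taylor 1 P) : P.comp (1 - X) = -P := by
  refine polynomial_eq_of_eval_eq_of_notMem (Set.toFinite {0, 1}) fun t ht => ?_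
  obtain ⟨ht0, ht1⟩ : t ≠ 0 ∧ t ≠ 1 := by simpa using ht
  have ht1' : 1 - t ≠ 0 := sub_ne_zero.2 ht1.symm
  have hinv {x : K} (hx : x ≠ 0) : x ^ k * P.eval x⁻¹ = -P.eval x := by
    rw [← eval_reflect_eq_pow_mul_eval_inv hdeg hx, hP, eval_neg]
  have hshift : ((1 - t) / t) ^ k * P.eval (1 - t)⁻¹ = -P.eval t⁻¹ := by
    have h := eval_reflect_eq_pow_mul_eval_inv ((natDegree_taylor P 1).trans_le hdeg)
      (div_ne_zero ht1' ht0)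
    rw [htaylor, eval_neg, taylor_eval, taylor_eval] at h
    have hadd : (1 - t) / t + 1 = t⁻¹ := by grind
    have hadd' : ((1 - t) / t)⁻¹ + 1 = (1 - t)⁻¹ := by grind
    rw [hadd, hadd'] at h
    exact h.symm
  have hmul : (1 - t) ^ k * P.eval (1 - t)⁻¹ = -(t ^ k * P.eval t⁻¹) := by
    rw [← mul_neg, ← hshift, div_pow]
    field_simp
  rw [hinv ht1', hinv ht0, neg_neg] at hmul
  simp [← hmul]

namespace IsDoubleShuffle

variable {M : Type*} [AddCommGroup M] {k : ℕ}

lemma map {N : Type*} [AddCommGroup N] {z : ℕ → M} (hz : IsDoubleShuffle k z) (f : M →+ N) :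
    IsDoubleShuffle k fun i => f (z i) where
  stuffle i j h := by rw [← map_add, hz.stuffle i j h, map_zero]
  shuffle a b h := by simp only [← map_nsmul, ← map_sum, hz.shuffle a b h, map_zero]

lemma isAnharmonicAlternating {K : Type*} [Field K] [Infinite K] {c : ℕ → K}
    (hc : IsDoubleShuffle k c) : IsAnharmonicAlternating k (generatingPolynomial k c) := by
  have hdeg := natDegree_generatingPolynomial_le k c
  have hreflect : (generatingPolynomial k c).reflect k = -generatingPolynomial k c := by
    refine (reflect_eq_neg_iff hdeg).2 fun i j h => ?_
    rw [coeff_generatingPolynomial c (by omega), coeff_generatingPolynomial c (by omega)]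
    exact hc.stuffle i j h
  have htaylor : (taylor 1 (generatingPolynomial k c)).reflect k =
      -taylor 1 (generatingPolynomial k c) := by
    refine (reflect_eq_neg_iff ((natDegree_taylor _ 1).trans_le hdeg)).2 fun a b h => ?_
    simp only [coeff_taylor_one_generatingPolynomial, ← sum_add_distrib, ← add_smul]
    rw [← hc.shuffle a b h, Nat.sum_antidiagonal_eq_sum_range_succ_mk]
  exact ⟨hdeg, hreflect, comp_one_sub_X_eq_neg hdeg hreflect htaylor⟩

theorem eq_zero_of_odd [Module ℚ M] {z : ℕ → M} (hz : IsDoubleShuffle k z) (hk : Odd k) {i : ℕ}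
    (hi : i ≤ k) : z i = 0 := by
  refine (Module.forall_dual_apply_eq_zero_iff ℚ (z i)).1 fun f => ?_
  have hP := (hz.map f.toAddMonoidHom).isAnharmonicAlternating.eq_zero_of_odd hk
  exact eq_zero_of_generatingPolynomial_eq_zero hP hi

theorem mem_span_of_even (K : Type*) [Field K] [CharZero K] [Module K M] {z : ℕ → M}
    (hz : IsDoubleShuffle k z) (hk : Even k) {i : ℕ} (hi : i ≤ k) :
    z i ∈ Submodule.span K (Set.range fun j : Fin (k / 6) => z (2 * j + 1)) := by
  by_contra hmem
  obtain ⟨f, hfi, hker⟩ := Submodule.exists_le_ker_of_notMem hmem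
  have hP := (hz.map f.toAddMonoidHom).isAnharmonicAlternating.eq_zero_of_even hk fun j hj => by
    rw [coeff_generatingPolynomial _ (by omega)]
    exact hker (Submodule.subset_span ⟨⟨j, hj⟩, rfl⟩)
  exact hfi (eq_zero_of_generatingPolynomial_eq_zero hP hi)

end IsDoubleShuffle

end DoubleShuffle

section PartialFractions

variable {R : Type*}

/-- The part with poles in `u` and `y` of the partial fraction expansion of
`x ^ (a + 1) * y ^ (b + 1)`, where `k = a + b` and `x * y = u * (x + y)`, as for the reciprocals of
two numbers and of their sum. -/
def partialFraction [CommSemiring R] (u y : R) (k a : ℕ) : R :=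
  ∑ p ∈ antidiagonal k, (p.1.choose a : R) * (u ^ (p.1 + 1) * y ^ (p.2 + 1))

section CommSemiring

variable [CommSemiring R] (u y : R)

lemma partialFraction_succ_succ (k a : ℕ) :
    partialFraction u y (k + 1) (a + 1) =
      u * (partialFraction u y k a + partialFraction u y k (a + 1)) := by
  unfold partialFraction
  rw [Nat.sum_antidiagonal_succ, ← sum_add_distrib, mul_sum]
  simp only [Nat.choose_zero_succ, Nat.cast_zero, zero_mul, zero_add]
  refine sum_congr rfl fun p _ => ?_
  rw [Nat.choose_succ_succ]
  push_cast
  ring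

lemma partialFraction_succ_zero (k : ℕ) :
    partialFraction u y (k + 1) 0 = u * (y ^ (k + 2) + partialFraction u y k 0) := by
  unfold partialFraction
  rw [Nat.sum_antidiagonal_succ, mul_add, mul_sum]
  simp only [Nat.choose_zero_right, Nat.cast_one, one_mul, zero_add, pow_one]
  exact congrArg _ (sum_congr rfl fun p _ => by ring)

lemma partialFraction_of_lt {k a : ℕ} (h : k < a) : partialFraction u y k a = 0 :=
  sum_eq_zero fun p hp => by
    have hp := mem_antidiagonal.1 hp
    rw [Nat.choose_eq_zero_of_lt (by omega), Nat.cast_zero, zero_mul]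

lemma partialFraction_self (k : ℕ) : partialFraction u y k k = u ^ (k + 1) * y := by
  induction k with
  | zero => simp [partialFraction]
  | succ k ih =>
    rw [partialFraction_succ_succ, ih, partialFraction_of_lt u y k.lt_succ_self]
    ring

end CommSemiring

variable [CommRing R] {x y u : R}

lemma mul_pow_eq_partialFraction (h : x * y = u * (x + y)) (b : ℕ) :
    x * y ^ (b + 1) = partialFraction u y b 0 + u ^ (b + 1) * x := by
  induction b with
  | zero =>
    rw [partialFraction_self]
    linear_combination h
  | succ b ih =>
    rw [partialFraction_succ_zero]
    linear_combination y ^ (b + 1) * h + u * ih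

theorem pow_mul_pow_eq_partialFraction (h : x * y = u * (x + y)) (a b : ℕ) :
    x ^ (a + 1) * y ^ (b + 1) =
      partialFraction u y (a + b) a + partialFraction u x (a + b) b := by
  induction a generalizing b with
  | zero =>
    rw [zero_add, zero_add, pow_one, mul_pow_eq_partialFraction h, partialFraction_self]
  | succ a iha =>
    induction b with
    | zero =>
      have hswap : y * x = u * (y + x) := by linear_combination h
      rw [add_zero, partialFraction_self]
      linear_combination mul_pow_eq_partialFraction hswap (a + 1)
    | succ b ihb =>
      have h₁ := iha (b + 1)
      rw [← add_assoc] at h₁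
      rw [show a + 1 + b = a + b + 1 by omega] at ihb
      rw [show a + 1 + (b + 1) = a + b + 1 + 1 by omega, partialFraction_succ_succ u y,
        partialFraction_succ_succ u x]
      linear_combination u * h₁ + u * ihb + x ^ (a + 1) * y ^ (b + 1) * h

end PartialFractions

section ZetaSeries

lemma mzv_one_eq_tsum (a : ℕ) : mzv 1 ![a] = ∑' n : ℕ+, ((n : ℝ)⁻¹) ^ a := by
  let e : ℕ+ ≃ {k : Fin 1 → ℕ // StrictMono k ∧ ∀ i, 0 < k i} :=
    { toFun n := ⟨![n], Subsingleton.strictMono _, by simp⟩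
      invFun k := ⟨k.1 0, k.2.2 0⟩
      left_inv _ := rfl
      right_inv k := by ext i; fin_cases i; simp }
  rw [mzv, ← e.tsum_eq]
  exact tsum_congr fun n => by rw [Fin.prod_univ_one, inv_pow]; rfl

lemma mzv_two_eq_tsum (a b : ℕ) :
    mzv 2 ![a, b] = ∑' p : ℕ+ × ℕ+, ((p.1 : ℝ)⁻¹) ^ a * ((p.1 + p.2 : ℝ)⁻¹) ^ b := by
  let e : ℕ+ × ℕ+ ≃ {k : Fin 2 → ℕ // StrictMono k ∧ ∀ i, 0 < k i} :=
    { toFun p := ⟨![p.1, p.1 + p.2], by simp [Fin.strictMono_iff_lt_succ],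
        by simp [Fin.forall_fin_succ]⟩
      invFun k := (⟨k.1 0, k.2.2 0⟩, ⟨k.1 1 - k.1 0, tsub_pos_of_lt (k.2.1 Fin.zero_lt_one)⟩)
      left_inv p := Prod.ext rfl (PNat.eq (Nat.add_sub_cancel_left ..))
      right_inv k := by
        have hk : k.1 0 < k.1 1 := k.2.1 Fin.zero_lt_one
        ext i
        fin_cases i
        · rfl
        · exact Nat.add_sub_cancel' hk.le }
  rw [mzv, ← e.tsum_eq]
  exact tsum_congr fun p => by simp [e, Fin.prod_univ_two, mul_comm]

lemma hasSum_mzv_one {a : ℕ} (ha : 2 ≤ a) :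
    HasSum (fun n : ℕ+ => ((n : ℝ)⁻¹) ^ a) (mzv 1 ![a]) := by
  rw [mzv_one_eq_tsum]
  simp only [inv_pow]
  exact ((Real.summable_nat_pow_inv.2 ha).comp_injective PNat.coe_injective).hasSum

/- The excess `1/2` in the exponent of `x + y` is handed over to `x`, which leaves a product of two
convergent series. -/
lemma inv_pow_mul_inv_pow_le {x y : ℝ} (hx : 1 ≤ x) (hy : 1 ≤ y) {a b : ℕ} (ha : 1 ≤ a)
    (hb : 2 ≤ b) : x⁻¹ ^ a * (x + y)⁻¹ ^ b ≤ x ^ (-(3 / 2) : ℝ) * y ^ (-(3 / 2) : ℝ) := by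
  have : 0 < x := by linarith
  have hxy : 1 ≤ x + y := by linarith
  calc x⁻¹ ^ a * (x + y)⁻¹ ^ b ≤ x⁻¹ ^ 1 * (x + y)⁻¹ ^ 2 := by
        gcongr ?_ * ?_
        · exact pow_le_pow_of_le_one (by positivity) (inv_le_one_of_one_le₀ hx) ha
        · exact pow_le_pow_of_le_one (by positivity) (inv_le_one_of_one_le₀ hxy) hb
    _ = x⁻¹ * ((x + y) ^ (-(1 / 2) : ℝ) * (x + y) ^ (-(3 / 2) : ℝ)) := by
        rw [← Real.rpow_add (by positivity), inv_pow (x + y), ← Real.rpow_natCast (x + y),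
          ← Real.rpow_neg (by positivity)]
        norm_num
    _ ≤ x ^ (-1 : ℝ) * (x ^ (-(1 / 2) : ℝ) * y ^ (-(3 / 2) : ℝ)) := by
        rw [Real.rpow_neg_one]
        gcongr x⁻¹ * (?_ * ?_) <;>
          exact Real.rpow_le_rpow_of_nonpos (by positivity) (by linarith) (by norm_num)
    _ = x ^ (-(3 / 2) : ℝ) * y ^ (-(3 / 2) : ℝ) := by
        rw [← mul_assoc, ← Real.rpow_add (by positivity)]
        norm_num

lemma hasSum_mzv_two {a b : ℕ} (ha : 1 ≤ a) (hb : 2 ≤ b) :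
    HasSum (fun p : ℕ+ × ℕ+ => ((p.1 : ℝ)⁻¹) ^ a * ((p.1 + p.2 : ℝ)⁻¹) ^ b) (mzv 2 ![a, b]) := by
  rw [mzv_two_eq_tsum]
  have hs : Summable fun n : ℕ+ => (n : ℝ) ^ (-(3 / 2) : ℝ) :=
    (Real.summable_nat_rpow.2 (by norm_num)).comp_injective PNat.coe_injective
  refine (Summable.of_nonneg_of_le (fun p => by positivity) (fun p => ?_)
    (hs.mul_of_nonneg hs (fun n => by positivity) (fun n => by positivity))).hasSum
  exact inv_pow_mul_inv_pow_le (mod_cast p.1.2) (mod_cast p.2.2) ha hb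

lemma hasSum_mzv_two_swap {a b : ℕ} (ha : 1 ≤ a) (hb : 2 ≤ b) :
    HasSum (fun p : ℕ+ × ℕ+ => ((p.2 : ℝ)⁻¹) ^ a * ((p.1 + p.2 : ℝ)⁻¹) ^ b) (mzv 2 ![a, b]) := by
  have h := (Equiv.prodComm ℕ+ ℕ+).hasSum_iff.2 (hasSum_mzv_two ha hb)
  simpa only [Function.comp_def, Equiv.prodComm_apply, Prod.fst_swap, Prod.snd_swap, add_comm]
    using h

lemma hasSum_mzv_one_mul_mzv_one {a b : ℕ} (ha : 2 ≤ a) (hb : 2 ≤ b) :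
    HasSum (fun p : ℕ+ × ℕ+ => ((p.1 : ℝ)⁻¹) ^ a * ((p.2 : ℝ)⁻¹) ^ b)
      (mzv 1 ![a] * mzv 1 ![b]) :=
  (hasSum_mzv_one ha).mul (hasSum_mzv_one hb) <|
    (hasSum_mzv_one ha).summable.mul_of_nonneg (hasSum_mzv_one hb).summable
      (fun _ => by positivity) (fun _ => by positivity)

lemma hasSum_of_trichotomy {M : Type*} [AddCommMonoid M] [TopologicalSpace M] [ContinuousAdd M]
    {f : ℕ+ × ℕ+ → M} {s t d : M} (hlt : HasSum (fun p : ℕ+ × ℕ+ => f (p.1, p.1 + p.2)) s)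
    (hgt : HasSum (fun p : ℕ+ × ℕ+ => f (p.1 + p.2, p.1)) t)
    (hdiag : HasSum (fun n : ℕ+ => f (n, n)) d) : HasSum f (s + t + d) := by
  let below (p : ℕ+ × ℕ+) : ℕ+ × ℕ+ := (p.1, p.1 + p.2)
  let above (p : ℕ+ × ℕ+) : ℕ+ × ℕ+ := (p.1 + p.2, p.1)
  let diag (n : ℕ+) : ℕ+ × ℕ+ := (n, n)
  have hbelow_inj : Function.Injective below := fun p q h => by
    simp only [below, Prod.mk.injEq] at h
    exact Prod.ext h.1 (add_left_cancel (h.2.trans (by rw [h.1])))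
  have habove_inj : Function.Injective above := fun p q h => hbelow_inj (congrArg Prod.swap h)
  have hdiag_inj : Function.Injective diag := fun m n h => congrArg Prod.fst h
  have hadd (m n : ℕ+) : (∃ x, m + x = n) ↔ m < n :=
    ⟨fun ⟨x, hx⟩ => hx ▸ PNat.lt_add_right m x, fun h => ⟨n - m, PNat.add_sub_of_lt h⟩⟩
  have hbelow_range : Set.range below = {p | p.1 < p.2} := by
    ext ⟨m, n⟩
    simp [below, hadd]
  have habove_range : Set.range above = {p | p.2 < p.1} := by
    ext ⟨m, n⟩
    simp [above, hadd]
  have hdiag_range : Set.range diag = {p | p.1 = p.2} := by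
    ext ⟨m, n⟩
    simp [diag]
  refine (((hbelow_inj.hasSum_range_iff.2 hlt).add_disjoint ?_
    (habove_inj.hasSum_range_iff.2 hgt)).add_isCompl ?_ (hdiag_inj.hasSum_range_iff.2 hdiag))
  · rw [hbelow_range, habove_range]
    exact Set.disjoint_left.2 fun p (hlt : p.1 < p.2) hgt => lt_asymm hlt hgt
  · have hcompl : Set.range below ∪ Set.range above = (Set.range diag)ᶜ := by
      rw [hbelow_range, habove_range, hdiag_range]
      exact Set.ext fun p => lt_or_lt_iff_ne (a := p.1)
    exact hcompl ▸ isCompl_compl.symm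

theorem mzv_one_mul_mzv_one_eq_stuffle {a b : ℕ} (ha : 2 ≤ a) (hb : 2 ≤ b) :
    mzv 1 ![a] * mzv 1 ![b] = mzv 2 ![a, b] + mzv 2 ![b, a] + mzv 1 ![a + b] := by
  refine (hasSum_mzv_one_mul_mzv_one ha hb).unique (hasSum_of_trichotomy ?_ ?_ ?_)
  · simpa only [PNat.add_coe, Nat.cast_add] using hasSum_mzv_two (by omega) hb
  · simpa only [PNat.add_coe, Nat.cast_add, mul_comm] using hasSum_mzv_two (by omega) ha
  · simpa only [pow_add] using hasSum_mzv_one (show 2 ≤ a + b by omega)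

lemma inv_mul_inv_eq_inv_add_mul {x y : ℝ} (hx : 0 < x) (hy : 0 < y) :
    x⁻¹ * y⁻¹ = (x + y)⁻¹ * (x⁻¹ + y⁻¹) := by
  field_simp
  ring

theorem mzv_one_mul_mzv_one_eq_shuffle {a b : ℕ} (ha : 1 ≤ a) (hb : 1 ≤ b) :
    mzv 1 ![a + 1] * mzv 1 ![b + 1] =
      ∑ p ∈ antidiagonal (a + b),
        (p.1.choose a + p.1.choose b) • mzv 2 ![p.2 + 1, p.1 + 1] := by
  refine (hasSum_mzv_one_mul_mzv_one (by omega) (by omega)).unique ?_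
  simp only [add_smul, sum_add_distrib]
  simp_rw [fun q : ℕ+ × ℕ+ => pow_mul_pow_eq_partialFraction
    (inv_mul_inv_eq_inv_add_mul (x := q.1) (y := q.2) (by positivity) (by positivity)) a b]
  refine HasSum.add (hasSum_sum fun p _ => ?_) (hasSum_sum fun p _ => ?_)
  · rcases p.1.eq_zero_or_pos with h0 | h0
    · simp [h0, Nat.choose_eq_zero_of_lt ha]
    · simp only [← nsmul_eq_mul, mul_comm ((_ : ℝ)⁻¹ ^ (p.1 + 1))]
      exact (hasSum_mzv_two_swap (by omega) (by omega)).const_smul _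
  · rcases p.1.eq_zero_or_pos with h0 | h0
    · simp [h0, Nat.choose_eq_zero_of_lt hb]
    · simp only [← nsmul_eq_mul, mul_comm ((_ : ℝ)⁻¹ ^ (p.1 + 1))]
      exact (hasSum_mzv_two (by omega) (by omega)).const_smul _

end ZetaSeries

section SumFormula

lemma hasSum_sub_add_of_antitone {f : ℕ → ℝ} (hf : Antitone f) (h0 : Tendsto f atTop (𝓝 0))
    (m : ℕ) : HasSum (fun n => f n - f (n + m)) (∑ i ∈ range m, f i) := by
  induction m with
  | zero => simp
  | succ m ih =>
    have hstep : HasSum (fun n => f (n + m) - f (n + m + 1)) (f m) := by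
      refine (hasSum_iff_tendsto_nat_of_nonneg (fun n => sub_nonneg.2 (hf (Nat.le_succ _))) _).2 ?_
      have hsum (N : ℕ) : ∑ n ∈ range N, (f (n + m) - f (n + m + 1)) = f m - f (N + m) := by
        simpa [add_right_comm] using sum_range_sub' (fun n => f (n + m)) N
      simpa [hsum] using tendsto_const_nhds.sub ((tendsto_add_atTop_iff_nat m).2 h0)
    rw [sum_range_succ]
    simpa [add_assoc] using ih.add hstep

lemma hasSum_inv_sub_inv_add (m : ℕ) :
    HasSum (fun n : ℕ+ => (n : ℝ)⁻¹ - (m + n : ℝ)⁻¹) (harmonic m : ℝ) := by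
  refine (hasSum_pnat_iff_hasSum_succ (f := fun n : ℕ => (n : ℝ)⁻¹ - (m + n : ℝ)⁻¹)).2 ?_
  have hanti : Antitone fun n : ℕ => ((n + 1 : ℕ) : ℝ)⁻¹ := fun a b hab => by
    beta_reduce
    gcongr
  have h := hasSum_sub_add_of_antitone hanti
    ((tendsto_add_atTop_iff_nat 1).2 tendsto_inv_atTop_nhds_zero_nat) m
  simpa [harmonic, add_left_comm, add_assoc, add_comm (m : ℝ)] using h

lemma hasSum_ite_inv (n : ℕ) :
    HasSum (fun m : ℕ+ => if (m : ℕ) ≤ n then (m : ℝ)⁻¹ else 0) (harmonic n : ℝ) := by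
  refine (hasSum_pnat_iff_hasSum_succ
    (f := fun m : ℕ => if m ≤ n then (m : ℝ)⁻¹ else 0)).2 ?_
  have hsum : (harmonic n : ℝ) = ∑ m ∈ range n, if m + 1 ≤ n then ((m + 1 : ℕ) : ℝ)⁻¹ else 0 := by
    rw [harmonic, Rat.cast_sum]
    refine sum_congr rfl fun m hm => ?_
    rw [if_pos (Nat.succ_le_of_lt (mem_range.1 hm)), Rat.cast_inv, Rat.cast_natCast]
  rw [hsum]
  exact hasSum_sum_of_ne_finset_zero fun m hm => if_neg fun h => hm (mem_range.2 h)

lemma hasSum_harmonic_mul_inv_pow {b : ℕ} (hb : 2 ≤ b) :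
    HasSum (fun n : ℕ+ => (harmonic n : ℝ) * (n : ℝ)⁻¹ ^ b)
      (mzv 2 ![1, b] + mzv 1 ![b + 1]) := by
  have h : HasSum
      (fun p : ℕ+ × ℕ+ => (if p.2 ≤ p.1 then (p.2 : ℝ)⁻¹ else 0) * (p.1 : ℝ)⁻¹ ^ b)
      (0 + mzv 2 ![1, b] + mzv 1 ![b + 1]) := by
    refine hasSum_of_trichotomy ?_ ?_ ?_
    · simp [(PNat.lt_add_right _ _).not_ge, hasSum_zero]
    · simpa [(PNat.lt_add_right _ _).le] using hasSum_mzv_two le_rfl hb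
    · simpa [pow_succ'] using hasSum_mzv_one (show 2 ≤ b + 1 by omega)
  rw [zero_add] at h
  exact h.prod_fiberwise fun n => (hasSum_ite_inv n).mul_right _

lemma inv_mul_inv_add_eq {x y : ℝ} (hx : 0 < x) (hy : 0 < y) :
    y⁻¹ * (x + y)⁻¹ = x⁻¹ * (y⁻¹ - (x + y)⁻¹) := by
  field_simp
  ring

theorem sum_mzv_two_eq_mzv_one (k : ℕ) :
    ∑ p ∈ antidiagonal k, mzv 2 ![p.2 + 1, p.1 + 2] = mzv 1 ![k + 3] := by
  have hfrac : HasSum (fun p : ℕ+ × ℕ+ => (p.1 : ℝ)⁻¹ ^ (k + 1) * (p.2 : ℝ)⁻¹ * (p.1 + p.2 : ℝ)⁻¹)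
      (mzv 2 ![1, k + 2] + ∑ p ∈ antidiagonal k, mzv 2 ![p.2 + 1, p.1 + 2]) := by
    refine ((hasSum_mzv_two_swap le_rfl (by omega)).add
      (hasSum_sum fun p _ => hasSum_mzv_two (by omega) (by omega))).congr_fun fun q => ?_
    have h := pow_mul_pow_eq_partialFraction
      (inv_mul_inv_eq_inv_add_mul (x := q.1) (y := q.2) (by positivity) (by positivity)) k 0
    rw [zero_add, pow_one, add_zero, partialFraction_self, partialFraction] at h
    rw [h, add_mul, sum_mul]
    congr 1
    · ring
    · exact sum_congr rfl fun p _ => by rw [Nat.choose_zero_right, Nat.cast_one]; ring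
  have hharm : HasSum (fun m : ℕ+ => (harmonic m : ℝ) * (m : ℝ)⁻¹ ^ (k + 2))
      (mzv 2 ![1, k + 2] + ∑ p ∈ antidiagonal k, mzv 2 ![p.2 + 1, p.1 + 2]) := by
    refine hfrac.prod_fiberwise fun m => ?_
    refine ((hasSum_inv_sub_inv_add m).mul_right _).congr_fun fun n => ?_
    rw [mul_assoc, inv_mul_inv_add_eq (by positivity) (by positivity)]
    ring
  exact add_left_cancel (hharm.unique (hasSum_harmonic_mul_inv_pow (by omega)))

end SumFormula

section Filtration

namespace IsMonomial

variable {x y : ℝ} {w m w' m' : ℕ}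

lemma mem_Vspan (hx : IsMonomial x w' m') (hw : w' ≤ w) (hm : m' ≤ m) : x ∈ Vspan w m :=
  Submodule.subset_span ⟨w', m', hw, hm, hx⟩

lemma mul (hx : IsMonomial x w m) (hy : IsMonomial y w' m') :
    IsMonomial (x * y) (w + w') (m + m') := by
  obtain ⟨a, l, hl, rfl, rfl, rfl⟩ := hx
  obtain ⟨b, l', hl', rfl, rfl, rfl⟩ := hy
  refine ⟨a + b, l ++ l', List.forall_mem_append.2 ⟨hl, hl'⟩, ?_, ?_, ?_⟩
  · rw [List.map_append, List.prod_append]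
    ring
  · rw [List.map_append, List.sum_append]
    ring
  · rw [List.map_append, List.sum_append]

end IsMonomial

lemma MZIndex.Admissible.two_le_weight {z : MZIndex} (hz : z.Admissible) : 2 ≤ z.weight :=
  hz.2.trans (single_le_sum (fun _ _ => Nat.zero_le _) (mem_univ _))

lemma MZIndex.Admissible.isMonomial {z : MZIndex} (hz : z.Admissible) :
    IsMonomial (mzv (z.1 + 1) z.2) z.weight z.depth :=
  ⟨0, [z], by simpa using hz, by simp, by simp, by simp⟩

lemma mzv_one_mem_Vspan {a : ℕ} (ha : 2 ≤ a) : mzv 1 ![a] ∈ Vspan a 1 := by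
  have hz : MZIndex.Admissible ⟨0, ![a]⟩ := ⟨by simp; omega, ha⟩
  exact hz.isMonomial.mem_Vspan (by simp [MZIndex.weight]) le_rfl

lemma Vspan_mono {w w' m m' : ℕ} (hw : w ≤ w') (hm : m ≤ m') : Vspan w m ≤ Vspan w' m' :=
  Submodule.span_mono fun _ ⟨a, b, ha, hb, h⟩ => ⟨a, b, ha.trans hw, hb.trans hm, h⟩

lemma mul_mem_Vspan {w m w' m' : ℕ} {x y : ℝ} (hx : x ∈ Vspan w m) (hy : y ∈ Vspan w' m') :
    x * y ∈ Vspan (w + w') (m + m') := by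
  suffices Vspan w m * Vspan w' m' ≤ Vspan (w + w') (m + m') from
    this (Submodule.mul_mem_mul hx hy)
  rw [Vspan, Vspan, Submodule.span_mul_span, Submodule.span_le]
  rintro _ ⟨x, ⟨a, b, ha, hb, hx⟩, y, ⟨a', b', ha', hb', hy⟩, rfl⟩
  exact (hx.mul hy).mem_Vspan (add_le_add ha ha') (add_le_add hb hb')

lemma Vspan_weight_sub_one_le_Sspan (w m : ℕ) : Vspan (w - 1) m ≤ Sspan w m :=
  le_sup_left.trans le_sup_left

lemma Vspan_depth_sub_one_le_Sspan (w m : ℕ) : Vspan w (m - 1) ≤ Sspan w m :=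
  le_sup_right.trans le_sup_left

lemma mul_mem_Sspan {w₁ w₂ m₁ m₂ : ℕ} (h₁ : 1 ≤ w₁) (h₂ : 1 ≤ w₂) {x y : ℝ}
    (hx : x ∈ Vspan w₁ m₁) (hy : y ∈ Vspan w₂ m₂) : x * y ∈ Sspan (w₁ + w₂) (m₁ + m₂) := by
  refine (le_sup_right : _ ≤ Sspan (w₁ + w₂) (m₁ + m₂)) ?_
  exact Submodule.mem_iSup_of_mem w₁ <| Submodule.mem_iSup_of_mem w₂ <|
    Submodule.mem_iSup_of_mem m₁ <| Submodule.mem_iSup_of_mem m₂ <|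
    Submodule.mem_iSup_of_mem h₁ <| Submodule.mem_iSup_of_mem h₂ <|
    Submodule.mem_iSup_of_mem le_rfl <| Submodule.mem_iSup_of_mem le_rfl <|
    Submodule.subset_span ⟨x, hx, y, hy, rfl⟩

lemma Sspan_le_Vspan (w m : ℕ) : Sspan w m ≤ Vspan w m := by
  refine sup_le (sup_le (Vspan_mono (Nat.sub_le _ _) le_rfl)
    (Vspan_mono le_rfl (Nat.sub_le _ _))) ?_
  simp only [iSup_le_iff, Submodule.span_le]
  rintro w₁ w₂ m₁ m₂ - - hw hm _ ⟨y, hy, z, hz, rfl⟩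
  exact Vspan_mono hw hm (mul_mem_Vspan hy hz)

lemma IsMonomial.mem_Sspan_or_eq_mzv {x : ℝ} {w m : ℕ} (hx : IsMonomial x w m) :
    x ∈ Sspan w m ∨ ∃ z : MZIndex,
      z.Admissible ∧ z.weight = w ∧ z.depth = m ∧ mzv (z.1 + 1) z.2 = x := by
  have hxV := hx.mem_Vspan le_rfl le_rfl
  obtain ⟨a, _ | ⟨z, l⟩, hzs, rfl, rfl, rfl⟩ := hx
  · exact Or.inl (Vspan_depth_sub_one_le_Sspan _ _ hxV)
  obtain ⟨hz, hl⟩ := List.forall_mem_cons.1 hzs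
  have hrest : IsMonomial (Real.pi ^ (2 * a) * (l.map fun z => mzv (z.1 + 1) z.2).prod)
      (2 * a + (l.map MZIndex.weight).sum) (l.map MZIndex.depth).sum := ⟨a, l, hl, rfl, rfl, rfl⟩
  simp only [List.map_cons, List.prod_cons, List.sum_cons]
  rcases (2 * a + (l.map MZIndex.weight).sum).eq_zero_or_pos with h0 | hpos
  · right
    obtain rfl : a = 0 := by omega
    obtain rfl : l = [] := List.eq_nil_iff_forall_not_mem.2 fun z' hz' => by
      have := List.single_le_sum (by simp) _ (List.mem_map_of_mem (f := MZIndex.weight) hz')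
      have := (hl z' hz').two_le_weight
      omega
    exact ⟨z, hz, by simp⟩
  · left
    have h := mul_mem_Sspan (by have := hz.two_le_weight; omega) hpos
      (hz.isMonomial.mem_Vspan le_rfl le_rfl) (hrest.mem_Vspan le_rfl le_rfl)
    rwa [mul_left_comm, add_left_comm] at h

lemma Vspan_le {w m : ℕ} {N : Submodule ℚ ℝ} (hS : Sspan w m ≤ N)
    (hN : ∀ z : MZIndex, z.Admissible → z.weight = w → z.depth = m → mzv (z.1 + 1) z.2 ∈ N) :
    Vspan w m ≤ N := by
  refine Submodule.span_le.2 ?_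
  rintro x ⟨w', m', hw, hm, hx⟩
  rcases hw.lt_or_eq with hlt | rfl
  · exact hS (Vspan_weight_sub_one_le_Sspan _ _ (hx.mem_Vspan (by omega) hm))
  rcases hm.lt_or_eq with hlt | rfl
  · exact hS (Vspan_depth_sub_one_le_Sspan _ _ (hx.mem_Vspan le_rfl (by omega)))
  rcases hx.mem_Sspan_or_eq_mzv with hxS | ⟨z, hz, hweight, hdepth, rfl⟩
  · exact hS hxS
  · exact hN z hz hweight hdepth

lemma Vspan_two_le {w : ℕ} {N : Submodule ℚ ℝ} (hS : Sspan w 2 ≤ N)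
    (hN : ∀ a b, 1 ≤ a → 2 ≤ b → a + b = w → mzv 2 ![a, b] ∈ N) : Vspan w 2 ≤ N := by
  refine Vspan_le hS fun ⟨p, n⟩ hz hweight hdepth => ?_
  obtain rfl : p = 1 := Nat.succ_injective hdepth
  rw [MZIndex.weight, Fin.sum_univ_two] at hweight
  have hn : n = ![n 0, n 1] := List.ofFn_inj.1 rfl
  rw [hn]
  exact hN (n 0) (n 1) (hz.1 0) hz.2 hweight

end Filtration

section DepthTwo

lemma mzv_one_mem_Sspan {a : ℕ} (ha : 2 ≤ a) : mzv 1 ![a] ∈ Sspan a 2 :=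
  Vspan_depth_sub_one_le_Sspan a 2 (mzv_one_mem_Vspan ha)

lemma mzv_one_mul_mzv_one_mem_Sspan {a b : ℕ} (ha : 2 ≤ a) (hb : 2 ≤ b) :
    mzv 1 ![a] * mzv 1 ![b] ∈ Sspan (a + b) 2 :=
  mul_mem_Sspan (m₁ := 1) (m₂ := 1) (by omega) (by omega) (mzv_one_mem_Vspan ha)
    (mzv_one_mem_Vspan hb)

lemma mzv_two_add_mzv_two_mem_Sspan {a b : ℕ} (ha : 2 ≤ a) (hb : 2 ≤ b) :
    mzv 2 ![a, b] + mzv 2 ![b, a] ∈ Sspan (a + b) 2 := by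
  have h := sub_mem (mzv_one_mul_mzv_one_mem_Sspan ha hb) (mzv_one_mem_Sspan (by omega))
  rwa [mzv_one_mul_mzv_one_eq_stuffle ha hb, add_sub_cancel_right] at h

/-- The class of `ζ(k - i + 1, i + 1)` in weight `k + 2` and depth two, modulo products and lower
weight or depth. The series diverges for `i = 0`; its class is then chosen as the stuffle relation
dictates. -/
noncomputable def zetaClass (k : ℕ) : ℕ → ℝ ⧸ Sspan (k + 2) 2
  | 0 => -(Sspan (k + 2) 2).mkQ (mzv 2 ![1, k + 1])
  | i + 1 => (Sspan (k + 2) 2).mkQ (mzv 2 ![k - i, i + 2])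

variable {k : ℕ}

lemma zetaClass_of_pos {i j : ℕ} (hi : 1 ≤ i) (h : i + j = k) :
    zetaClass k i = (Sspan (k + 2) 2).mkQ (mzv 2 ![j + 1, i + 1]) := by
  obtain ⟨i, rfl⟩ := Nat.exists_eq_add_of_le' hi
  rw [zetaClass, show k - i = j + 1 by omega]

lemma zetaClass_zero (hk : 1 ≤ k) : zetaClass k 0 = -zetaClass k k := by
  rw [zetaClass_of_pos hk (add_zero k), zetaClass]

lemma zetaClass_stuffle (hk : 1 ≤ k) {i j : ℕ} (h : i + j = k) :
    zetaClass k i + zetaClass k j = 0 := by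
  rcases i.eq_zero_or_pos with rfl | hi
  · obtain rfl : j = k := by omega
    rw [zetaClass_zero hk, neg_add_cancel]
  rcases j.eq_zero_or_pos with rfl | hj
  · obtain rfl : i = k := by omega
    rw [zetaClass_zero hk, add_neg_cancel]
  rw [zetaClass_of_pos hi h, zetaClass_of_pos hj ((add_comm j i).trans h), ← map_add]
  have hmem := mzv_two_add_mzv_two_mem_Sspan (show 2 ≤ j + 1 by omega) (show 2 ≤ i + 1 by omega)
  rw [show j + 1 + (i + 1) = k + 2 by omega] at hmem
  exact (Submodule.Quotient.mk_eq_zero _).2 hmem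

lemma zetaClass_shuffle_of_pos {a b : ℕ} (ha : 1 ≤ a) (hb : 1 ≤ b) (h : a + b = k) :
    ∑ p ∈ antidiagonal k, (p.1.choose a + p.1.choose b) • zetaClass k p.1 = 0 := by
  have hmem := mzv_one_mul_mzv_one_mem_Sspan (show 2 ≤ a + 1 by omega) (show 2 ≤ b + 1 by omega)
  rw [mzv_one_mul_mzv_one_eq_shuffle ha hb, h, show a + 1 + (b + 1) = k + 2 by omega] at hmem
  rw [← (Submodule.Quotient.mk_eq_zero _).2 hmem, ← Submodule.mkQ_apply, map_sum]
  refine sum_congr rfl fun p hp => ?_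
  rcases p.1.eq_zero_or_pos with h0 | hpos
  · simp [h0, Nat.choose_eq_zero_of_lt ha, Nat.choose_eq_zero_of_lt hb]
  · rw [map_nsmul, zetaClass_of_pos hpos (mem_antidiagonal.1 hp)]

lemma sum_zetaClass (hk : 1 ≤ k) : ∑ p ∈ antidiagonal k, zetaClass k p.1 = zetaClass k 0 := by
  obtain ⟨k, rfl⟩ := Nat.exists_eq_add_of_le' hk
  rw [Nat.sum_antidiagonal_succ, add_eq_left]
  rw [← (Submodule.Quotient.mk_eq_zero _).2 (mzv_one_mem_Sspan (show 2 ≤ k + 3 by omega)),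
    ← sum_mzv_two_eq_mzv_one, ← Submodule.mkQ_apply, map_sum]
  refine sum_congr rfl fun p hp => zetaClass_of_pos (Nat.le_add_left 1 p.1) ?_
  have := mem_antidiagonal.1 hp
  omega

lemma zetaClass_shuffle_zero (hk : 1 ≤ k) :
    ∑ p ∈ antidiagonal k, (p.1.choose 0 + p.1.choose k) • zetaClass k p.1 = 0 := by
  have hlast : ∑ p ∈ antidiagonal k, p.1.choose k • zetaClass k p.1 = zetaClass k k := by
    rw [sum_eq_single_of_mem (k, 0) (by simp) fun p hp hne => ?_, Nat.choose_self, one_smul]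
    have hlt : p.1 < k := by
      have := mem_antidiagonal.1 hp
      grind
    rw [Nat.choose_eq_zero_of_lt hlt, zero_smul]
  simp only [add_smul, sum_add_distrib, hlast, Nat.choose_zero_right, one_smul]
  rw [sum_zetaClass hk, zetaClass_zero hk, neg_add_cancel]

theorem isDoubleShuffle_zetaClass (hk : 1 ≤ k) : IsDoubleShuffle k (zetaClass k) where
  stuffle _ _ := zetaClass_stuffle hk
  shuffle a b h := by
    rcases a.eq_zero_or_pos with rfl | ha
    · obtain rfl : b = k := by omega
      exact zetaClass_shuffle_zero hk
    rcases b.eq_zero_or_pos with rfl | hb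
    · obtain rfl : a = k := by omega
      simpa only [add_comm] using zetaClass_shuffle_zero hk
    exact zetaClass_shuffle_of_pos ha hb h

theorem mzv_two_mem_Sspan_of_odd {w a b : ℕ} (hw : Odd w) (ha : 1 ≤ a) (hb : 2 ≤ b)
    (h : a + b = w) : mzv 2 ![a, b] ∈ Sspan w 2 := by
  obtain ⟨i, rfl⟩ := Nat.exists_eq_add_of_le' (show 1 ≤ b by omega)
  obtain ⟨j, rfl⟩ := Nat.exists_eq_add_of_le' ha
  obtain rfl : w = i + j + 2 := by omega
  rw [← Submodule.Quotient.mk_eq_zero, ← Submodule.mkQ_apply,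
    ← zetaClass_of_pos (by omega) (rfl : i + j = _)]
  exact (isDoubleShuffle_zetaClass (by omega)).eq_zero_of_odd (by grind) (by omega)

theorem Vspan_le_comap_span_zetaClass (hk : Even k) :
    Vspan (k + 2) 2 ≤
      (Submodule.span ℚ (Set.range fun j : Fin (k / 6) => zetaClass k (2 * j + 1))).comap
        (Sspan (k + 2) 2).mkQ := by
  refine Vspan_two_le (Submodule.le_comap_mkQ _ _) fun a b ha hb h => ?_
  obtain ⟨i, rfl⟩ := Nat.exists_eq_add_of_le' (show 1 ≤ b by omega)
  obtain ⟨j, rfl⟩ := Nat.exists_eq_add_of_le' ha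
  rw [Submodule.mem_comap, ← zetaClass_of_pos (by omega) (show i + j = k by omega)]
  exact (isDoubleShuffle_zetaClass (by omega)).mem_span_of_even ℚ hk (by omega)

lemma rank_quotient_comap_subtype_le {R E : Type*} [Ring R] [AddCommGroup E] [Module R E]
    {V S : Submodule R E} {T : Submodule R (E ⧸ S)} (h : V ≤ T.comap S.mkQ) :
    Module.rank R (V ⧸ S.comap V.subtype) ≤ Module.rank R T := by
  let f : (V ⧸ S.comap V.subtype) →ₗ[R] E ⧸ S := Submodule.mapQ _ _ V.subtype le_rfl
  have hinj : Function.Injective f := by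
    rw [← LinearMap.ker_eq_bot, Submodule.ker_mapQ, Submodule.mkQ_map_self]
  have hT (x) : f x ∈ T := by
    obtain ⟨v, rfl⟩ := Submodule.mkQ_surjective _ x
    exact h v.2
  exact LinearMap.rank_le_of_injective (f.codRestrict T hT) (hinj.codRestrict hT)

theorem rank_Vspan_quotient_Sspan_le_of_even (hk : Even k) :
    Module.rank ℚ (Vspan (k + 2) 2 ⧸ (Sspan (k + 2) 2).comap (Vspan (k + 2) 2).subtype) ≤
      (k / 6 : ℕ) :=
  calc _ ≤ _ := rank_quotient_comap_subtype_le (Vspan_le_comap_span_zetaClass hk)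
    _ ≤ Cardinal.mk (Set.range fun j : Fin (k / 6) => zetaClass k (2 * j + 1)) := rank_span_le _
    _ ≤ Cardinal.mk (Fin (k / 6)) := Cardinal.mk_range_le
    _ = (k / 6 : ℕ) := Cardinal.mk_fin _

end DepthTwo

/-- Goncharov's depth-2 theorem: (a) if `w` is odd then `V_{w,2} = S_{w,2}`, and in particular
every double zeta value of weight `w` lies in `S_{w,2}`; (b) if `w` is even then
`dim_ℚ V_{w,2}/S_{w,2} ≤ ⌊(w−2)/6⌋`. -/
theorem stmt4 (w : ℕ) (hw : 2 ≤ w) :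
    (Odd w → Vspan w 2 = Sspan w 2 ∧
      ∀ a b : ℕ, 1 ≤ a → 2 ≤ b → a + b = w → mzv 2 ![a, b] ∈ Sspan w 2) ∧
    (Even w →
      Module.rank ℚ (↥(Vspan w 2) ⧸ (Sspan w 2).comap (Vspan w 2).subtype) ≤
        ((w - 2) / 6 : ℕ)) := by
  refine ⟨fun hodd => ⟨le_antisymm ?_ (Sspan_le_Vspan w 2), fun a b =>
    mzv_two_mem_Sspan_of_odd hodd⟩, fun heven => ?_⟩
  · exact Vspan_two_le le_rfl fun a b => mzv_two_mem_Sspan_of_odd hodd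
  · obtain ⟨k, rfl⟩ := Nat.exists_eq_add_of_le' hw
    exact rank_Vspan_quotient_Sspan_le_of_even ((Nat.even_add.1 heven).2 even_two)
end
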